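/- arXiv:1606.03499 — 3 statements merged into one kernel-verified Lean document; each statement's English description precedes it below -/
import Mathlib

section
/- Let n ≥ 3, ε > 0, and let ψ : ℝⁿ → ℝ be a smooth ℤⁿ-periodic eigenfunction of the Euclidean Laplacian with eigenvalue λ > 0. There exist constants r₀ > 0 and a₁ > 0, depending only on n, ε and the constants K₁, K₂ below, such that: if λ^{-1/2+ε} < r₀ and K₁ (λ^{-1/2+ε})ⁿ ≤ ∫_{B_{λ^{-1/2+ε}}(x)} ψ² dx ≤ K₂ (λ^{-1/2+ε})ⁿ for every x ∈ ℝⁿ (with K₁, K₂ > 0 independent of x), then every nodal domain Ω of ψ satisfies in(Ω) ≥ a₁ λ^{-1/2-ε'} where ε' = ε·(n-1)(n-2)/(2n). -/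
open MeasureTheory Metric Filter Real

noncomputable section

/-- `ψ : ℝⁿ → ℝ` is `ℤⁿ`-periodic: `ψ (x + v) = ψ x` for every integer vector `v`. -/
def ZnPeriodic (n : ℕ) (ψ : EuclideanSpace ℝ (Fin n) → ℝ) : Prop :=
  ∀ (x : EuclideanSpace ℝ (Fin n)) (v : Fin n → ℤ),
    ψ (show EuclideanSpace ℝ (Fin n) from WithLp.toLp 2 (fun i => x i + (v i : ℝ))) = ψ x

/-- The Euclidean Laplacian `Δψ = ∑ᵢ ∂²ψ/∂xᵢ²`. -/
def lap (n : ℕ) (ψ : EuclideanSpace ℝ (Fin n) → ℝ) (x : EuclideanSpace ℝ (Fin n)) : ℝ :=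
  ∑ i : Fin n,
    fderiv ℝ (fun y => fderiv ℝ ψ y (EuclideanSpace.single i (1:ℝ))) x
      (EuclideanSpace.single i (1:ℝ))

/-- `Ω` is a nodal domain of `ψ`: a connected component of `{ψ ≠ 0}`. -/
def IsNodalDomain {n : ℕ} (ψ : EuclideanSpace ℝ (Fin n) → ℝ)
    (Ω : Set (EuclideanSpace ℝ (Fin n))) : Prop :=
  ∃ x, ψ x ≠ 0 ∧ Ω = connectedComponentIn {y | ψ y ≠ 0} x

/-- The inner radius of a set: the supremum of radii of open balls contained in it. -/
def innerRadius {n : ℕ} (Ω : Set (EuclideanSpace ℝ (Fin n))) : ℝ :=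
  sSup {ρ : ℝ | 0 < ρ ∧ ∃ c, Metric.ball c ρ ⊆ Ω}

/-- The fundamental domain `[0,1)ⁿ` of the torus `ℝⁿ/ℤⁿ`. -/
def fundDom (n : ℕ) : Set (EuclideanSpace ℝ (Fin n)) :=
  {x | ∀ i, x i ∈ Set.Ico (0:ℝ) 1}

/-- `S ⊆ ℕ` has full density: `#(S ∩ [1,N]) / N → 1`. -/
def FullDensity (S : Set ℕ) : Prop :=
  Filter.Tendsto (fun N => (Nat.card ↥(S ∩ Set.Icc 1 N) : ℝ) / N) Filter.atTop (nhds 1)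

section FourierPart
open UnitAddTorus

local instance instMSCirc : MeasureSpace UnitAddCircle := ⟨AddCircle.haarAddCircle⟩

local instance instHaarCirc : Measure.IsAddHaarMeasure (volume : Measure UnitAddCircle) :=
  inferInstanceAs (Measure.IsAddHaarMeasure AddCircle.haarAddCircle)

local instance instProbCirc : IsProbabilityMeasure (volume : Measure UnitAddCircle) :=
  inferInstanceAs (IsProbabilityMeasure AddCircle.haarAddCircle)

/-- lift to the torus -/
def torLift (n : ℕ) (φ : EuclideanSpace ℝ (Fin n) → ℝ) (z : UnitAddTorus (Fin n)) : ℂ :=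
  ((φ (WithLp.toLp 2 (fun i => ((AddCircle.equivIco (1:ℝ) 0 (z i) : Set.Ico (0:ℝ) (0+1)) : ℝ))) : ℝ) : ℂ)

lemma torLift_coe {n : ℕ} {φ : EuclideanSpace ℝ (Fin n) → ℝ} (h : ZnPeriodic n φ)
    (x : EuclideanSpace ℝ (Fin n)) :
    torLift n φ (fun i => ((x i : ℝ) : UnitAddCircle)) = ((φ x : ℝ) : ℂ) := by
  unfold torLift
  congr 1
  rw [← h x (fun i => -⌊x i⌋)]
  congr 2
  funext i
  have := AddCircle.coe_equivIco_mk_apply (1:ℝ) (x i)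
  rw [this]
  have h3 : Int.fract (x i) = x i - ⌊x i⌋ := (Int.self_sub_floor _).symm
  simp only [div_one, mul_one, h3]
  push_cast
  ring

lemma torLift_rep {n : ℕ} (z : UnitAddTorus (Fin n)) :
    ∃ x : EuclideanSpace ℝ (Fin n), z = fun i => ((x i : ℝ) : UnitAddCircle) := by
  have : ∀ i, ∃ x : ℝ, (x : UnitAddCircle) = z i := fun i => QuotientAddGroup.mk_surjective (z i)
  choose f hf using this
  exact ⟨WithLp.toLp 2 f, by funext i; simp [hf]⟩

lemma torLift_continuous {n : ℕ} {φ : EuclideanSpace ℝ (Fin n) → ℝ} (h : ZnPeriodic n φ)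
    (hc : Continuous φ) : Continuous (torLift n φ) := by
  have hq : IsOpenQuotientMap (Pi.map (fun (_ : Fin n) (x : ℝ) => (x : UnitAddCircle))) :=
    IsOpenQuotientMap.piMap (fun i => QuotientAddGroup.isOpenQuotientMap_mk)
  rw [hq.isQuotientMap.continuous_iff]
  have : torLift n φ ∘ (Pi.map (fun (_ : Fin n) (x : ℝ) => (x : UnitAddCircle)))
      = fun x => ((φ (WithLp.toLp 2 x) : ℝ) : ℂ) := by
    funext x
    exact torLift_coe h (WithLp.toLp 2 x)
  rw [this]
  have := PiLp.continuous_toLp 2 (fun _ : Fin n => ℝ)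
  fun_prop

lemma mFourier_coe {n : ℕ} (k : Fin n → ℤ) (x : EuclideanSpace ℝ (Fin n)) :
    mFourier k (fun i => ((x i : ℝ) : UnitAddCircle))
      = Complex.exp (Complex.I * ((2 * π * ∑ i, (k i : ℝ) * x i : ℝ) : ℂ)) := by
  unfold mFourier
  simp only [ContinuousMap.coe_mk, fourier_coe_apply]
  rw [← Complex.exp_sum]
  congr 1
  push_cast
  rw [Finset.mul_sum, Finset.mul_sum]
  refine Finset.sum_congr rfl fun i _ => ?_
  ring_nf

lemma ZnPeriodic.fd {n : ℕ} {φ : EuclideanSpace ℝ (Fin n) → ℝ} (h : ZnPeriodic n φ)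
    (e : EuclideanSpace ℝ (Fin n)) : ZnPeriodic n (fun y => fderiv ℝ φ y e) := by
  intro x v
  have h1 : ∀ y : EuclideanSpace ℝ (Fin n), (WithLp.toLp 2 (fun i => y i + (v i : ℝ)) :
      EuclideanSpace ℝ (Fin n)) = y + WithLp.toLp 2 (fun i => (v i : ℝ)) := by
    intro y; ext i; simp
  have h2 : (fun y => φ (y + WithLp.toLp 2 (fun i => (v i : ℝ)))) = φ := by
    funext y
    rw [← h1]; exact h y v
  show fderiv ℝ φ (WithLp.toLp 2 (fun i => x i + (v i : ℝ))) e = _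
  rw [h1, ← fderiv_comp_add_right, h2]

lemma coeff_deriv {n : ℕ} {φ : EuclideanSpace ℝ (Fin n) → ℝ} (h : ZnPeriodic n φ)
    (hc : ContDiff ℝ 1 φ) (k : Fin n → ℤ) (i : Fin n) :
    mFourierCoeff (torLift n (fun y => fderiv ℝ φ y (EuclideanSpace.single i (1:ℝ)))) k
      = (2 * π * k i * Complex.I) * mFourierCoeff (torLift n φ) k := by
  set e : EuclideanSpace ℝ (Fin n) := EuclideanSpace.single i (1:ℝ) with he
  set D : EuclideanSpace ℝ (Fin n) → ℝ := fun y => fderiv ℝ φ y e with hD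
  have hDp : ZnPeriodic n D := h.fd e
  have hDc : Continuous D := by
    have := hc.continuous_fderiv (by norm_num)
    fun_prop
  let T : ℝ → UnitAddTorus (Fin n) := fun t j => (((t • e) j : ℝ) : UnitAddCircle)
  have hT : ∀ (t : ℝ) (x : EuclideanSpace ℝ (Fin n)),
      (fun j => ((x j : ℝ) : UnitAddCircle)) + T t = fun j => (((x + t • e) j : ℝ) : UnitAddCircle) := by
    intro t x; funext j; simp [T]
  have hcontT : Continuous T := by
    refine continuous_pi fun j => ?_
    have : Continuous fun t : ℝ => ((t • e) j : ℝ) := by simp; fun_prop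
    exact (AddCircle.continuous_mk' 1).comp this
  have hlc := torLift_continuous h hc.continuous
  have hlD := torLift_continuous hDp hDc
  obtain ⟨C, hC⟩ : ∃ C, ∀ z, ‖torLift n D z‖ ≤ C := by
    obtain ⟨z0, hz0⟩ := hlD.norm.exists_forall_ge' (x₀ := 0) (by
      rw [Filter.cocompact_eq_bot]; simp)
    exact ⟨_, hz0⟩
  let F : ℝ → UnitAddTorus (Fin n) → ℂ := fun t z => mFourier (-k) z • torLift n φ (z + T t)
  let F' : ℝ → UnitAddTorus (Fin n) → ℂ := fun t z => mFourier (-k) z • torLift n D (z + T t)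
  have hFc : ∀ t, Continuous (F t) := by
    intro t; simp only [F]; fun_prop
  have hF'c : ∀ t, Continuous (F' t) := by
    intro t; simp only [F']; fun_prop
  have hnorm : ∀ z, ‖mFourier (-k) z‖ ≤ 1 := fun z => by
    have := (mFourier (-k)).norm_coe_le_norm z
    rwa [mFourier_norm] at this
  have key := hasDerivAt_integral_of_dominated_loc_of_deriv_le (μ := volume) (F := F) (F' := F')
    (x₀ := (0:ℝ)) (s := Set.univ) (bound := fun _ => C) Filter.univ_mem
    (Filter.Eventually.of_forall fun t => (hFc t).aestronglyMeasurable)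
    ((hFc 0).integrable_of_hasCompactSupport (HasCompactSupport.of_compactSpace _))
    (hF'c 0).aestronglyMeasurable
    (Filter.Eventually.of_forall fun z t _ => by
      simp only [F', norm_smul]
      calc _ ≤ 1 * C := by
            apply mul_le_mul (hnorm z) (hC _) (norm_nonneg _) zero_le_one
        _ = C := one_mul C)
    (integrable_const C)
    (Filter.Eventually.of_forall fun z t _ => by
      obtain ⟨x, rfl⟩ := torLift_rep z
      simp only [F, F', hT, torLift_coe h, torLift_coe hDp]
      refine HasDerivAt.fun_const_smul _ ?_
      apply HasDerivAt.ofReal_comp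
      have h1 : HasFDerivAt φ (fderiv ℝ φ (x + t • e)) (x + t • e) :=
        (hc.differentiable (by norm_num)).differentiableAt.hasFDerivAt
      have h2 : HasDerivAt (fun t : ℝ => x + t • e) e t := by
        simpa using ((hasDerivAt_id t).smul_const e).const_add x
      exact h1.comp_hasDerivAt t h2)
  have hval : ∀ t, ∫ z, F t z = Complex.exp (2 * π * k i * Complex.I * t) * mFourierCoeff (torLift n φ) k := by
    intro t
    unfold mFourierCoeff
    rw [← integral_const_mul]
    rw [← integral_add_right_eq_self (fun z => Complex.exp (2 * π * k i * Complex.I * t) *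
      (mFourier (-k) z • torLift n φ z)) (T t)]
    congr 1
    funext z
    have : mFourier (-k) (z + T t) * Complex.exp (2 * π * k i * Complex.I * t) = mFourier (-k) z := by
      obtain ⟨x, rfl⟩ := torLift_rep z
      rw [hT, mFourier_coe, mFourier_coe, ← Complex.exp_add]
      congr 1
      have : ∑ j, (((-k) j : ℤ) : ℝ) * (x + t • e) j = ∑ j, (((-k) j : ℤ) : ℝ) * x j - k i * t := by
        simp only [PiLp.add_apply, mul_add, Finset.sum_add_distrib, he]
        simp
        ring
      rw [this]
      push_cast
      ring
    simp only [F, smul_eq_mul]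
    rw [← this]
    ring
  have h2 := key.2
  simp_rw [hval] at h2
  have h3 : HasDerivAt (fun t : ℝ => Complex.exp (2 * π * k i * Complex.I * t) * mFourierCoeff (torLift n φ) k)
      ((2 * π * k i * Complex.I) * mFourierCoeff (torLift n φ) k) 0 := by
    have : HasDerivAt (fun t : ℝ => (2 * π * k i * Complex.I * (t:ℂ))) (2 * π * k i * Complex.I) 0 := by
      simpa using ((hasDerivAt_id (0:ℝ)).ofReal_comp).const_mul (2 * π * k i * Complex.I)
    simpa using (this.cexp.mul_const (mFourierCoeff (torLift n φ) k))
  have h4 := h2.unique h3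
  rw [← h4]
  unfold mFourierCoeff
  simp only [F']
  congr 1
  funext z
  have : T 0 = 0 := by funext j; simp [T]
  rw [this, add_zero]

lemma fourier_expansion {n : ℕ} {ψ : EuclideanSpace ℝ (Fin n) → ℝ} {lam : ℝ}
    (hs : ContDiff ℝ (⊤ : ℕ∞) ψ) (hp : ZnPeriodic n ψ) (hl : ∀ x, lap n ψ x = -lam * ψ x) :
    ∃ (S : Finset (Fin n → ℤ)) (c : (Fin n → ℤ) → ℂ),
      (∀ k ∈ S, 4 * π ^ 2 * ∑ i, (k i : ℝ) ^ 2 = lam) ∧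
      ∀ x, ((ψ x : ℝ) : ℂ) = ∑ k ∈ S, c k *
        Complex.exp (Complex.I * ((2 * π * ∑ i, (k i : ℝ) * x i : ℝ) : ℂ)) := by
  have hd : ∀ i : Fin n, ContDiff ℝ 1 (fun y => fderiv ℝ ψ y (EuclideanSpace.single i (1:ℝ))) := by
    intro i
    have : ContDiff ℝ 1 (fderiv ℝ ψ) := hs.fderiv_right (by norm_cast)
    fun_prop
  have h1 : ∀ k, ((4 * π ^ 2 * ∑ i, (k i : ℝ) ^ 2 - lam : ℝ) : ℂ) * mFourierCoeff (torLift n ψ) k = 0 := by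
    intro k
    have hψ1 : ContDiff ℝ 1 ψ := hs.of_le (by norm_cast)
    have a1 : ∀ i, mFourierCoeff (torLift n (fun x => fderiv ℝ (fun y => fderiv ℝ ψ y (EuclideanSpace.single i (1:ℝ))) x
      (EuclideanSpace.single i (1:ℝ)))) k = (-(4 * π ^ 2 * (k i : ℝ)^2) : ℝ) * mFourierCoeff (torLift n ψ) k := by
      intro i
      rw [coeff_deriv (hp.fd _) (hd i), coeff_deriv hp hψ1]
      push_cast
      linear_combination (4 * (π:ℂ)^2 * (k i)^2 * mFourierCoeff (torLift n ψ) k) * Complex.I_sq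
    have a2 : mFourierCoeff (torLift n (lap n ψ)) k = ∑ i, (-(4 * π ^ 2 * (k i : ℝ)^2) : ℝ) * mFourierCoeff (torLift n ψ) k := by
      simp_rw [← a1]
      unfold mFourierCoeff
      rw [← integral_finsetSum]
      · congr 1
        funext z
        simp only [torLift, lap]
        push_cast
        rw [Finset.smul_sum]
      · intro i _
        have hc : Continuous (torLift n (fun x => fderiv ℝ (fun y => fderiv ℝ ψ y (EuclideanSpace.single i (1:ℝ))) x
          (EuclideanSpace.single i (1:ℝ)))) := by
          apply torLift_continuous ((hp.fd _).fd _)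
          have := (hd i).continuous_fderiv (by norm_num)
          fun_prop
        apply Continuous.integrable_of_hasCompactSupport
        · fun_prop
        · exact HasCompactSupport.of_compactSpace _
    have a3 : mFourierCoeff (torLift n (lap n ψ)) k = ((-lam : ℝ) : ℂ) * mFourierCoeff (torLift n ψ) k := by
      unfold mFourierCoeff
      rw [← integral_const_mul]
      congr 1
      funext z
      simp only [torLift, hl, smul_eq_mul]
      push_cast
      ring
    rw [a3, ← Finset.sum_mul] at a2
    have : ((4 * π ^ 2 * ∑ i, (k i : ℝ) ^ 2 - lam : ℝ) : ℂ) = ((-lam : ℝ) : ℂ) - ∑ i, ((-(4 * π ^ 2 * (k i : ℝ)^2) : ℝ) : ℂ) := by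
      push_cast
      rw [Finset.sum_neg_distrib, ← Finset.mul_sum]
      ring
    rw [this, sub_mul, a2, sub_self]
  have hfin : {k : Fin n → ℤ | 4 * π ^ 2 * ∑ i, (k i : ℝ) ^ 2 = lam}.Finite := by
    obtain ⟨N, hN⟩ := exists_nat_gt lam
    apply (Set.finite_Icc (fun _ : Fin n => -(N:ℤ)) (fun _ => (N:ℤ))).subset
    intro k hk
    simp only [Set.mem_ofPred_eq] at hk
    have hb : ∀ i, (k i : ℝ)^2 < N := by
      intro i
      have h5 : (k i : ℝ)^2 ≤ ∑ i, (k i : ℝ) ^ 2 :=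
        Finset.single_le_sum (f := fun i => (k i : ℝ)^2) (fun _ _ => sq_nonneg _) (Finset.mem_univ i)
      have : (1:ℝ) ≤ 4 * π ^ 2 := by nlinarith [Real.pi_gt_three]
      nlinarith [sq_nonneg (k i : ℝ)]
    have hb' : ∀ i, (k i)^2 < (N:ℤ) := fun i => by exact_mod_cast hb i
    constructor <;> intro i <;> have := hb' i <;> simp only <;> nlinarith
  refine ⟨hfin.toFinset, mFourierCoeff (torLift n ψ), fun k hk => by simpa using hk, fun x => ?_⟩
  have hz : ∀ k ∉ hfin.toFinset, mFourierCoeff (torLift n ψ) k = 0 := by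
    intro k hk
    rcases mul_eq_zero.1 (h1 k) with h | h
    · exfalso; apply hk; simp
      have : (4 * π ^ 2 * ∑ i, (k i : ℝ) ^ 2 - lam : ℝ) = 0 := by exact_mod_cast h
      linarith
    · exact h
  let f : C(UnitAddTorus (Fin n), ℂ) := ⟨torLift n ψ, torLift_continuous hp hs.continuous⟩
  have hsum : Summable (mFourierCoeff f) := summable_of_ne_finset_zero hz
  have := hasSum_mFourier_series_apply_of_summable hsum (fun i => ((x i : ℝ) : UnitAddCircle))
  have h2 : HasSum (fun k => mFourierCoeff f k • mFourier k (fun i => ((x i : ℝ) : UnitAddCircle)))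
    (∑ k ∈ hfin.toFinset, mFourierCoeff f k • mFourier k (fun i => ((x i : ℝ) : UnitAddCircle))) := by
    apply hasSum_sum_of_ne_finset_zero
    intro k hk
    have : mFourierCoeff f k = 0 := hz k hk
    rw [this, zero_smul]
  have h3 := this.unique h2
  rw [← torLift_coe hp x]
  change torLift n ψ _ = _ at h3
  rw [h3]
  refine Finset.sum_congr rfl fun k _ => ?_
  rw [mFourier_coe, smul_eq_mul]
  rfl

end FourierPart

section ExpPart


/-- finite exponential sum with frequencies on a sphere -/
def ExpSum {n : ℕ} (ψ : EuclideanSpace ℝ (Fin n) → ℝ) (lam : ℝ) : Prop :=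
  ∃ (S : Finset (Fin n → ℤ)) (c : (Fin n → ℤ) → ℂ) (ξ : (Fin n → ℤ) → EuclideanSpace ℝ (Fin n)),
    (∀ k ∈ S, ‖ξ k‖ ^ 2 = lam) ∧
    ∀ x, ((ψ x : ℝ) : ℂ) = ∑ k ∈ S, c k * Complex.exp (Complex.I * (((inner ℝ (ξ k) (x) : ℝ) : ℝ) : ℂ))

lemma expSum_of_eig {n : ℕ} {ψ : EuclideanSpace ℝ (Fin n) → ℝ} {lam : ℝ}
    (hs : ContDiff ℝ (⊤ : ℕ∞) ψ) (hp : ZnPeriodic n ψ) (hl : ∀ x, lap n ψ x = -lam * ψ x) :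
    ExpSum ψ lam := by
  obtain ⟨S, c, h1, h2⟩ := fourier_expansion hs hp hl
  refine ⟨S, c, fun k => WithLp.toLp 2 (fun i => 2 * π * (k i : ℝ)), ?_, ?_⟩
  · intro k hk
    rw [← h1 k hk, EuclideanSpace.norm_sq_eq, Finset.mul_sum]
    refine Finset.sum_congr rfl fun i _ => ?_
    simp only [Real.norm_eq_abs, sq_abs]
    ring
  · intro x
    rw [h2 x]
    refine Finset.sum_congr rfl fun k _ => ?_
    congr 4
    rw [PiLp.inner_apply, Finset.mul_sum]
    refine Finset.sum_congr rfl fun i _ => ?_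
    simp
    ring

lemma eig_ge_one {n : ℕ} {ψ : EuclideanSpace ℝ (Fin n) → ℝ} {lam : ℝ} (hlam : 0 < lam)
    (hs : ContDiff ℝ (⊤ : ℕ∞) ψ) (hp : ZnPeriodic n ψ) (hl : ∀ x, lap n ψ x = -lam * ψ x)
    (x : EuclideanSpace ℝ (Fin n)) (hx : ψ x ≠ 0) : 1 ≤ lam := by
  obtain ⟨S, c, h1, h2⟩ := fourier_expansion hs hp hl
  rcases S.eq_empty_or_nonempty with h | ⟨k, hk⟩
  · exfalso; apply hx
    have := h2 x
    simpa [h] using this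
  · have h3 := h1 k hk
    have h4 : (∑ i, (k i : ℝ) ^ 2) = ((∑ i, (k i) ^ 2 : ℤ) : ℝ) := by push_cast; rfl
    rw [h4] at h3
    have h5 : 0 < (∑ i, (k i) ^ 2 : ℤ) := by
      by_contra hcon
      push Not at hcon
      have : ((∑ i, (k i) ^ 2 : ℤ) : ℝ) ≤ 0 := by exact_mod_cast hcon
      nlinarith [Real.pi_pos, sq_nonneg π]
    have h6 : (1:ℝ) ≤ ((∑ i, (k i) ^ 2 : ℤ) : ℝ) := by exact_mod_cast h5
    have : (1:ℝ) ≤ 4 * π ^ 2 := by nlinarith [Real.pi_gt_three]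
    nlinarith

lemma ball_shift {n : ℕ} {G : Type*} [NormedAddCommGroup G] [NormedSpace ℝ G]
    (f : EuclideanSpace ℝ (Fin n) → G) (x : EuclideanSpace ℝ (Fin n)) (r : ℝ) :
    ∫ y in ball x r, f y = ∫ y in ball (0 : EuclideanSpace ℝ (Fin n)) r, f (x + y) := by
  have h := (measurePreserving_add_left (volume : Measure (EuclideanSpace ℝ (Fin n))) x).setIntegral_preimage_emb
    (MeasurableEquiv.addLeft x).measurableEmbedding f (ball x r)
  rw [← h]
  congr 2
  ext y
  simp [Metric.mem_ball, dist_eq_norm]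

lemma mean_value {n : ℕ} {ψ : EuclideanSpace ℝ (Fin n) → ℝ} {lam : ℝ} (hE : ExpSum ψ lam) :
    ∃ C : ℝ → ℝ, ∀ r, 0 < r → lam * r ^ 2 ≤ 1 →
      volume.real (ball (0 : EuclideanSpace ℝ (Fin n)) r) / 2 ≤ C r ∧
      C r ≤ volume.real (ball (0 : EuclideanSpace ℝ (Fin n)) r) ∧
      ∀ x, ∫ y in ball x r, ψ y = C r * ψ x := by
  obtain ⟨S, c, ξ, h1, h2⟩ := hE
  rcases S.eq_empty_or_nonempty with h | ⟨k0, hk0⟩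
  · refine ⟨fun r => volume.real (ball (0 : EuclideanSpace ℝ (Fin n)) r), fun r hr _ => ⟨?_, le_rfl, ?_⟩⟩
    · have : 0 ≤ volume.real (ball (0 : EuclideanSpace ℝ (Fin n)) r) := measureReal_nonneg
      linarith
    · have : ∀ x, ψ x = 0 := fun x => by simpa [h] using h2 x
      simp [this]
  · refine ⟨fun r => ∫ y in ball (0 : EuclideanSpace ℝ (Fin n)) r, Real.cos (inner ℝ (ξ k0) (y) : ℝ), fun r hr hlr => ?_⟩
    have hint : ∀ f : EuclideanSpace ℝ (Fin n) → ℝ, Continuous f → IntegrableOn f (ball 0 r) :=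
      fun f hf => (hf.continuousOn.integrableOn_compact (isCompact_closedBall _ _)).mono_set ball_subset_closedBall
    have hintc : ∀ f : EuclideanSpace ℝ (Fin n) → ℂ, Continuous f → IntegrableOn f (ball 0 r) :=
      fun f hf => (hf.continuousOn.integrableOn_compact (isCompact_closedBall _ _)).mono_set ball_subset_closedBall
    have hcosc : Continuous fun y : EuclideanSpace ℝ (Fin n) => Real.cos (inner ℝ (ξ k0) (y) : ℝ) := by fun_prop
    refine ⟨?_, ?_, ?_⟩
    · have : ∫ y in ball (0 : EuclideanSpace ℝ (Fin n)) r, (1/2:ℝ) ≤ ∫ y in ball (0 : EuclideanSpace ℝ (Fin n)) r, Real.cos (inner ℝ (ξ k0) (y) : ℝ) := by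
        apply setIntegral_mono_on (hint _ continuous_const) (hint _ hcosc) measurableSet_ball
        intro y hy
        have h3 := Real.one_sub_sq_div_two_le_cos (x := (inner ℝ (ξ k0) (y) : ℝ))
        have h4 := abs_real_inner_le_norm (ξ k0) y
        have h5 : ‖y‖ ≤ r := by simpa using (mem_ball.1 hy).le
        have h6 : (inner ℝ (ξ k0) (y) : ℝ)^2 ≤ ‖ξ k0‖^2 * ‖y‖^2 := by
          rw [← mul_pow, ← sq_abs]
          exact pow_le_pow_left₀ (abs_nonneg _) h4 2
        have h7 : ‖ξ k0‖^2 * ‖y‖^2 ≤ lam * r^2 := by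
          rw [h1 k0 hk0]
          apply mul_le_mul_of_nonneg_left
          · exact pow_le_pow_left₀ (norm_nonneg _) h5 2
          · rw [← h1 k0 hk0]; positivity
        linarith
      simpa [div_eq_mul_inv] using this
    · have : ∫ y in ball (0 : EuclideanSpace ℝ (Fin n)) r, Real.cos (inner ℝ (ξ k0) (y) : ℝ) ≤ ∫ y in ball (0 : EuclideanSpace ℝ (Fin n)) r, (1:ℝ) := by
        apply setIntegral_mono_on (hint _ hcosc) (hint _ continuous_const) measurableSet_ball
        intro y hy
        exact Real.cos_le_one _
      simpa using this
    · intro x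
      set Z : ℂ := ∫ y in ball (0 : EuclideanSpace ℝ (Fin n)) r, Complex.exp (Complex.I * (((inner ℝ (ξ k0) (y) : ℝ) : ℝ) : ℂ)) with hZ
      have hrot : ∀ k ∈ S, ∫ y in ball (0 : EuclideanSpace ℝ (Fin n)) r, Complex.exp (Complex.I * (((inner ℝ (ξ k) (y) : ℝ) : ℝ) : ℂ)) = Z := by
        intro k hk
        have hn : ‖ξ k0‖ = ‖ξ k‖ := by
          have : ‖ξ k0‖^2 = ‖ξ k‖^2 := by rw [h1 k hk, h1 k0 hk0]
          exact (pow_left_inj₀ (norm_nonneg _) (norm_nonneg _) two_ne_zero).1 this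
        have hr := Submodule.reflection_sub hn
        set R := (Submodule.span ℝ {ξ k0 - ξ k})ᗮ.reflection with hR
        have hb : R ⁻¹' (ball 0 r) = ball (0 : EuclideanSpace ℝ (Fin n)) r := by
          ext y; simp
        have := R.measurePreserving.setIntegral_preimage_emb R.toHomeomorph.measurableEmbedding
          (fun y => Complex.exp (Complex.I * (((inner ℝ (ξ k) (y) : ℝ) : ℝ) : ℂ))) (ball 0 r)
        rw [hb] at this
        rw [← this, hZ]
        congr 1
        funext y
        rw [← hr, LinearIsometryEquiv.inner_map_map]
      have hmain : ((∫ y in ball x r, ψ y : ℝ) : ℂ) = Z * ((ψ x : ℝ) : ℂ) := by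
        rw [← integral_complex_ofReal, ball_shift]
        simp_rw [h2]
        rw [integral_finsetSum]
        · rw [Finset.mul_sum]
          refine Finset.sum_congr rfl fun k hk => ?_
          rw [← hrot k hk, ← integral_mul_const]
          congr 1
          funext y
          rw [inner_add_right]
          push_cast
          rw [mul_add, Complex.exp_add]
          ring
        · intro k hk
          apply hintc
          fun_prop
      have hre : Z.re = ∫ y in ball (0 : EuclideanSpace ℝ (Fin n)) r, Real.cos (inner ℝ (ξ k0) (y) : ℝ) := by
        rw [hZ]
        have : (∫ y in ball (0 : EuclideanSpace ℝ (Fin n)) r, Complex.exp (Complex.I * (((inner ℝ (ξ k0) (y) : ℝ) : ℝ) : ℂ))).re = ∫ y in ball (0 : EuclideanSpace ℝ (Fin n)) r, (Complex.exp (Complex.I * (((inner ℝ (ξ k0) (y) : ℝ) : ℝ) : ℂ))).re := by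
          have := Complex.reCLM.integral_comp_comm (μ := volume.restrict (ball (0 : EuclideanSpace ℝ (Fin n)) r)) (φ := fun y => Complex.exp (Complex.I * (((inner ℝ (ξ k0) (y) : ℝ) : ℝ) : ℂ))) (hintc _ (by fun_prop))
          simpa using this.symm
        rw [this]
        congr 1
        funext y
        rw [mul_comm, Complex.exp_ofReal_mul_I_re]
      have := congrArg Complex.re hmain
      rw [Complex.ofReal_re, Complex.re_mul_ofReal, hre] at this
      exact this

lemma gauss_series {n : ℕ} {ψ : EuclideanSpace ℝ (Fin n) → ℝ} {lam : ℝ} (hE : ExpSum ψ lam)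
    (p : EuclideanSpace ℝ (Fin n)) :
    ∃ b : ℕ → ℝ, (∀ j, 0 ≤ b j) ∧ ∀ t : ℝ, 0 < t → HasSum (fun j => b j * t ^ j)
      (Real.exp (2 * lam * t) * ((4 * π * t) ^ ((n:ℝ)/2))⁻¹ *
        ∫ y, ψ (p + y) ^ 2 * Real.exp (-(1/(4*t)) * ‖y‖ ^ 2)) := by
  obtain ⟨S, c, ξ, h1, h2⟩ := hE
  obtain ⟨a, ha⟩ : ∃ a : (Fin n → ℤ) → ℂ, ∀ k, a k = c k * Complex.exp (Complex.I * (((inner ℝ (ξ k) (p) : ℝ) : ℝ) : ℂ)) :=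
    ⟨_, fun k => rfl⟩
  have hψ : ∀ y, ((ψ (p + y) : ℝ) : ℂ) = ∑ k ∈ S, a k * Complex.exp (Complex.I * (((inner ℝ (ξ k) (y) : ℝ) : ℝ) : ℂ)) := by
    intro y
    rw [h2]
    refine Finset.sum_congr rfl fun k _ => ?_
    rw [ha, inner_add_right]
    push_cast
    rw [mul_add, Complex.exp_add]
    ring
  set β : ℕ → ℂ := fun j => ∑ k ∈ S, ∑ l ∈ S, a k * (starRingEnd ℂ) (a l) *
    (((2 * (inner ℝ (ξ k) (ξ l) : ℝ) : ℝ) : ℂ) ^ j / (j.factorial : ℂ)) with hβ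
  refine ⟨fun j => (β j).re, ?_, ?_⟩
  · intro j
    have : β j = (((2:ℝ)^j / j.factorial * ∑ q : Fin j → Fin n, Complex.normSq (∑ k ∈ S, a k * ((∏ i, (ξ k) (q i) : ℝ) : ℂ)) : ℝ) : ℂ) := by
      push_cast
      simp_rw [Complex.normSq_eq_conj_mul_self, hβ]
      have hin : ∀ k l, ((2 * (inner ℝ (ξ k) (ξ l) : ℝ) : ℝ) : ℂ) ^ j = (2:ℂ)^j * ∑ q : Fin j → Fin n, ((∏ i, (ξ k) (q i) : ℝ) : ℂ) * ((∏ i, (ξ l) (q i) : ℝ) : ℂ) := by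
        intro k l
        push_cast
        rw [mul_pow]
        congr 1
        have : (inner ℝ (ξ k) (ξ l) : ℝ) = ∑ i, ξ k i * ξ l i := by
          rw [PiLp.inner_apply]
          refine Finset.sum_congr rfl fun i _ => ?_
          simp [mul_comm]
        rw [this]
        push_cast
        rw [Fintype.sum_pow]
        refine Finset.sum_congr rfl fun q _ => ?_
        rw [Finset.prod_mul_distrib]
      simp_rw [hin]
      simp_rw [map_sum, map_mul, map_prod, Complex.conj_ofReal, Finset.sum_mul_sum]
      rw [Finset.mul_sum]
      simp_rw [Finset.mul_sum, Finset.sum_div, Finset.mul_sum]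
      have e1 : ∀ f : (Fin n → ℤ) → (Fin n → ℤ) → (Fin j → Fin n) → ℂ, ∑ k ∈ S, ∑ l ∈ S, ∑ q, f k l q = ∑ q, ∑ l ∈ S, ∑ k ∈ S, f k l q := by
        intro f
        rw [Finset.sum_comm]
        simp_rw [Finset.sum_comm (s := S) (t := Finset.univ)]
      rw [e1]
      refine Finset.sum_congr rfl fun q _ => Finset.sum_congr rfl fun l _ => Finset.sum_congr rfl fun k _ => ?_
      push_cast
      ring
    show 0 ≤ (β j).re
    rw [this, Complex.ofReal_re]
    apply mul_nonneg (by positivity)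
    exact Finset.sum_nonneg fun q _ => Complex.normSq_nonneg _
  · intro t ht
    have hb : 0 < ((1/(4*t) : ℝ) : ℂ).re := by rw [Complex.ofReal_re]; positivity
    have hI : ((∫ y, ψ (p + y) ^ 2 * Real.exp (-(1/(4*t)) * ‖y‖ ^ 2) : ℝ) : ℂ)
        = ∑ k ∈ S, ∑ l ∈ S, a k * (starRingEnd ℂ) (a l) * (((4 * π * t) ^ ((n:ℝ)/2) : ℝ) * Complex.exp (((-2*lam*t + 2*(inner ℝ (ξ k) (ξ l) : ℝ)*t : ℝ)) : ℂ)) := by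
      rw [← integral_complex_ofReal]
      have hpt : ∀ y, ((ψ (p + y) ^ 2 * Real.exp (-(1/(4*t)) * ‖y‖ ^ 2) : ℝ) : ℂ) =
          ∑ k ∈ S, ∑ l ∈ S, a k * (starRingEnd ℂ) (a l) * Complex.exp (-((1/(4*t) : ℝ) : ℂ) * (‖y‖:ℂ)^2 + Complex.I * (((inner ℝ (ξ k - ξ l) (y) : ℝ) : ℝ) : ℂ)) := by
        intro y
        have hsq : ((ψ (p+y) ^ 2 : ℝ) : ℂ) = ((ψ (p+y) : ℝ) : ℂ) * (starRingEnd ℂ) ((ψ (p+y) : ℝ) : ℂ) := by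
          rw [Complex.conj_ofReal]; push_cast; ring
        rw [Complex.ofReal_mul, hsq, hψ, map_sum, Finset.sum_mul_sum, Finset.sum_mul]
        refine Finset.sum_congr rfl fun k _ => ?_
        rw [Finset.sum_mul]
        refine Finset.sum_congr rfl fun l _ => ?_
        rw [map_mul, ← Complex.exp_conj, map_mul, Complex.conj_I, Complex.conj_ofReal, inner_sub_left, Complex.exp_add]
        push_cast
        rw [mul_sub, sub_eq_add_neg, Complex.exp_add]
        ring_nf
      simp_rw [hpt]
      have hint : ∀ k l, Integrable (fun y : EuclideanSpace ℝ (Fin n) => a k * (starRingEnd ℂ) (a l) * Complex.exp (-((1/(4*t) : ℝ) : ℂ) * (‖y‖:ℂ)^2 + Complex.I * (((inner ℝ (ξ k - ξ l) (y) : ℝ) : ℝ) : ℂ))) := by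
        intro k l
        exact (GaussianFourier.integrable_cexp_neg_mul_sq_norm_add hb Complex.I (ξ k - ξ l)).const_mul _
      rw [integral_finsetSum _ (fun k _ => integrable_finsetSum _ (fun l _ => hint k l))]
      refine Finset.sum_congr rfl fun k hk => ?_
      rw [integral_finsetSum _ (fun l _ => hint k l)]
      refine Finset.sum_congr rfl fun l hl => ?_
      rw [integral_const_mul]
      congr 1
      rw [GaussianFourier.integral_cexp_neg_mul_sq_norm_add hb]
      congr 1
      · rw [Complex.ofReal_cpow (by positivity)]
        congr 1
        · push_cast
          field_simp
        · simp
      · congr 1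
        have : ‖ξ k - ξ l‖^2 = 2*lam - 2*(inner ℝ (ξ k) (ξ l) : ℝ) := by
          rw [norm_sub_sq_real, h1 k hk, h1 l hl]; ring
        have h5 : ((‖ξ k - ξ l‖:ℂ))^2 = ((2*lam - 2*(inner ℝ (ξ k) (ξ l) : ℝ) : ℝ) : ℂ) := by
          rw [← this]; push_cast; rfl
        rw [h5, Complex.I_sq]
        have : (t:ℂ) ≠ 0 := by exact_mod_cast ht.ne'
        push_cast
        field_simp
        ring
    have hval : ((Real.exp (2 * lam * t) * ((4 * π * t) ^ ((n:ℝ)/2))⁻¹ *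
        ∫ y, ψ (p + y) ^ 2 * Real.exp (-(1/(4*t)) * ‖y‖ ^ 2) : ℝ) : ℂ) =
        ∑ k ∈ S, ∑ l ∈ S, a k * (starRingEnd ℂ) (a l) * Complex.exp ((2*(inner ℝ (ξ k) (ξ l) : ℝ) : ℝ) * (t:ℂ)) := by
      rw [Complex.ofReal_mul, hI, Finset.mul_sum]
      refine Finset.sum_congr rfl fun k hk => ?_
      rw [Finset.mul_sum]
      refine Finset.sum_congr rfl fun l hl => ?_
      have h6 : (((4 * π * t) ^ ((n:ℝ)/2) : ℝ) : ℂ) ≠ 0 := by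
        have : (0:ℝ) < (4 * π * t) ^ ((n:ℝ)/2) := by positivity
        exact_mod_cast this.ne'
      have h7 : Complex.exp (((-2*lam*t + 2*(inner ℝ (ξ k) (ξ l) : ℝ)*t : ℝ)) : ℂ) = Complex.exp (-(2*lam*t:ℝ)) * Complex.exp ((2*(inner ℝ (ξ k) (ξ l) : ℝ) : ℝ) * (t:ℂ)) := by
        rw [← Complex.exp_add]; congr 1; push_cast; ring
      rw [h7, Complex.ofReal_mul, Complex.ofReal_inv, Complex.ofReal_exp, Complex.exp_neg]
      have h8 := Complex.exp_ne_zero ((2*lam*t : ℝ) : ℂ)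
      generalize (((4 * π * t) ^ ((n:ℝ)/2) : ℝ) : ℂ) = Q at h6 ⊢
      field_simp
    have hs : HasSum (fun j => β j * (t:ℂ)^j) (∑ k ∈ S, ∑ l ∈ S, a k * (starRingEnd ℂ) (a l) * Complex.exp ((2*(inner ℝ (ξ k) (ξ l) : ℝ) : ℝ) * (t:ℂ))) := by
      have : (fun j => β j * (t:ℂ)^j) = fun j => ∑ k ∈ S, ∑ l ∈ S, a k * (starRingEnd ℂ) (a l) *
          ((((2 * (inner ℝ (ξ k) (ξ l) : ℝ) : ℝ) : ℂ) * t) ^ j / (j.factorial : ℂ)) := by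
        funext j
        rw [hβ]
        simp only [Finset.sum_mul]
        refine Finset.sum_congr rfl fun k _ => Finset.sum_congr rfl fun l _ => ?_
        rw [mul_pow]
        ring
      rw [this]
      refine hasSum_sum fun k _ => hasSum_sum fun l _ => ?_
      apply HasSum.mul_left
      rw [Complex.exp_eq_exp_ℂ]
      exact NormedSpace.expSeries_div_hasSum_exp _
    rw [← hval] at hs
    have h9 := Complex.hasSum_re hs
    simp only [Complex.ofReal_re] at h9
    convert h9 using 2 with j
    rw [← Complex.ofReal_pow, Complex.re_mul_ofReal]

end ExpPart

section DoublingPart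

lemma vol_ball {n : ℕ} (hn : 1 ≤ n) (x : EuclideanSpace ℝ (Fin n)) {r : ℝ} (hr : 0 ≤ r) :
    volume.real (ball x r) = r ^ n * volume.real (ball (0 : EuclideanSpace ℝ (Fin n)) 1) := by
  haveI : Nonempty (Fin n) := ⟨⟨0, hn⟩⟩
  have := Measure.addHaar_ball (volume : Measure (EuclideanSpace ℝ (Fin n))) x hr
  simp only [Measure.real, this, ENNReal.toReal_mul, finrank_euclideanSpace, Fintype.card_fin]
  rw [ENNReal.toReal_ofReal (by positivity)]

lemma vol_one_pos (n : ℕ) : 0 < volume.real (ball (0 : EuclideanSpace ℝ (Fin n)) 1) :=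
  ENNReal.toReal_pos (measure_ball_pos _ _ one_pos).ne' measure_ball_lt_top.ne

lemma intOn_ball {n : ℕ} {f : EuclideanSpace ℝ (Fin n) → ℝ} (hf : Continuous f)
    (x : EuclideanSpace ℝ (Fin n)) (r : ℝ) : IntegrableOn f (ball x r) :=
  (hf.continuousOn.integrableOn_compact (isCompact_closedBall _ _)).mono_set ball_subset_closedBall

lemma pt_bound_l1 {n : ℕ} (hn : 1 ≤ n) {ψ : EuclideanSpace ℝ (Fin n) → ℝ} {lam : ℝ} (hE : ExpSum ψ lam)
    (x : EuclideanSpace ℝ (Fin n)) {r : ℝ} (hr : 0 < r) (hlr : lam * r ^ 2 ≤ 1) :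
    |ψ x| * volume.real (ball (0 : EuclideanSpace ℝ (Fin n)) r) ≤ 2 * ∫ y in ball x r, |ψ y| := by
  obtain ⟨C, hC⟩ := mean_value hE
  obtain ⟨h1, h2, h3⟩ := hC r hr hlr
  have hV : 0 ≤ volume.real (ball (0 : EuclideanSpace ℝ (Fin n)) r) := measureReal_nonneg
  have h4 : |∫ y in ball x r, ψ y| ≤ ∫ y in ball x r, |ψ y| := abs_integral_le_integral_abs
  rw [h3, abs_mul, abs_of_nonneg (by linarith)] at h4
  nlinarith [abs_nonneg (ψ x)]

lemma pt_bound_l2 {n : ℕ} (hn : 1 ≤ n) {ψ : EuclideanSpace ℝ (Fin n) → ℝ} {lam : ℝ} (hE : ExpSum ψ lam)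
    (hc : Continuous ψ)
    (x : EuclideanSpace ℝ (Fin n)) {r : ℝ} (hr : 0 < r) (hlr : lam * r ^ 2 ≤ 1) :
    ψ x ^ 2 * volume.real (ball (0 : EuclideanSpace ℝ (Fin n)) r) ≤ 4 * ∫ y in ball x r, ψ y ^ 2 := by
  have h1 := pt_bound_l1 hn hE x hr hlr
  have hV0 : volume.real (ball x r) = volume.real (ball (0 : EuclideanSpace ℝ (Fin n)) r) := by
    rw [vol_ball hn x hr.le, vol_ball hn 0 hr.le]
  have hV : 0 < volume.real (ball (0 : EuclideanSpace ℝ (Fin n)) r) := by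
    rw [vol_ball hn 0 hr.le]; have := vol_one_pos n; positivity
  set V := volume.real (ball (0 : EuclideanSpace ℝ (Fin n)) r)
  set A := ∫ y in ball x r, |ψ y| with hA
  have h2 : 0 ≤ ∫ y in ball x r, (|ψ y| - A / V) ^ 2 := integral_nonneg fun y => sq_nonneg _
  have h3 : ∫ y in ball x r, (|ψ y| - A / V) ^ 2 = (∫ y in ball x r, ψ y ^ 2) - 2 * (A / V) * A + (A/V)^2 * V := by
    have : ∀ y, (|ψ y| - A / V) ^ 2 = (ψ y ^ 2 - 2 * (A / V) * |ψ y|) + (A/V)^2 := by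
      intro y; rw [sub_sq, sq_abs]; ring
    simp_rw [this]
    rw [integral_add, integral_sub, integral_const_mul]
    · rw [← hA]; simp [hV0, mul_comm]
    · exact intOn_ball (by fun_prop) x r
    · exact intOn_ball (by fun_prop) x r
    · exact intOn_ball (by fun_prop) x r
    · exact intOn_ball (by fun_prop) x r
  rw [h3] at h2
  have h4 : A ^ 2 ≤ V * ∫ y in ball x r, ψ y ^ 2 := by
    have e : 2 * (A / V) * A - (A/V)^2 * V = A^2/V := by field_simp; ring
    have : A^2/V ≤ ∫ y in ball x r, ψ y ^ 2 := by linarith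
    rwa [div_le_iff₀ hV, mul_comm] at this
  have h5 : (|ψ x| * V)^2 ≤ (2 * A)^2 := pow_le_pow_left₀ (by positivity) h1 2
  rw [mul_pow, sq_abs, mul_pow] at h5
  have h6 : V * (ψ x ^ 2 * V) ≤ V * (4 * ∫ y in ball x r, ψ y ^ 2) := by nlinarith
  exact le_of_mul_le_mul_left h6 hV

lemma series_doubling {b : ℕ → ℝ} {F : ℝ → ℝ} (hb : ∀ j, 0 ≤ b j)
    (hF : ∀ t, 0 < t → HasSum (fun j => b j * t ^ j) (F t)) {t T : ℝ} (ht : 0 < t) (htT : t ≤ T)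
    (hFT : 0 < F T) : 0 < F t ∧ F (2 * t) ≤ F (2 * T) / F T * F t := by
  have hT : 0 < T := ht.trans_le htT
  constructor
  · have h0 : 0 ≤ F t := (hF t ht).nonneg fun j => mul_nonneg (hb j) (by positivity)
    rcases h0.lt_or_eq with h | h
    · exact h
    · exfalso
      have h1 := hF t ht
      rw [← h, hasSum_zero_iff_of_nonneg (fun j => mul_nonneg (hb j) (by positivity))] at h1
      have h2 : ∀ j, b j = 0 := by
        intro j
        have := congrFun h1 j
        simpa [ht.ne'] using this
      have h3 := hF T hT
      simp only [h2, zero_mul] at h3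
      exact hFT.ne' (h3.unique hasSum_zero)
  · set D := F (2*T) / F T with hD
    have hD1 : 1 ≤ D := by
      rw [hD, one_le_div hFT]
      refine hasSum_le (fun j => ?_) (hF T hT) (hF (2*T) (by positivity))
      exact mul_le_mul_of_nonneg_left (pow_le_pow_left₀ hT.le (by linarith) j) (hb j)
    have hDF : F (2*T) = D * F T := by rw [hD]; field_simp
    set j0 := Real.logb 2 D with hj0
    have h2j : (2:ℝ) ^ j0 = D := Real.rpow_logb (by norm_num) (by norm_num) (by linarith)
    set q := (t/T) ^ j0 with hq
    have hs := ((hF (2*t) (by positivity)).sub ((hF t ht).mul_left D)).sub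
      (((hF (2*T) (by positivity)).sub ((hF T hT).mul_left D)).mul_left q)
    have hneg : F (2*t) - D * F t - q * (F (2*T) - D * F T) ≤ 0 := by
      refine hasSum_le (fun j => ?_) hs hasSum_zero
      have e : b j * (2*t)^j - D * (b j * t^j) - q * (b j * (2*T)^j - D * (b j * T^j))
          = b j * T^j * ((2^j - D) * ((t/T)^j - q)) := by
        rw [mul_pow, mul_pow, div_pow]; field_simp
      rw [e]
      apply mul_nonpos_of_nonneg_of_nonpos (mul_nonneg (hb j) (by positivity))
      have hx0 : 0 < t/T := by positivity
      have hx1 : t/T ≤ 1 := by rw [div_le_one hT]; exact htT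
      rcases le_total (j:ℝ) j0 with h | h
      · apply mul_nonpos_of_nonpos_of_nonneg
        · rw [sub_nonpos, ← h2j, ← Real.rpow_natCast]
          exact Real.rpow_le_rpow_of_exponent_le (by norm_num) h
        · rw [sub_nonneg, hq, ← Real.rpow_natCast]
          exact Real.rpow_le_rpow_of_exponent_ge hx0 hx1 h
      · apply mul_nonpos_of_nonneg_of_nonpos
        · rw [sub_nonneg, ← h2j, ← Real.rpow_natCast]
          exact Real.rpow_le_rpow_of_exponent_le (by norm_num) h
        · rw [sub_nonpos, hq, ← Real.rpow_natCast]
          exact Real.rpow_le_rpow_of_exponent_ge hx0 hx1 h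
    rw [hDF] at hneg
    simp only [sub_self, mul_zero, sub_zero] at hneg
    linarith

lemma rpow_half {x : ℝ} (hx : 0 ≤ x) (n : ℕ) : x ^ ((n:ℝ)/2) = (√x)^n := by
  rw [Real.sqrt_eq_rpow, ← Real.rpow_natCast, ← Real.rpow_mul hx]
  congr 1; ring

set_option maxHeartbeats 2000000 in
lemma doubling (n : ℕ) (hn : 1 ≤ n) (K₁ K₂ : ℝ) (hK₁ : 0 < K₁) (hK₂ : 0 < K₂) :
    ∃ C : ℝ, 0 < C ∧ ∀ (ψ : EuclideanSpace ℝ (Fin n) → ℝ) (lam τ β : ℝ), 0 < lam → 0 < τ →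
      lam * τ ^ 2 = 1 → 1 ≤ β → Continuous ψ → ExpSum ψ lam →
      (∀ x, K₁ * (β * τ) ^ n ≤ (∫ y in ball x (β * τ), (ψ y)^2) ∧
        (∫ y in ball x (β * τ), (ψ y)^2) ≤ K₂ * (β * τ) ^ n) →
      ∀ (p : EuclideanSpace ℝ (Fin n)) (h : ℝ), 0 < h → h ≤ τ →
        0 < (∫ y in ball p (h/2), (ψ y)^2) ∧
        (∫ y in ball p (4*h), (ψ y)^2) ≤ Real.exp (C * β) * ∫ y in ball p (h/2), (ψ y)^2 := by
  set ω := volume.real (ball (0 : EuclideanSpace ℝ (Fin n)) 1) with hω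
  have hωp : 0 < ω := vol_one_pos n
  set A := 4 * K₂ / ω with hA
  have hAp : 0 < A := by positivity
  set A' := A * (√(4 * π))^n / K₁ with hA'
  have hA'p : 0 < A' := by positivity
  set C₂ := (3 + n + A') + n with hC₂
  set C₃ := C₂ + 1 with hC₃
  have hC₂p : 0 < C₂ := by positivity
  have hC₃p : 1 ≤ C₃ := by linarith
  refine ⟨128 * C₃ + 1, by positivity, ?_⟩
  intro ψ lam τ β hlam hτ hlt hβ hc hE hK p h hh hhτ
  have hβ0 : 0 < β := by linarith
  -- sup bound
  have hsup : ∀ x, ψ x ^ 2 ≤ A * β ^ n := by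
    intro x
    have h1 := pt_bound_l2 hn hE hc x hτ hlt.le
    rw [vol_ball hn 0 hτ.le] at h1
    have h2 : (∫ y in ball x τ, (ψ y)^2) ≤ ∫ y in ball x (β * τ), (ψ y)^2 := by
      apply setIntegral_mono_set (intOn_ball (by fun_prop) _ _)
      · exact Filter.Eventually.of_forall fun y => sq_nonneg _
      · exact (ball_subset_ball (by nlinarith)).eventuallyLE
    have h3 := (hK x).2
    have h4 : ψ x ^ 2 * (τ^n * ω) ≤ 4 * (K₂ * (β * τ)^n) := by linarith
    rw [mul_pow] at h4
    have e : A * β^n * (τ^n * ω) = 4 * (K₂ * (β^n * τ^n)) := by rw [hA]; field_simp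
    rw [← e] at h4
    exact le_of_mul_le_mul_right h4 (by positivity)
  set I : ℝ → ℝ := fun t => ∫ y, ψ (p + y) ^ 2 * Real.exp (-(1/(4*t)) * ‖y‖ ^ 2) with hI
  have hgi : ∀ b : ℝ, 0 < b → Integrable fun y : EuclideanSpace ℝ (Fin n) => Real.exp (-b * ‖y‖ ^ 2) := by
    intro b hb
    have := (GaussianFourier.integrable_cexp_neg_mul_sq_norm_add (V := EuclideanSpace ℝ (Fin n)) (b := (b:ℂ)) (by simpa using hb) 0 0).re
    refine this.congr (Filter.Eventually.of_forall fun y => ?_)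
    simp only [zero_mul, add_zero]
    have : (-(b:ℂ) * (‖y‖:ℂ)^2) = ((-b * ‖y‖^2 : ℝ) : ℂ) := by push_cast; ring
    rw [this]
    exact Complex.exp_ofReal_re _
  have hint : ∀ t, 0 < t → Integrable fun y => ψ (p + y) ^ 2 * Real.exp (-(1/(4*t)) * ‖y‖ ^ 2) := by
    intro t ht
    refine ((hgi (1/(4*t)) (by positivity)).const_mul (A * β^n)).mono' ?_ ?_
    · exact Continuous.aestronglyMeasurable (by fun_prop)
    · refine Filter.Eventually.of_forall fun y => ?_
      rw [Real.norm_of_nonneg (by positivity)]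
      exact mul_le_mul_of_nonneg_right (hsup _) (Real.exp_nonneg _)
  have hlow : ∀ t R, 0 < t → 0 < R → Real.exp (-(R^2/(4*t))) * (∫ y in ball p R, ψ y ^ 2) ≤ I t := by
    intro t R ht hR
    rw [ball_shift, ← integral_const_mul]
    calc _ ≤ ∫ y in ball 0 R, ψ (p + y) ^ 2 * Real.exp (-(1/(4*t)) * ‖y‖ ^ 2) := by
          apply setIntegral_mono_on (intOn_ball (by fun_prop) _ _) (hint t ht).integrableOn measurableSet_ball
          intro y hy
          rw [mul_comm]
          apply mul_le_mul_of_nonneg_left _ (sq_nonneg _)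
          apply Real.exp_le_exp.2
          have : ‖y‖ ≤ R := by simpa using (mem_ball.1 hy).le
          have h2 : ‖y‖^2 ≤ R^2 := pow_le_pow_left₀ (norm_nonneg _) this 2
          have h3 : (1/(4*t)) * ‖y‖^2 ≤ (1/(4*t)) * R^2 := mul_le_mul_of_nonneg_left h2 (by positivity)
          have h4 : R^2/(4*t) = (1/(4*t)) * R^2 := by ring
          rw [h4]; linarith
      _ ≤ I t := setIntegral_le_integral (hint t ht) (Filter.Eventually.of_forall fun y => by positivity)
  set T := β * τ^2 with hT
  have hTp : 0 < T := by positivity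
  have hlT : lam * T = β := by rw [hT]; linear_combination β * hlt
  obtain ⟨b, hb, hF⟩ := gauss_series hE p
  set F : ℝ → ℝ := fun t => Real.exp (2 * lam * t) * ((4 * π * t) ^ ((n:ℝ)/2))⁻¹ * I t with hFdef
  have hIT : Real.exp (-(β/4)) * (K₁ * (β*τ)^n) ≤ I T := by
    have h1 := hlow T (β*τ) hTp (by positivity)
    have e : (β*τ)^2/(4*T) = β/4 := by rw [hT]; field_simp
    rw [e] at h1
    exact (mul_le_mul_of_nonneg_left (hK p).1 (Real.exp_nonneg _)).trans h1
  have hFT : Real.exp β * (K₁ * ((√(4*π))^n)⁻¹) ≤ F T := by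
    rw [hFdef]
    simp only
    rw [rpow_half (by positivity), Real.sqrt_mul (by positivity : 0 ≤ 4 * π) T]
    have h1 : √T ≤ β * τ := by
      apply Real.sqrt_le_iff.2 ⟨by positivity, ?_⟩
      rw [hT]; nlinarith [sq_nonneg τ, mul_nonneg hβ0.le (sq_nonneg τ)]
    have h2 : (√T)^n ≤ (β*τ)^n := pow_le_pow_left₀ (Real.sqrt_nonneg _) h1 n
    have h3 : 2 * lam * T = 2 * β := by linear_combination 2 * hlT
    rw [h3, mul_pow, mul_inv]
    have h4 : 1 ≤ ((√T)^n)⁻¹ * (β*τ)^n := by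
      rw [inv_mul_eq_div, one_le_div (by positivity)]; exact h2
    calc Real.exp β * (K₁ * ((√(4*π))^n)⁻¹)
        ≤ (Real.exp (2*β) * Real.exp (-(β/4))) * (K₁ * ((√(4*π))^n)⁻¹) * (((√T)^n)⁻¹ * (β*τ)^n) := by
          have h5 : Real.exp β ≤ Real.exp (2*β) * Real.exp (-(β/4)) := by
            rw [← Real.exp_add]; apply Real.exp_le_exp.2; linarith
          calc _ ≤ (Real.exp (2*β) * Real.exp (-(β/4))) * (K₁ * ((√(4*π))^n)⁻¹) := mul_le_mul_of_nonneg_right h5 (by positivity)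
            _ ≤ _ := le_mul_of_one_le_right (by positivity) h4
      _ = Real.exp (2*β) * (((√(4*π))^n)⁻¹ * ((√T)^n)⁻¹) * (Real.exp (-(β/4)) * (K₁ * (β*τ)^n)) := by ring
      _ ≤ _ := mul_le_mul_of_nonneg_left hIT (by positivity)
  have hFTp : 0 < F T := lt_of_lt_of_le (by positivity) hFT
  have hF2T : F (2*T) ≤ Real.exp (4*β) * (A * β^n) := by
    have h1 : I (2*T) ≤ (A * β^n) * (4 * π * (2*T)) ^ ((n:ℝ)/2) := by
      calc I (2*T) ≤ ∫ y : EuclideanSpace ℝ (Fin n), (A * β^n) * Real.exp (-(1/(4*(2*T))) * ‖y‖ ^ 2) := by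
            apply integral_mono (hint _ (by positivity)) ((hgi _ (by positivity)).const_mul _)
            intro y
            exact mul_le_mul_of_nonneg_right (hsup _) (Real.exp_nonneg _)
        _ = _ := by
            rw [integral_const_mul, GaussianFourier.integral_rexp_neg_mul_sq_norm (by positivity)]
            congr 2
            · field_simp
            · simp
    have hQ : 0 < (4 * π * (2*T)) ^ ((n:ℝ)/2) := by positivity
    rw [hFdef]
    simp only
    have h3 : 2 * lam * (2 * T) = 4 * β := by linear_combination 4 * hlT
    rw [h3, mul_assoc]
    apply mul_le_mul_of_nonneg_left _ (Real.exp_nonneg _)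
    rw [inv_mul_le_iff₀ hQ]
    linarith [h1]
  have hD : F (2*T) / F T ≤ Real.exp ((3 + n + A') * β) := by
    rw [div_le_iff₀ hFTp]
    refine hF2T.trans (le_trans ?_ (mul_le_mul_of_nonneg_left hFT (Real.exp_nonneg _)))
    have h1 : A' ≤ Real.exp (A' * β) := by
      have := Real.add_one_le_exp (A' * β)
      nlinarith
    have h2 : β^n ≤ Real.exp (n * β) := by
      rw [Real.exp_nat_mul]
      apply pow_le_pow_left₀ hβ0.le
      linarith [Real.add_one_le_exp β]
    have h3 : A = A' * (K₁ * ((√(4*π))^n)⁻¹) := by rw [hA']; field_simp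
    calc Real.exp (4*β) * (A * β^n) = Real.exp (4*β) * (A' * β^n) * (K₁ * ((√(4*π))^n)⁻¹) := by
          conv_lhs => rw [h3]
          ring
      _ ≤ Real.exp (4*β) * (Real.exp (A' * β) * Real.exp (n*β)) * (K₁ * ((√(4*π))^n)⁻¹) := by
          apply mul_le_mul_of_nonneg_right _ (by positivity)
          apply mul_le_mul_of_nonneg_left _ (Real.exp_nonneg _)
          exact mul_le_mul h1 h2 (by positivity) (Real.exp_nonneg _)
      _ = _ := by
          rw [← mul_assoc (Real.exp ((3 + n + A') * β))]
          congr 1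
          rw [← Real.exp_add, ← Real.exp_add, ← Real.exp_add]
          congr 1; ring
  have hI2 : ∀ t, 0 < t → t ≤ T → 0 < I t ∧ I (2*t) ≤ Real.exp (C₂ * β) * I t := by
    intro t ht htT
    obtain ⟨h1, h2⟩ := series_doubling (F := F) hb hF ht htT hFTp
    have hQ : 0 < (4 * π * t) ^ ((n:ℝ)/2) := by positivity
    have hIt : 0 < I t := by
      rw [hFdef] at h1
      simp only at h1
      exact pos_of_mul_pos_right h1 (by positivity)
    refine ⟨hIt, ?_⟩
    have h3 : F (2*t) ≤ Real.exp ((3 + n + A') * β) * F t := h2.trans (mul_le_mul_of_nonneg_right hD h1.le)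
    rw [hFdef] at h3
    simp only at h3
    have e1 : (4 * π * (2*t)) ^ ((n:ℝ)/2) = (√2)^n * (4 * π * t) ^ ((n:ℝ)/2) := by
      rw [rpow_half (by positivity), rpow_half (by positivity), ← mul_pow, ← Real.sqrt_mul (by positivity)]
      congr 2; ring
    have e2 : Real.exp (2*lam*(2*t)) = Real.exp (2*lam*t) * Real.exp (2*lam*t) := by
      rw [← Real.exp_add]; congr 1; ring
    rw [e1, e2] at h3
    set Q := (4 * π * t) ^ ((n:ℝ)/2)
    set X := Real.exp (2*lam*t) with hX
    have hX1 : 1 ≤ X := by rw [hX]; apply Real.one_le_exp; positivity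
    set Y := Real.exp ((3 + n + A') * β) with hY
    have hYp : 0 < Y := Real.exp_pos _
    set s := (√2)^n with hs
    have hsp : 0 < s := by positivity
    have hs2 : s ≤ Real.exp (n * β) := by
      rw [Real.exp_nat_mul]
      apply pow_le_pow_left₀ (Real.sqrt_nonneg _)
      have : √2 ≤ 2 := by rw [Real.sqrt_le_iff]; norm_num
      linarith [Real.add_one_le_exp β]
    have h4 : X * I (2*t) ≤ Y * s * I t := by
      have e3 : X * X * (s * Q)⁻¹ * I (2*t) = (X * I (2*t)) * (X * (s * Q)⁻¹) := by ring
      have e4 : Y * (X * Q⁻¹ * I t) = (Y * s * I t) * (X * (s * Q)⁻¹) := by field_simp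
      rw [e3, e4] at h3
      exact le_of_mul_le_mul_right h3 (by positivity)
    have hI2nn : 0 ≤ I (2*t) := integral_nonneg fun y => by positivity
    calc I (2*t) ≤ X * I (2*t) := le_mul_of_one_le_left hI2nn hX1
      _ ≤ Y * s * I t := h4
      _ ≤ Y * Real.exp (n*β) * I t := by
          apply mul_le_mul_of_nonneg_right _ hIt.le
          exact mul_le_mul_of_nonneg_left hs2 hYp.le
      _ = _ := by rw [hY, ← Real.exp_add, hC₂]; congr 2; ring
  -- conclude
  set R := h/2 with hR
  have hRp : 0 < R := by positivity
  set t := R^2/(8*C₃*β) with ht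
  have htp : 0 < t := by positivity
  have htT : t ≤ T := by
    rw [ht, div_le_iff₀ (by positivity), hT]
    have h1 : R^2 ≤ τ^2 := pow_le_pow_left₀ hRp.le (by linarith) 2
    have h2 : 1 ≤ β * (8 * C₃ * β) := by nlinarith [mul_le_mul hβ hC₃p (by norm_num) hβ0.le]
    nlinarith [sq_nonneg τ]
  obtain ⟨hIp, hIt⟩ := hI2 t htp htT
  have hball : I t / 2 ≤ ∫ y in ball p R, ψ y ^ 2 := by
    have h1 : I t ≤ (∫ y in ball p R, ψ y ^ 2) + Real.exp (-(C₃*β)) * I (2*t) := by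
      rw [ball_shift, ← integral_indicator measurableSet_ball, ← integral_const_mul, ← integral_add]
      · apply integral_mono (hint t htp)
        · apply Integrable.add
          · rw [integrable_indicator_iff measurableSet_ball]
            exact intOn_ball (by fun_prop) _ _
          · exact (hint (2*t) (by positivity)).const_mul _
        · intro y
          simp only
          have hnn : 0 ≤ Real.exp (-(C₃*β)) * (ψ (p + y) ^ 2 * Real.exp (-(1/(4*(2*t))) * ‖y‖ ^ 2)) := by positivity
          by_cases hy : y ∈ ball (0 : EuclideanSpace ℝ (Fin n)) R
          · rw [Set.indicator_of_mem hy]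
            have : ψ (p + y) ^ 2 * Real.exp (-(1/(4*t)) * ‖y‖ ^ 2) ≤ ψ (p+y)^2 * 1 := by
              apply mul_le_mul_of_nonneg_left _ (sq_nonneg _)
              apply Real.exp_le_one_iff.2
              have : 0 ≤ (1/(4*t)) * ‖y‖ ^ 2 := by positivity
              linarith
            linarith
          · rw [Set.indicator_of_notMem hy, zero_add]
            have : R ≤ ‖y‖ := by simpa using hy
            have h2 : R^2 ≤ ‖y‖^2 := pow_le_pow_left₀ hRp.le this 2
            have h3 : R^2/(8*t) = C₃ * β := by rw [ht]; field_simp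
            have h4 : Real.exp (-(1/(4*t)) * ‖y‖ ^ 2) ≤ Real.exp (-(C₃*β)) * Real.exp (-(1/(4*(2*t))) * ‖y‖ ^ 2) := by
              rw [← Real.exp_add]
              apply Real.exp_le_exp.2
              rw [← h3]
              have h5 : R^2/(8*t) ≤ ‖y‖^2/(8*t) := by gcongr
              have h6 : -(1/(4*t)) * ‖y‖ ^ 2 = -(‖y‖^2/(8*t)) + -(1/(4*(2*t))) * ‖y‖ ^ 2 := by field_simp; ring
              rw [h6]; linarith
            calc _ ≤ ψ (p + y) ^ 2 * (Real.exp (-(C₃*β)) * Real.exp (-(1/(4*(2*t))) * ‖y‖ ^ 2)) :=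
                  mul_le_mul_of_nonneg_left h4 (sq_nonneg _)
              _ = _ := by ring
      · rw [integrable_indicator_iff measurableSet_ball]
        exact intOn_ball (by fun_prop) _ _
      · exact (hint (2*t) (by positivity)).const_mul _
    have h2 : Real.exp (-(C₃*β)) * I (2*t) ≤ Real.exp (-β) * I t := by
      calc _ ≤ Real.exp (-(C₃*β)) * (Real.exp (C₂ * β) * I t) := mul_le_mul_of_nonneg_left hIt (Real.exp_nonneg _)
        _ = _ := by
          rw [← mul_assoc, ← Real.exp_add]; congr 2; rw [hC₃]; ring
    have h3 : Real.exp (-β) ≤ 1/2 := by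
      rw [Real.exp_neg, inv_eq_one_div]
      apply one_div_le_one_div_of_le (by norm_num)
      linarith [Real.add_one_le_exp β]
    nlinarith
  refine ⟨by linarith, ?_⟩
  have h1 := hlow t (4*h) htp (by positivity)
  have e : (4*h)^2/(4*t) = 128 * C₃ * β := by
    have : h = 2 * R := by rw [hR]; ring
    rw [ht, this]; field_simp; ring
  rw [e] at h1
  have h2 : (∫ y in ball p (4*h), ψ y ^ 2) ≤ Real.exp (128 * C₃ * β) * I t := by
    rw [Real.exp_neg, inv_mul_le_iff₀ (Real.exp_pos _)] at h1
    exact h1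
  have h3 : (2:ℝ) ≤ Real.exp β := by linarith [Real.add_one_le_exp β]
  calc _ ≤ Real.exp (128 * C₃ * β) * I t := h2
    _ ≤ Real.exp (128 * C₃ * β) * (Real.exp β * ∫ y in ball p R, ψ y ^ 2) := by
        apply mul_le_mul_of_nonneg_left _ (Real.exp_nonneg _)
        nlinarith
    _ = _ := by
        rw [← mul_assoc, ← Real.exp_add]; congr 2; ring

end DoublingPart

section MaxPrinciple

def HasLap {n : ℕ} (w : EuclideanSpace ℝ (Fin n) → ℝ) (x : EuclideanSpace ℝ (Fin n)) (L : ℝ) : Prop :=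
  ∃ d : Fin n → ℝ, ∑ i, d i = L ∧ ∀ i, ∃ f' : ℝ → ℝ,
    (∀ᶠ t in nhds (0:ℝ), HasDerivAt (fun s : ℝ => w (x + s • EuclideanSpace.single i (1:ℝ))) (f' t) t) ∧
    HasDerivAt f' (d i) 0

lemma second_deriv_nonpos {f f' : ℝ → ℝ} {a : ℝ} (hf : ∀ᶠ t in nhds (0:ℝ), HasDerivAt f (f' t) t)
    (hf' : HasDerivAt f' a 0) (hm : IsLocalMax f 0) : a ≤ 0 := by
  by_contra ha
  push Not at ha
  set g : ℝ → ℝ := fun t => f t - a/4 * t^2 with hg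
  have hg' : ∀ᶠ t in nhds (0:ℝ), HasDerivAt g (f' t - a/2 * t) t := by
    filter_upwards [hf] with t ht
    have := ht.sub (((hasDerivAt_id t).pow 2).const_mul (a/4))
    refine this.congr_deriv ?_
    simp only [id]; push_cast; ring
  have hd : deriv g =ᶠ[nhds 0] fun t => f' t - a/2*t := hg'.mono fun t ht => ht.deriv
  have hdd : deriv (deriv g) 0 = a/2 := by
    rw [hd.deriv_eq]
    have := hf'.sub ((hasDerivAt_id (0:ℝ)).const_mul (a/2))
    have h2 := this.deriv
    simp only [id] at h2
    rw [show (fun t => f' t - a/2*t) = f' - fun y => a/2*y from rfl, h2]; ring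
  have h0 : f' 0 = 0 := by
    have := hm.deriv_eq_zero
    rwa [hf.self_of_nhds.deriv] at this
  have hmin := isLocalMin_of_deriv_deriv_pos (f := g) (x₀ := 0) (by rw [hdd]; linarith)
    (by rw [hd.self_of_nhds]; simp [h0]) hg'.self_of_nhds.continuousAt
  have hboth : ∀ᶠ t in nhds (0:ℝ), t = 0 := by
    filter_upwards [hmin, hm] with t h1 h2
    simp only [hg] at h1
    have : a/4*t^2 ≤ 0 := by nlinarith
    by_contra h
    have : 0 < t^2 := by positivity
    nlinarith
  have h3 : ∀ᶠ t in nhdsWithin (0:ℝ) {0}ᶜ, t = 0 := hboth.filter_mono nhdsWithin_le_nhds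
  have h4 : ∀ᶠ t in nhdsWithin (0:ℝ) {0}ᶜ, t ≠ 0 := self_mem_nhdsWithin
  obtain ⟨t, h5, h6⟩ := (h3.and h4).exists
  exact h6 h5

lemma HasLap.nonpos {n : ℕ} {w : EuclideanSpace ℝ (Fin n) → ℝ} {x : EuclideanSpace ℝ (Fin n)} {L : ℝ}
    (h : HasLap w x L) (hm : IsLocalMax w x) : L ≤ 0 := by
  obtain ⟨d, rfl, hd⟩ := h
  apply Finset.sum_nonpos
  intro i _
  obtain ⟨f', h1, h2⟩ := hd i
  refine second_deriv_nonpos h1 h2 ?_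
  have hc : Filter.Tendsto (fun s : ℝ => x + s • EuclideanSpace.single i (1:ℝ)) (nhds 0) (nhds x) := by
    have : Continuous (fun s : ℝ => x + s • EuclideanSpace.single i (1:ℝ)) := by fun_prop
    have := this.tendsto 0
    simpa using this
  have := hc.eventually hm
  simpa [IsLocalMax, IsMaxFilter] using this

lemma HasLap.add {n : ℕ} {w v : EuclideanSpace ℝ (Fin n) → ℝ} {x : EuclideanSpace ℝ (Fin n)} {L M : ℝ}
    (h : HasLap w x L) (h' : HasLap v x M) : HasLap (fun y => w y + v y) x (L + M) := by
  obtain ⟨d, rfl, hd⟩ := h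
  obtain ⟨e, rfl, he⟩ := h'
  refine ⟨fun i => d i + e i, Finset.sum_add_distrib, fun i => ?_⟩
  obtain ⟨f', h1, h2⟩ := hd i
  obtain ⟨g', h3, h4⟩ := he i
  refine ⟨fun t => f' t + g' t, ?_, h2.add h4⟩
  filter_upwards [h1, h3] with t a b using a.add b

lemma HasLap.const_mul {n : ℕ} {w : EuclideanSpace ℝ (Fin n) → ℝ} {x : EuclideanSpace ℝ (Fin n)} {L : ℝ}
    (h : HasLap w x L) (c : ℝ) : HasLap (fun y => c * w y) x (c * L) := by
  obtain ⟨d, rfl, hd⟩ := h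
  refine ⟨fun i => c * d i, (Finset.mul_sum ..).symm, fun i => ?_⟩
  obtain ⟨f', h1, h2⟩ := hd i
  refine ⟨fun t => c * f' t, ?_, h2.const_mul c⟩
  filter_upwards [h1] with t a using a.const_mul c

lemma HasLap.const {n : ℕ} (x : EuclideanSpace ℝ (Fin n)) (c : ℝ) : HasLap (fun _ => c) x 0 :=
  ⟨fun _ => 0, by simp, fun i => ⟨fun _ => 0, Filter.Eventually.of_forall fun t => hasDerivAt_const _ _, hasDerivAt_const _ _⟩⟩

lemma HasLap.sum {n : ℕ} {ι : Type} (s : Finset ι) {w : ι → EuclideanSpace ℝ (Fin n) → ℝ} {x : EuclideanSpace ℝ (Fin n)}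
    (h : ∀ i ∈ s, HasLap (w i) x 0) : HasLap (fun y => ∑ i ∈ s, w i y) x 0 := by
  classical
  induction s using Finset.induction_on with
  | empty => simpa using HasLap.const x 0
  | insert a s ha ih =>
    have h1 := (h a (Finset.mem_insert_self _ _)).add (ih fun i hi => h i (Finset.mem_insert_of_mem hi))
    simp only [Finset.sum_insert ha]
    simpa using h1

lemma hasLap_smooth {n : ℕ} {ψ : EuclideanSpace ℝ (Fin n) → ℝ} (hs : ContDiff ℝ (⊤ : ℕ∞) ψ)
    (x : EuclideanSpace ℝ (Fin n)) : HasLap ψ x (lap n ψ x) := by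
  refine ⟨_, rfl, fun i => ⟨fun t => fderiv ℝ ψ (x + t • EuclideanSpace.single i (1:ℝ)) (EuclideanSpace.single i (1:ℝ)), ?_, ?_⟩⟩
  · refine Filter.Eventually.of_forall fun t => ?_
    have h1 : HasFDerivAt ψ _ (x + t • EuclideanSpace.single i (1:ℝ)) := (hs.differentiable (by simp) _).hasFDerivAt
    have h2 : HasDerivAt (fun s : ℝ => x + s • EuclideanSpace.single i (1:ℝ)) (EuclideanSpace.single i (1:ℝ)) t := by
      have := ((hasDerivAt_id t).smul_const (EuclideanSpace.single i (1:ℝ))).const_add x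
      simpa using this
    exact h1.comp_hasDerivAt t h2
  · have hd : Differentiable ℝ (fun y => fderiv ℝ ψ y (EuclideanSpace.single i (1:ℝ))) := by
      have h := hs.fderiv_right (m := 1) (by norm_cast)
      exact (h.clm_apply contDiff_const).differentiable (by simp)
    have h1 := (hd (x + (0:ℝ) • EuclideanSpace.single i (1:ℝ))).hasFDerivAt
    have h2 : HasDerivAt (fun s : ℝ => x + s • EuclideanSpace.single i (1:ℝ)) (EuclideanSpace.single i (1:ℝ)) 0 := by
      have := ((hasDerivAt_id (0:ℝ)).smul_const (EuclideanSpace.single i (1:ℝ))).const_add x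
      simpa using this
    have h3 := h1.comp_hasDerivAt (0:ℝ) h2
    rw [zero_smul, add_zero] at h3
    exact h3

lemma normsq_line {n : ℕ} (x y : EuclideanSpace ℝ (Fin n)) (i : Fin n) (s : ℝ) :
    ‖x + s • EuclideanSpace.single i (1:ℝ) - y‖^2 = ‖x - y‖^2 + 2 * s * (x - y) i + s^2 := by
  rw [show x + s • EuclideanSpace.single i (1:ℝ) - y = (x - y) + s • EuclideanSpace.single i (1:ℝ) by abel]
  rw [norm_add_sq_real, inner_smul_right, norm_smul, mul_pow]
  simp [EuclideanSpace.inner_single_right]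
  ring

lemma normsq_line_deriv {n : ℕ} (x y : EuclideanSpace ℝ (Fin n)) (i : Fin n) (t : ℝ) :
    HasDerivAt (fun s : ℝ => ‖x + s • EuclideanSpace.single i (1:ℝ) - y‖^2) (2 * (x - y) i + 2 * t) t := by
  simp_rw [normsq_line]
  have := (((hasDerivAt_id t).const_mul 2).mul_const ((x - y) i)).const_add (‖x - y‖^2) |>.add ((hasDerivAt_id t).pow 2)
  refine this.congr_deriv ?_
  simp only [id]; push_cast; ring

lemma lin_deriv (b : ℝ) : HasDerivAt (fun t : ℝ => 2 * b + 2 * t) 2 0 := by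
  simpa using ((hasDerivAt_id (0:ℝ)).const_mul 2).const_add (2*b)

lemma hasLap_normsq {n : ℕ} (x y : EuclideanSpace ℝ (Fin n)) : HasLap (fun z => ‖z - y‖^2) x (2 * n) := by
  refine ⟨fun _ => 2, by simp [mul_comm], fun i => ⟨fun t => 2 * (x - y) i + 2 * t, ?_, lin_deriv _⟩⟩
  exact Filter.Eventually.of_forall fun t => normsq_line_deriv x y i t

lemma hasLap_green {n : ℕ} (x y : EuclideanSpace ℝ (Fin n)) (hxy : x ≠ y) :
    HasLap (fun z => (‖z - y‖^2) ^ ((2 - (n:ℝ))/2)) x 0 := by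
  set s := (2 - (n:ℝ))/2 with hs
  have hu : 0 < ‖x - y‖^2 := by have := norm_pos_iff.2 (sub_ne_zero.2 hxy); positivity
  set u := ‖x - y‖^2 with hu'
  refine ⟨fun i => s * ((s - 1) * u ^ (s - 2) * (2 * (x - y) i)^2 + u ^ (s-1) * 2), ?_, fun i =>
    ⟨fun t => s * ((‖x + t • EuclideanSpace.single i (1:ℝ) - y‖^2) ^ (s - 1) * (2 * (x - y) i + 2 * t)), ?_, ?_⟩⟩
  · rw [← Finset.mul_sum, Finset.sum_add_distrib, ← Finset.mul_sum]
    have h1 : ∑ i, (2 * (x - y) i)^2 = 4 * u := by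
      rw [hu', EuclideanSpace.norm_sq_eq, Finset.mul_sum]
      apply Finset.sum_congr rfl; intro i _; rw [Real.norm_eq_abs, sq_abs]; ring
    rw [h1]
    have h2 : u ^ (s-1) = u^(s-2) * u := by
      rw [← Real.rpow_add_one hu.ne']; congr 1; ring
    simp only [Finset.sum_const, Finset.card_univ, Fintype.card_fin, nsmul_eq_mul]
    rw [h2]
    have h3 : (n:ℝ) = 2 - 2 * s := by rw [hs]; ring
    rw [h3]; ring
  · have hc : Continuous (fun t : ℝ => ‖x + t • EuclideanSpace.single i (1:ℝ) - y‖^2) := by fun_prop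
    have : ∀ᶠ t in nhds (0:ℝ), 0 < ‖x + t • EuclideanSpace.single i (1:ℝ) - y‖^2 :=
      hc.continuousAt.eventually (lt_mem_nhds (by simpa using hu))
    filter_upwards [this] with t ht
    have := (normsq_line_deriv x y i t).rpow_const (p := s) (Or.inl ht.ne')
    convert this using 1
    ring
  · have h0 : ‖x + (0:ℝ) • EuclideanSpace.single i (1:ℝ) - y‖^2 = u := by simp [hu']
    have h1 := (normsq_line_deriv x y i 0).rpow_const (p := s-1) (Or.inl (by rw [h0]; exact hu.ne'))
    have h2 := (h1.mul (lin_deriv ((x-y) i))).const_mul s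
    rw [h0] at h2
    refine h2.congr_deriv ?_
    rw [show s - 1 - 1 = s - 2 by ring]
    ring

end MaxPrinciple

section LemmaA

lemma growth (n : ℕ) (hn : 1 ≤ n) (K₁ K₂ : ℝ) (hK₁ : 0 < K₁) (hK₂ : 0 < K₂) :
    ∃ C : ℝ, 0 < C ∧ ∀ (ψ : EuclideanSpace ℝ (Fin n) → ℝ) (lam τ β : ℝ), 0 < lam → 0 < τ →
      lam * τ ^ 2 = 1 → 1 ≤ β → Continuous ψ → ExpSum ψ lam →
      (∀ x, K₁ * (β * τ) ^ n ≤ (∫ y in ball x (β * τ), (ψ y)^2) ∧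
        (∫ y in ball x (β * τ), (ψ y)^2) ≤ K₂ * (β * τ) ^ n) →
      ∀ (p : EuclideanSpace ℝ (Fin n)) (h B : ℝ), 0 < h → h ≤ τ → ψ p = 0 →
        (∀ x ∈ ball p h, - ψ x ≤ B) →
        0 < B ∧ ∀ y ∈ closedBall p (2*h), |ψ y| ≤ Real.exp (C * β) * B := by
  obtain ⟨C, hC, H⟩ := doubling n hn K₁ K₂ hK₁ hK₂
  refine ⟨C + 8 * 2^n, by positivity, ?_⟩
  intro ψ lam τ β hlam hτ hlt hβ hc hE hK p h B hh hhτ hp hB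
  obtain ⟨hpos, hdb⟩ := H ψ lam τ β hlam hτ hlt hβ hc hE hK p h hh hhτ
  have hB0 : 0 ≤ B := by have := hB p (mem_ball_self hh); rw [hp] at this; linarith
  have hω := vol_one_pos n
  set ω := volume.real (ball (0 : EuclideanSpace ℝ (Fin n)) 1) with hωd
  have hlh : lam * h^2 ≤ 1 := by
    rw [← hlt]; exact mul_le_mul_of_nonneg_left (pow_le_pow_left₀ hh.le hhτ 2) hlam.le
  have hlh2 : lam * (h/2)^2 ≤ 1 := by nlinarith [mul_nonneg hlam.le (sq_nonneg h)]
  have hL1 : (∫ y in ball p h, |ψ y|) ≤ 2 * B * (h^n * ω) := by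
    obtain ⟨D, hD⟩ := mean_value hE
    have h0 := (hD h hh hlh).2.2 p
    rw [hp, mul_zero] at h0
    calc (∫ y in ball p h, |ψ y|) ≤ ∫ y in ball p h, (ψ y + 2 * B) := by
          apply setIntegral_mono_on (intOn_ball (by fun_prop) _ _) (intOn_ball (by fun_prop) _ _) measurableSet_ball
          intro y hy
          have := hB y hy
          rw [abs_le]; constructor <;> linarith
      _ = _ := by
          rw [integral_add (intOn_ball hc _ _) (intOn_ball continuous_const _ _), h0]
          simp [vol_ball hn p hh.le]
          ring
  have hin : ∀ x ∈ ball p (h/2), ψ x ^ 2 ≤ (4 * 2^n * B)^2 := by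
    intro x hx
    have h1 := pt_bound_l1 hn hE x (r := h/2) (by positivity) hlh2
    have h2 : (∫ y in ball x (h/2), |ψ y|) ≤ ∫ y in ball p h, |ψ y| := by
      apply setIntegral_mono_set (intOn_ball (by fun_prop) _ _)
      · exact Filter.Eventually.of_forall fun y => abs_nonneg _
      · refine HasSubset.Subset.eventuallyLE ?_
        apply ball_subset_ball'
        rw [mem_ball] at hx; linarith
    rw [vol_ball hn 0 (by positivity)] at h1
    have h3 : |ψ x| * ((h/2)^n * ω) ≤ (4 * 2^n * B) * ((h/2)^n * ω) := by
      have e : (4 * 2^n * B) * ((h/2)^n * ω) = 2 * (2 * B * (h^n * ω)) := by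
        rw [div_pow]; field_simp; ring
      rw [e]; linarith
    have h4 := le_of_mul_le_mul_right h3 (by positivity)
    rw [← sq_abs]
    exact pow_le_pow_left₀ (abs_nonneg _) h4 2
  have hI : (∫ y in ball p (h/2), ψ y ^2) ≤ (4 * 2^n * B)^2 * ((h/2)^n * ω) := by
    calc _ ≤ ∫ y in ball p (h/2), (4 * 2^n * B)^2 := by
          apply setIntegral_mono_on (intOn_ball (by fun_prop) _ _) (intOn_ball (by fun_prop) _ _) measurableSet_ball
          exact hin
      _ = _ := by
          simp [vol_ball hn p (by positivity : 0 ≤ h/2)]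
          ring
  refine ⟨?_, ?_⟩
  · rcases hB0.lt_or_eq with h1 | h1
    · exact h1
    · rw [← h1] at hI; simp at hI; linarith
  · intro y hy
    have h1 := pt_bound_l2 hn hE hc y hh hlh
    have h2 : (∫ z in ball y h, ψ z^2) ≤ ∫ z in ball p (4*h), ψ z^2 := by
      apply setIntegral_mono_set (intOn_ball (by fun_prop) _ _)
      · exact Filter.Eventually.of_forall fun y => sq_nonneg _
      · refine HasSubset.Subset.eventuallyLE ?_
        apply ball_subset_ball'
        rw [mem_closedBall] at hy; linarith
    rw [vol_ball hn 0 hh.le] at h1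
    have h3 : ψ y ^2 * (h^n * ω) ≤ (Real.exp (C*β) * (8 * 2^n * B)^2) * (h^n * ω) := by
      calc ψ y ^2 * (h^n * ω) ≤ 4 * (Real.exp (C*β) * ((4 * 2^n * B)^2 * ((h/2)^n * ω))) := by
            have := mul_le_mul_of_nonneg_left hI (Real.exp_nonneg (C*β))
            linarith
        _ ≤ 4 * (Real.exp (C*β) * ((4 * 2^n * B)^2 * (h^n * ω))) := by
            gcongr; linarith
        _ = _ := by ring
    have h4 := le_of_mul_le_mul_right h3 (by positivity)
    have hβ0 : 0 < β := by linarith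
    have h5 : Real.exp (C*β) ≤ Real.exp (C*β)^2 := by
      have : 1 ≤ Real.exp (C*β) := Real.one_le_exp (by positivity)
      nlinarith
    have h6 : ψ y^2 ≤ (Real.exp (C*β) * (8 * 2^n * B))^2 := by
      rw [mul_pow]
      exact h4.trans (mul_le_mul_of_nonneg_right h5 (sq_nonneg _))
    have h7 : |ψ y| ≤ Real.exp (C*β) * (8 * 2^n * B) := abs_le_of_sq_le_sq h6 (by positivity)
    refine h7.trans ?_
    have h8 : (8:ℝ) * 2^n ≤ Real.exp (8 * 2^n * β) := by
      have h9 := Real.add_one_le_exp (8 * 2^n * β)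
      have : (8:ℝ) * 2^n * 1 ≤ 8 * 2^n * β := mul_le_mul_of_nonneg_left hβ (by positivity)
      linarith
    rw [add_mul, Real.exp_add]
    calc _ = Real.exp (C*β) * (8*2^n) * B := by ring
      _ ≤ _ := by gcongr

lemma good_count (Q : ℕ → ℝ) (J : ℕ) (D : ℝ) (hD : 0 < D) (h0 : 0 < Q 0)
    (mono : ∀ k < J, Q k ≤ Q (k+1)) (hJ : Q J ≤ Real.exp (D * J / 2) * Q 0) :
    (J:ℝ)/2 ≤ (((Finset.range J).filter (fun k => Q (k+1) ≤ Real.exp D * Q k)).card : ℝ) := by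
  have key : ∀ m ≤ J, Real.exp (D * ((m:ℝ) - (((Finset.range m).filter (fun k => Q (k+1) ≤ Real.exp D * Q k)).card : ℝ))) * Q 0 ≤ Q m := by
    intro m
    induction m with
    | zero => simp
    | succ m ih =>
      intro hm
      have ih := ih (by omega)
      rw [Finset.range_add_one, Finset.filter_insert]
      split_ifs with hg
      · rw [Finset.card_insert_of_notMem (by simp)]
        push_cast
        refine le_trans ?_ (mono m (by omega))
        rw [add_sub_add_right_eq_sub]
        exact ih
      · push Not at hg
        push_cast
        refine le_trans ?_ hg.le
        have := mul_le_mul_of_nonneg_left ih (Real.exp_nonneg D)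
        rw [← mul_assoc, ← Real.exp_add] at this
        convert this using 3
        ring
  have h1 := (key J le_rfl).trans hJ
  have h2 := Real.exp_le_exp.1 (le_of_mul_le_mul_right h1 h0)
  set g : ℝ := (((Finset.range J).filter (fun k => Q (k+1) ≤ Real.exp D * Q k)).card : ℝ)
  have h3 : D * ((J:ℝ) - g) ≤ D * (J/2) := by linarith
  have := le_of_mul_le_mul_left h3 hD
  linarith

lemma neg_on_ball (n : ℕ) (hn : 1 ≤ n) (Λ : ℝ) (hΛ : 1 ≤ Λ) : ∃ c : ℝ, 0 < c ∧ c ≤ 1 ∧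
    ∀ (ψ : EuclideanSpace ℝ (Fin n) → ℝ) (lam : ℝ), 0 < lam → Continuous ψ → ExpSum ψ lam →
    ∀ (x₀ : EuclideanSpace ℝ (Fin n)) (s m : ℝ), 0 < s → lam * s^2 ≤ 1 → 0 < m → ψ x₀ ≤ -m →
    (∀ x ∈ ball x₀ s, - ψ x ≤ Λ * m) → ∀ x ∈ ball x₀ (c * s), ψ x < 0 := by
  have hex : ∃ c : ℝ, 0 < c ∧ c ≤ 1 ∧ Λ * ((1 + c)^n - 1) < 1/2 := by
    have hcont : Continuous fun c : ℝ => Λ * ((1 + c)^n - 1) := by fun_prop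
    have h1 : ∀ᶠ c in nhds (0:ℝ), Λ * ((1 + c)^n - 1) < 1/2 :=
      hcont.continuousAt.eventually (gt_mem_nhds (by simp))
    obtain ⟨δ, hδ, h2⟩ := Metric.eventually_nhds_iff.1 h1
    refine ⟨min 1 (δ/2), by positivity, min_le_left _ _, h2 ?_⟩
    rw [Real.dist_eq, sub_zero, abs_of_pos (by positivity)]
    exact (min_le_right _ _).trans_lt (by linarith)
  obtain ⟨c, hc0, hc1, hcΛ⟩ := hex
  refine ⟨c/2, by positivity, by linarith, ?_⟩
  intro ψ lam hlam hcont hE x₀ s m hs hls hm hx₀ hB x hx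
  obtain ⟨C, hC⟩ := mean_value hE
  set r := s/2 with hr
  have hrp : 0 < r := by positivity
  have hrd : r * (1 + c) ≤ s := by rw [hr]; nlinarith
  have hle : ∀ t, 0 < t → t ≤ s → lam * t^2 ≤ 1 := fun t ht hts =>
    (mul_le_mul_of_nonneg_left (pow_le_pow_left₀ ht.le hts 2) hlam.le).trans hls
  obtain ⟨a1, a2, a3⟩ := hC r hrp (hle r hrp (by linarith))
  obtain ⟨b1, b2, b3⟩ := hC (r*(1+c)) (by positivity) (hle _ (by positivity) hrd)
  have hω := vol_one_pos n
  rw [vol_ball hn 0 hrp.le] at a1 a2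
  rw [vol_ball hn 0 (by positivity)] at b1 b2
  have hsub : ball x r ⊆ ball x₀ (r*(1+c)) := by
    apply ball_subset_ball'
    rw [mem_ball] at hx
    have : c/2 * s = r * c := by rw [hr]; ring
    linarith
  have hI : ∫ y in ball x r, (ψ y + Λ * m) ≤ ∫ y in ball x₀ (r*(1+c)), (ψ y + Λ * m) := by
    apply setIntegral_mono_set (intOn_ball (by fun_prop) _ _)
    · rw [Filter.EventuallyLE, ae_restrict_iff' measurableSet_ball]
      refine Filter.Eventually.of_forall fun y hy => ?_
      have := hB y (ball_subset_ball hrd hy)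
      simp only [Pi.zero_apply]; linarith
    · exact hsub.eventuallyLE
  rw [integral_add (intOn_ball hcont _ _) (intOn_ball continuous_const _ _),
    integral_add (intOn_ball hcont _ _) (intOn_ball continuous_const _ _), a3, b3] at hI
  simp only [integral_const, MeasurableSet.univ, measureReal_restrict_apply, Set.univ_inter, smul_eq_mul,
    vol_ball hn x hrp.le, vol_ball hn x₀ (by positivity : 0 ≤ r * (1+c))] at hI
  set ω := volume.real (ball (0 : EuclideanSpace ℝ (Fin n)) 1) with hωd
  set W := r^n * ω with hW
  have hWp : 0 < W := by positivity
  have e : (r*(1+c))^n * ω = (1+c)^n * W := by rw [mul_pow, hW]; ring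
  rw [e] at hI b1 b2
  have h1c : (1:ℝ) ≤ (1+c)^n := one_le_pow₀ (by linarith)
  set X := (1+c)^n with hX
  by_contra hneg
  push Not at hneg
  have h1 : 0 ≤ C r * ψ x := mul_nonneg (by linarith) hneg
  have h2 : C (r*(1+c)) * ψ x₀ ≤ X * W / 2 * (-m) := by
    have hCp : 0 ≤ C (r*(1+c)) := le_trans (by positivity) b1
    calc _ ≤ C (r*(1+c)) * (-m) := mul_le_mul_of_nonneg_left hx₀ hCp
      _ ≤ _ := mul_le_mul_of_nonpos_right b1 (by linarith)
  have h3 : 0 ≤ (W * m) * (Λ * (X - 1) - X/2) := by nlinarith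
  have h4 : Λ * (X - 1) - X/2 < 0 := by linarith
  have : (W * m) * (Λ * (X - 1) - X/2) < 0 := mul_neg_of_pos_of_neg (by positivity) h4
  linarith

end LemmaA

section LemmaA2

lemma max_sphere {n : ℕ} (hn : 2 ≤ n) {ψ : EuclideanSpace ℝ (Fin n) → ℝ} {lam : ℝ} (hlam : 0 < lam)
    (hs : ContDiff ℝ (⊤ : ℕ∞) ψ) (hl : ∀ x, lap n ψ x = -lam * ψ x) (p z : EuclideanSpace ℝ (Fin n)) {r c : ℝ}
    (hc : 0 < c) (hz : z ∈ closedBall p r)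
    (hzc : - ψ z = c * (2 - lam * ‖z - p‖^2))
    (hmax : ∀ x ∈ closedBall p r, - ψ x ≤ c * (2 - lam * ‖x - p‖^2)) : ‖z - p‖ = r := by
  rw [mem_closedBall, dist_eq_norm] at hz
  rcases hz.lt_or_eq with h | h
  swap
  · exact h
  exfalso
  have hL := (((hasLap_smooth hs z).const_mul (-1)).add ((hasLap_normsq z p).const_mul (c * lam))).add
    (HasLap.const z (-(2*c)))
  have := hL.nonpos ?_
  · rw [hl] at this
    have hg2 : 0 ≤ lam * ‖z-p‖^2 := by positivity
    have hn' : (2:ℝ) ≤ n := by exact_mod_cast hn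
    have h3 : 0 < lam * c := by positivity
    have e : -1 * (-lam * ψ z) + c * lam * (2 * n) + 0 = (lam * c) * (2 * n - (2 - lam * ‖z-p‖^2)) := by
      have : ψ z = -(c * (2 - lam * ‖z - p‖^2)) := by linarith
      rw [this]; ring
    rw [e] at this
    have := mul_pos h3 (by linarith : 0 < 2 * (n:ℝ) - (2 - lam * ‖z-p‖^2))
    linarith
  · have : ball p r ∈ nhds z := isOpen_ball.mem_nhds (by rwa [mem_ball, dist_eq_norm])
    filter_upwards [this] with x hx
    have := hmax x (ball_subset_closedBall hx)
    linarith

lemma lemmaA (n : ℕ) (hn : 2 ≤ n) (K₁ K₂ : ℝ) (hK₁ : 0 < K₁) (hK₂ : 0 < K₂) :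
    ∃ c : ℝ, 0 < c ∧ c ≤ 1 ∧ ∀ (ψ : EuclideanSpace ℝ (Fin n) → ℝ) (lam τ β : ℝ), 0 < lam → 0 < τ →
      lam * τ ^ 2 = 1 → 1 ≤ β → ContDiff ℝ (⊤ : ℕ∞) ψ → (∀ x, lap n ψ x = -lam * ψ x) → ExpSum ψ lam →
      (∀ x, K₁ * (β * τ) ^ n ≤ (∫ y in ball x (β * τ), (ψ y)^2) ∧
        (∫ y in ball x (β * τ), (ψ y)^2) ≤ K₂ * (β * τ) ^ n) →
      ∀ (p : EuclideanSpace ℝ (Fin n)) (h : ℝ) (J : ℕ), 0 < h → 2 * h ≤ τ → ψ p = 0 → β ≤ J →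
        ∃ (G : Finset ℕ) (x : ℕ → EuclideanSpace ℝ (Fin n)), G ⊆ Finset.range J ∧ (J:ℝ)/2 ≤ (G.card : ℝ) ∧
          ∀ k ∈ G, ‖x k - p‖ = h * (1 + k / J) ∧ ∀ y ∈ ball (x k) (c * (h / J)), ψ y < 0 := by
  obtain ⟨C, hC, H⟩ := growth n (by omega) K₁ K₂ hK₁ hK₂
  set D := 2 * (C + 2) with hD
  obtain ⟨c, hc0, hc1, Hc⟩ := neg_on_ball n (by omega) (2 * Real.exp D) (by
    have := Real.one_le_exp (x := D) (by positivity)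
    linarith)
  refine ⟨c, hc0, hc1, ?_⟩
  intro ψ lam τ β hlam hτ hlt hβ hs hl hE hK p h J hh hhτ hp hβJ
  have hc : Continuous ψ := hs.continuous
  have hJ0 : (0:ℝ) < J := by linarith
  have hl2 : lam * (2*h)^2 ≤ 1 := by
    rw [← hlt]; exact mul_le_mul_of_nonneg_left (pow_le_pow_left₀ (by positivity) hhτ 2) hlam.le
  set g : EuclideanSpace ℝ (Fin n) → ℝ := fun x => 2 - lam * ‖x - p‖^2 with hg
  have hg1 : ∀ x ∈ closedBall p (2*h), 1 ≤ g x := by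
    intro x hx
    rw [mem_closedBall, dist_eq_norm] at hx
    have := mul_le_mul_of_nonneg_left (pow_le_pow_left₀ (norm_nonneg _) hx 2) hlam.le
    simp only [hg]; linarith
  have hg2 : ∀ x, g x ≤ 2 := by
    intro x
    have : 0 ≤ lam * ‖x - p‖^2 := by positivity
    simp only [hg]; linarith
  set r : ℕ → ℝ := fun k => h * (1 + k / J) with hr
  have hr2 : ∀ k ≤ J, r k ≤ 2*h := by
    intro k hk
    have : (k:ℝ)/J ≤ 1 := by rw [div_le_one hJ0]; exact_mod_cast hk
    simp only [hr]; nlinarith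
  have hrh : ∀ k, h ≤ r k := by
    intro k
    have : 0 ≤ (k:ℝ)/J := by positivity
    simp only [hr]; nlinarith
  have hrs : ∀ k, r (k+1) = r k + h / J := by
    intro k; simp only [hr]; push_cast; field_simp; ring
  have hex : ∀ k, ∃ z, k ≤ J → z ∈ closedBall p (r k) ∧ ∀ x ∈ closedBall p (r k), - ψ x / g x ≤ - ψ z / g z := by
    intro k
    by_cases hk : k ≤ J
    · obtain ⟨z, hz, hm⟩ := (isCompact_closedBall p (r k)).exists_isMaxOn
        (f := fun x => - ψ x / g x) ⟨p, mem_closedBall_self (hh.le.trans (hrh k))⟩ (by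
        apply ContinuousOn.div hc.neg.continuousOn
        · exact Continuous.continuousOn (by fun_prop)
        · intro x hx
          have := hg1 x (closedBall_subset_closedBall (hr2 k hk) hx)
          linarith)
      exact ⟨z, fun _ => ⟨hz, fun x hx => hm hx⟩⟩
    · exact ⟨p, fun h => absurd h hk⟩
  choose z hz using hex
  set Q : ℕ → ℝ := fun k => - ψ (z k) / g (z k) with hQ
  have hQb : ∀ k ≤ J, ∀ x ∈ closedBall p (r k), - ψ x ≤ Q k * g x := by
    intro k hk x hx
    have h1 := (hz k hk).2 x hx
    have h2 := hg1 x (closedBall_subset_closedBall (hr2 k hk) hx)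
    rwa [div_le_iff₀ (by linarith)] at h1
  have hQe : ∀ k ≤ J, - ψ (z k) = Q k * g (z k) := by
    intro k hk
    have h2 := hg1 _ (closedBall_subset_closedBall (hr2 k hk) (hz k hk).1)
    rw [hQ]; field_simp
  have hQnn : ∀ k ≤ J, 0 ≤ Q k := by
    intro k hk
    have := (hz k hk).2 p (mem_closedBall_self (hh.le.trans (hrh k)))
    rw [hp] at this; simpa using this
  have hmono : ∀ k < J, Q k ≤ Q (k+1) := by
    intro k hk
    refine (hz (k+1) hk).2 _ (closedBall_subset_closedBall ?_ (hz k hk.le).1)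
    rw [hrs]; have : 0 < h/J := by positivity
    linarith
  have hr0 : r 0 = h := by simp [hr]
  have hrJ : r J = 2*h := by simp only [hr]; rw [div_self hJ0.ne']; ring
  obtain ⟨hQ0, hgr⟩ := H ψ lam τ β hlam hτ hlt hβ hc hE hK p h (2 * Q 0) hh (by linarith) hp (by
    intro x hx
    have := hQb 0 (Nat.zero_le _) x (by rw [hr0]; exact ball_subset_closedBall hx)
    nlinarith [hg2 x, hQnn 0 (Nat.zero_le _)])
  have hQ0' : 0 < Q 0 := by linarith
  have hQJ : Q J ≤ Real.exp (D * J / 2) * Q 0 := by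
    have h1 := hz J le_rfl
    have h2 := hg1 _ (closedBall_subset_closedBall (hr2 J le_rfl) h1.1)
    rw [hrJ] at h1
    have h3 := hgr _ h1.1
    have h4 : Q J ≤ |ψ (z J)| := by
      have h5 : Q J ≤ Q J * g (z J) := le_mul_of_one_le_right (hQnn J le_rfl) h2
      rw [← hQe J le_rfl] at h5
      exact h5.trans (neg_le_abs _)
    calc Q J ≤ Real.exp (C*β) * (2 * Q 0) := h4.trans h3
      _ = (Real.exp (C*β) * 2) * Q 0 := by ring
      _ ≤ Real.exp (D * J / 2) * Q 0 := by
        apply mul_le_mul_of_nonneg_right _ hQ0'.le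
        have h6 : (2:ℝ) ≤ Real.exp (2 * J) := by
          have := Real.add_one_le_exp (2 * (J:ℝ))
          linarith
        have h7 : Real.exp (C*β) ≤ Real.exp (C * J) := Real.exp_le_exp.2 (mul_le_mul_of_nonneg_left hβJ hC.le)
        calc _ ≤ Real.exp (C*J) * Real.exp (2*J) := mul_le_mul h7 h6 (by norm_num) (Real.exp_nonneg _)
          _ = _ := by rw [← Real.exp_add]; congr 1; rw [hD]; ring
  have hcount := good_count Q J D (by positivity) hQ0' hmono hQJ
  refine ⟨_, z, Finset.filter_subset _ _, hcount, ?_⟩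
  intro k hk
  rw [Finset.mem_filter, Finset.mem_range] at hk
  obtain ⟨hkJ, hgood⟩ := hk
  have hQpos : ∀ k ≤ J, 0 < Q k := by
    intro k
    induction k with
    | zero => intro _; exact hQ0'
    | succ k ih => intro hk; exact (ih (by omega)).trans_le (hmono k hk)
  have hnorm : ‖z k - p‖ = r k :=
    max_sphere hn hlam hs hl p (z k) (hQpos k hkJ.le) (hz k hkJ.le).1 (hQe k hkJ.le) (hQb k hkJ.le)
  refine ⟨hnorm, ?_⟩
  have hsJ : h / J ≤ h := div_le_self hh.le (by linarith)
  apply Hc ψ lam hlam hc hE (z k) (h/J) (Q k) (by positivity) ?_ (hQpos k hkJ.le) ?_ ?_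
  · refine le_trans (mul_le_mul_of_nonneg_left (pow_le_pow_left₀ (by positivity) ?_ 2) hlam.le) hl2
    linarith
  · have h1 := hQe k hkJ.le
    have h2 := hg1 _ (closedBall_subset_closedBall (hr2 k hkJ.le) (hz k hkJ.le).1)
    nlinarith [hQpos k hkJ.le]
  · intro x hx
    have hx' : x ∈ closedBall p (r (k+1)) := by
      rw [mem_closedBall, hrs]
      rw [mem_ball] at hx
      have := dist_triangle x (z k) p
      rw [dist_eq_norm (z k) p, hnorm] at this
      linarith
    have h1 := hQb (k+1) hkJ x hx'
    have h2 := hg2 x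
    calc - ψ x ≤ Q (k+1) * g x := h1
      _ ≤ Q (k+1) * 2 := mul_le_mul_of_nonneg_left h2 (hQnn _ hkJ)
      _ ≤ (Real.exp D * Q k) * 2 := by linarith
      _ = _ := by ring

end LemmaA2

section Barrier

lemma one_side_sum (J : ℕ) : ∀ ρ : ℝ, ∑ k ∈ Finset.range J, (if ρ ≤ (k:ℝ) then 1 / (1 + ((k:ℝ) - ρ)) else 0)
    ≤ ∑ k ∈ Finset.range J, 1 / (1 + (k:ℝ)) := by
  induction J with
  | zero => intro ρ; simp
  | succ J ih =>
    intro ρ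
    rcases le_or_gt ρ 0 with h | h
    · apply Finset.sum_le_sum
      intro k _
      have hk : (0:ℝ) ≤ k := Nat.cast_nonneg k
      rw [if_pos (by linarith)]
      apply one_div_le_one_div_of_le (by linarith)
      linarith
    · rw [Finset.sum_range_succ' , Finset.sum_range_succ]
      have h0 : (if ρ ≤ ((0:ℕ):ℝ) then 1 / (1 + (((0:ℕ):ℝ) - ρ)) else 0) = 0 := by
        rw [if_neg]; push_cast; linarith
      rw [h0, add_zero]
      have h1 := ih (ρ - 1)
      have h2 : (0:ℝ) ≤ 1 / (1 + (J:ℝ)) := by positivity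
      refine le_trans (le_of_eq ?_) (h1.trans (le_add_of_nonneg_right h2))
      apply Finset.sum_congr rfl
      intro k _
      have e : ((k+1:ℕ):ℝ) - ρ = k - (ρ - 1) := by push_cast; ring
      have e2 : (ρ ≤ ((k+1:ℕ):ℝ)) ↔ ρ - 1 ≤ k := by push_cast; constructor <;> intro h <;> linarith
      rw [e]; simp only [e2]

lemma two_side_sum (J : ℕ) (ρ : ℝ) : ∑ k ∈ Finset.range J, 1 / (1 + |(k:ℝ) - ρ|)
    ≤ 2 * ∑ k ∈ Finset.range J, 1 / (1 + (k:ℝ)) := by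
  have h1 := one_side_sum J ρ
  have h2 := one_side_sum J ((J:ℝ) - 1 - ρ)
  rw [← Finset.sum_range_reflect] at h2
  rw [two_mul]
  refine le_trans ?_ (add_le_add h1 h2)
  rw [← Finset.sum_add_distrib]
  apply Finset.sum_le_sum
  intro k hk
  rw [Finset.mem_range] at hk
  have e : ((J - 1 - k : ℕ) : ℝ) = J - 1 - k := by
    rw [Nat.cast_sub (by omega), Nat.cast_sub (by omega)]; simp
  rw [e]
  rcases le_total ρ k with h | h
  · rw [if_pos h, abs_of_nonneg (by linarith)]
    apply le_add_of_nonneg_right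
    split_ifs with h3
    · apply div_nonneg zero_le_one; linarith
    · exact le_rfl
  · rw [if_pos (by linarith : (J:ℝ) - 1 - ρ ≤ J - 1 - k), abs_of_nonpos (by linarith)]
    rw [show (J:ℝ) - 1 - k - (J - 1 - ρ) = -(k - ρ) by ring]
    apply le_add_of_nonneg_left
    split_ifs with h3
    · apply div_nonneg zero_le_one; linarith
    · exact le_rfl

lemma harm_le (n J : ℕ) (hn : 1 ≤ n) (hJ : 1 ≤ J) :
    ∑ k ∈ Finset.range J, 1 / (1 + (k:ℝ)) ≤ (1 + n/2) * (J:ℝ)^((2:ℝ)/n) := by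
  have h1 := harmonic_le_one_add_log J
  have e : ((harmonic J : ℚ) : ℝ) = ∑ k ∈ Finset.range J, 1 / (1 + (k:ℝ)) := by
    rw [harmonic]; push_cast
    apply Finset.sum_congr rfl; intro k _; rw [one_div, add_comm]
  rw [e] at h1
  have hn' : (0:ℝ) < n := by exact_mod_cast hn
  have hJ' : (1:ℝ) ≤ J := by exact_mod_cast hJ
  have h2 := Real.log_le_rpow_div (x := (J:ℝ)) (by linarith) (ε := (2:ℝ)/n) (by positivity)
  have h3 : (1:ℝ) ≤ (J:ℝ)^((2:ℝ)/n) := Real.one_le_rpow hJ' (by positivity)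
  have e2 : (J:ℝ)^((2:ℝ)/n) / (2/n) = n/2 * (J:ℝ)^((2:ℝ)/n) := by field_simp
  rw [e2] at h2
  linarith

lemma barrier_bound {n : ℕ} (hn : 3 ≤ n) {c : ℝ} (hc0 : 0 < c) (hc1 : c ≤ 1) (G : Finset ℕ) (J : ℕ) (hJ : 1 ≤ J)
    (hG : G ⊆ Finset.range J) (x : ℕ → EuclideanSpace ℝ (Fin n)) (p z : EuclideanSpace ℝ (Fin n)) {h : ℝ} (hh : 0 < h)
    (hx : ∀ k ∈ G, ‖x k - p‖ = h * (1 + k / J)) (hz : ∀ k ∈ G, c * (h / J) ≤ ‖z - x k‖) :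
    ∑ k ∈ G, (‖z - x k‖^(n-2))⁻¹ ≤ (4 * (1 + n/2) * (c^(n-2))⁻¹) * (J:ℝ)^((2:ℝ)/n) * ((h/J)^(n-2))⁻¹ := by
  have hJ0 : (0:ℝ) < J := by exact_mod_cast hJ
  set s := h / J with hs
  have hsp : 0 < s := by positivity
  set ρ := (‖z - p‖ / h - 1) * J with hρ
  obtain ⟨m, rfl⟩ : ∃ m, n = m + 3 := ⟨n - 3, by omega⟩
  rw [show m + 3 - 2 = m + 1 by omega]
  have hterm : ∀ k ∈ G, (‖z - x k‖^(m+1))⁻¹ ≤ (2 * (c^(m+1))⁻¹ * (s^(m+1))⁻¹) * (1 / (1 + |(k:ℝ) - ρ|)) := by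
    intro k hk
    have h1 := hz k hk
    have h2 : s * |(k:ℝ) - ρ| ≤ ‖z - x k‖ := by
      have h3 := abs_norm_sub_norm_le (x k - p) (z - p)
      rw [hx k hk, sub_sub_sub_cancel_right, norm_sub_rev (x k) z] at h3
      have e : h * (1 + k/J) - ‖z - p‖ = s * (k - ρ) := by rw [hs, hρ]; field_simp; ring
      rwa [e, abs_mul, abs_of_pos hsp] at h3
    set a := ‖z - x k‖
    set t := |(k:ℝ) - ρ|
    have ht : 0 ≤ t := abs_nonneg _
    have h4 : c * s * (1 + t) ≤ 2 * a := by
      have : c * (s * t) ≤ s * t := mul_le_of_le_one_left (by positivity) hc1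
      linarith
    have hap : 0 < a := lt_of_lt_of_le (by positivity) h1
    have h5 : (c * s)^(m+1) * (1 + t) ≤ 2 * a^(m+1) := by
      rw [pow_succ, pow_succ]
      have h6 : (c*s)^m ≤ a^m := pow_le_pow_left₀ (by positivity) h1 m
      calc (c*s)^m * (c*s) * (1+t) = (c*s)^m * (c*s*(1+t)) := by ring
        _ ≤ a^m * (2 * a) := mul_le_mul h6 h4 (by positivity) (by positivity)
        _ = _ := by ring
    rw [show (2 * (c^(m+1))⁻¹ * (s^(m+1))⁻¹) * (1 / (1 + t)) = 2 / ((c*s)^(m+1) * (1+t)) by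
      rw [mul_pow]; field_simp]
    rw [inv_eq_one_div, div_le_div_iff₀ (by positivity) (by positivity)]
    linarith
  calc _ ≤ ∑ k ∈ G, (2 * (c^(m+1))⁻¹ * (s^(m+1))⁻¹) * (1 / (1 + |(k:ℝ) - ρ|)) := Finset.sum_le_sum hterm
    _ ≤ ∑ k ∈ Finset.range J, (2 * (c^(m+1))⁻¹ * (s^(m+1))⁻¹) * (1 / (1 + |(k:ℝ) - ρ|)) :=
        Finset.sum_le_sum_of_subset_of_nonneg hG fun k _ _ => by positivity
    _ = (2 * (c^(m+1))⁻¹ * (s^(m+1))⁻¹) * ∑ k ∈ Finset.range J, (1 / (1 + |(k:ℝ) - ρ|)) := by rw [Finset.mul_sum]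
    _ ≤ (2 * (c^(m+1))⁻¹ * (s^(m+1))⁻¹) * (2 * ((1 + (m+3:ℕ)/2) * (J:ℝ)^((2:ℝ)/(m+3:ℕ)))) := by
        apply mul_le_mul_of_nonneg_left _ (by positivity)
        have := two_side_sum J ρ
        have := harm_le (m+3) J (by omega) hJ
        linarith
    _ = _ := by ring

lemma green_eq {n : ℕ} (hn : 2 ≤ n) {a : ℝ} (ha : 0 ≤ a) : (a^2) ^ ((2 - (n:ℝ))/2) = (a^(n-2))⁻¹ := by
  rw [← Real.rpow_natCast a 2, ← Real.rpow_mul ha, ← Real.rpow_natCast, ← Real.rpow_neg ha]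
  congr 1
  rw [Nat.cast_sub hn]; push_cast; ring

end Barrier

section KeyEstimate

set_option maxHeartbeats 1000000 in
lemma key_estimate (n : ℕ) (hn : 3 ≤ n) (K₁ K₂ : ℝ) (hK₁ : 0 < K₁) (hK₂ : 0 < K₂) :
    ∃ C : ℝ, 0 < C ∧ ∀ (ψ : EuclideanSpace ℝ (Fin n) → ℝ) (lam τ β : ℝ), 0 < lam → 0 < τ →
      lam * τ ^ 2 = 1 → 1 ≤ β → ContDiff ℝ (⊤ : ℕ∞) ψ → (∀ x, lap n ψ x = -lam * ψ x) → ExpSum ψ lam →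
      (∀ x, K₁ * (β * τ) ^ n ≤ (∫ y in ball x (β * τ), (ψ y)^2) ∧
        (∫ y in ball x (β * τ), (ψ y)^2) ≤ K₂ * (β * τ) ^ n) →
      ∀ (Ω : Set (EuclideanSpace ℝ (Fin n))) (h : ℝ) (J : ℕ), 0 < h → 20 * h ≤ τ → β ≤ J →
        IsOpen Ω → Ω.Nonempty → (∀ x ∈ Ω, 0 < ψ x) → (∀ z ∈ closure Ω, z ∉ Ω → ψ z = 0) →
        (∀ x ∈ Ω, ∃ p ∈ ball x h, ψ p = 0) → BddAbove (ψ '' Ω) →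
        (J:ℝ) ^ (-(((n:ℝ) - 1) * ((n:ℝ) - 2) / n)) < C * (lam * h^2) := by
  obtain ⟨c, hc0, hc1, H⟩ := lemmaA n (by omega) K₁ K₂ hK₁ hK₂
  set N := n - 2 with hN
  set C₇ := 4 * (1 + (n:ℝ)/2) * (c^N)⁻¹ with hC₇
  have hC₇p : 0 < C₇ := by positivity
  refine ⟨8 * 82 * C₇ * 3^N, by positivity, ?_⟩
  intro ψ lam τ β hlam hτ hlt hβ hs hl hE hK Ω h J hh hhτ hβJ hΩo hΩne hpos hbd hball hbdd
  have hcont : Continuous ψ := hs.continuous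
  set δ := lam * h^2 with hδ
  have hδp : 0 < δ := by positivity
  have hδ1 : δ ≤ 1/400 := by
    have h1 : (20*h)^2 ≤ τ^2 := pow_le_pow_left₀ (by positivity) hhτ 2
    have := mul_le_mul_of_nonneg_left h1 hlam.le
    rw [hlt] at this
    rw [hδ]; linarith
  set M := sSup (ψ '' Ω) with hM
  have hle : ∀ x ∈ Ω, ψ x ≤ M := fun x hx => le_csSup hbdd ⟨x, hx, rfl⟩
  have hMp : 0 < M := by
    obtain ⟨x, hx⟩ := hΩne
    exact (hpos x hx).trans_le (hle x hx)
  obtain ⟨_, ⟨x₀, hx₀, rfl⟩, hx₀M⟩ := exists_lt_of_lt_csSup (hΩne.image ψ) (show M - δ * M < sSup (ψ '' Ω) by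
    rw [← hM]; have := mul_pos hδp hMp; linarith)
  obtain ⟨p, hp, hp0⟩ := hball x₀ hx₀
  obtain ⟨G, x, hG, hGc, hx⟩ := H ψ lam τ β hlam hτ hlt hβ hs hl hE hK p h J hh (by linarith) hp0 hβJ
  have hJ0 : (0:ℝ) < J := by linarith
  have hJ1 : 1 ≤ J := by exact_mod_cast (hβ.trans hβJ)
  have hnn : ∀ y ∈ closure Ω, 0 ≤ ψ y := by
    intro y hy
    by_cases hyΩ : y ∈ Ω
    · exact (hpos y hyΩ).le
    · exact (hbd y hy hyΩ).ge
  have hle' : ∀ y ∈ closure Ω, ψ y ≤ M := by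
    intro y hy
    by_cases hyΩ : y ∈ Ω
    · exact hle y hyΩ
    · rw [hbd y hy hyΩ]; exact hMp.le
  have hfar : ∀ y ∈ closure Ω, ∀ k ∈ G, c * (h/J) ≤ ‖y - x k‖ := by
    intro y hy k hk
    by_contra hlt
    push Not at hlt
    have := (hx k hk).2 y (by rwa [mem_ball, dist_eq_norm])
    linarith [hnn y hy]
  have hfar' : ∀ y ∈ closure Ω, ∀ k ∈ G, y ≠ x k := by
    intro y hy k hk he
    have := hfar y hy k hk
    rw [he, sub_self, norm_zero] at this
    have : 0 < c * (h/J) := by positivity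
    linarith
  set v : EuclideanSpace ℝ (Fin n) → ℝ := fun y => ∑ k ∈ G, (‖y - x k‖^2) ^ ((2 - (n:ℝ))/2) with hv
  have hv' : ∀ y, v y = ∑ k ∈ G, (‖y - x k‖^N)⁻¹ := by
    intro y
    apply Finset.sum_congr rfl
    intro k _
    exact green_eq (by omega) (norm_nonneg _)
  set P := (J:ℝ)^((2:ℝ)/n) with hP
  have hPp : 0 < P := by positivity
  have hvK : ∀ y ∈ closure Ω, v y ≤ C₇ * P * ((h/J)^N)⁻¹ := by
    intro y hy
    rw [hv']
    exact barrier_bound hn hc0 hc1 G J hJ1 hG x p y hh (fun k hk => (hx k hk).1) (hfar y hy)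
  set κ := M / (2 * (C₇ * P * ((h/J)^N)⁻¹)) with hκ
  have hκp : 0 < κ := by positivity
  have hκv : ∀ y ∈ closure Ω, κ * v y ≤ M / 2 := by
    intro y hy
    calc κ * v y ≤ κ * (C₇ * P * ((h/J)^N)⁻¹) := mul_le_mul_of_nonneg_left (hvK y hy) hκp.le
      _ = M/2 := by rw [hκ]; field_simp
  set w : EuclideanSpace ℝ (Fin n) → ℝ := fun y => (ψ y + κ * v y) + (lam * M) * ‖y - x₀‖^2 with hw
  have hxk : ∀ k ∈ G, ‖x k - x₀‖ ≤ 3 * h := by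
    intro k hk
    have h1 := (hx k hk).1
    have hkJ : (k:ℝ)/J ≤ 1 := by
      rw [div_le_one hJ0]
      exact_mod_cast (Finset.mem_range.1 (hG hk)).le
    have h2 : ‖x k - p‖ ≤ 2 * h := by rw [h1]; nlinarith
    have h3 : ‖p - x₀‖ ≤ h := by rw [mem_ball, dist_eq_norm] at hp; exact hp.le
    have := norm_sub_le_norm_sub_add_norm_sub (x k) p x₀
    linarith
  set g : ℝ := (G.card : ℝ) with hg
  have hvx₀ : g * ((3*h)^N)⁻¹ ≤ v x₀ := by
    rw [hv', hg, ← nsmul_eq_mul]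
    apply Finset.card_nsmul_le_sum
    intro k hk
    have h1 := hxk k hk
    rw [norm_sub_rev] at h1
    have h2 : 0 < ‖x₀ - x k‖ := norm_pos_iff.2 (sub_ne_zero.2 (hfar' x₀ (subset_closure hx₀) k hk))
    exact inv_anti₀ (by positivity) (pow_le_pow_left₀ h2.le h1 N)
  have hwx₀ : M - δ * M + κ * (g * ((3*h)^N)⁻¹) < w x₀ := by
    have := mul_le_mul_of_nonneg_left hvx₀ hκp.le
    simp only [hw, sub_self, norm_zero]
    linarith
  obtain ⟨z, ⟨hzΩ, hzB⟩, hzmax⟩ := ((isCompact_closedBall x₀ (9*h)).inter_left isClosed_closure).exists_isMaxOn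
    (f := w) ⟨x₀, subset_closure hx₀, mem_closedBall_self (by positivity)⟩ (by
      apply ContinuousOn.add
      · apply ContinuousOn.add hcont.continuousOn
        apply ContinuousOn.mul continuousOn_const
        apply continuousOn_finsetSum
        intro k hk
        apply ContinuousOn.rpow_const
        · exact Continuous.continuousOn (by fun_prop)
        · intro y hy
          left
          have := norm_pos_iff.2 (sub_ne_zero.2 (hfar' y hy.1 k hk))
          positivity
      · exact Continuous.continuousOn (by fun_prop))
  have hzx₀ : w x₀ ≤ w z := hzmax ⟨subset_closure hx₀, mem_closedBall_self (by positivity)⟩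
  rw [mem_closedBall, dist_eq_norm] at hzB
  have hlz : (lam * M) * ‖z - x₀‖^2 ≤ 81 * δ * M := by
    calc (lam * M) * ‖z - x₀‖^2 ≤ (lam * M) * (9*h)^2 :=
          mul_le_mul_of_nonneg_left (pow_le_pow_left₀ (norm_nonneg _) hzB 2) (by positivity)
      _ = _ := by rw [hδ]; ring
  have hgnn : 0 ≤ κ * (g * ((3*h)^N)⁻¹) := by positivity
  by_cases hzin : z ∈ Ω
  swap
  · exfalso
    have h1 := hbd z hzΩ hzin
    have h2 : w z ≤ M/2 + 81 * δ * M := by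
      have := hκv z hzΩ
      simp only [hw, h1]; linarith
    have h3 : δ * M ≤ 1/400 * M := mul_le_mul_of_nonneg_right hδ1 hMp.le
    linarith
  rcases hzB.lt_or_eq with hzlt | hzeq
  · exfalso
    have hL := ((hasLap_smooth hs z).add ((HasLap.sum G fun k hk => hasLap_green z (x k) (hfar' z hzΩ k hk)).const_mul κ)).add
      ((hasLap_normsq z x₀).const_mul (lam * M))
    have hloc : IsLocalMax w z := by
      have h1 : Ω ∈ nhds z := hΩo.mem_nhds hzin
      have h2 : ball x₀ (9*h) ∈ nhds z := isOpen_ball.mem_nhds (by rwa [mem_ball, dist_eq_norm])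
      filter_upwards [h1, h2] with y hy1 hy2
      exact hzmax ⟨subset_closure hy1, ball_subset_closedBall hy2⟩
    have h3 := hL.nonpos hloc
    rw [hl, mul_zero, add_zero] at h3
    have h4 := mul_le_mul_of_nonneg_left (hle z hzin) hlam.le
    have hn' : (3:ℝ) ≤ n := by exact_mod_cast hn
    have h5 : 0 < lam * M := by positivity
    have h6 : lam * M * (2 * 3) ≤ lam * M * (2 * n) := mul_le_mul_of_nonneg_left (by linarith) h5.le
    linarith
  · have hN1 : 1 ≤ N := by omega
    have hvz : v z ≤ g * (((3*h)^N)⁻¹ / 2) := by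
      rw [hv', hg, ← nsmul_eq_mul]
      apply Finset.sum_le_card_nsmul
      intro k hk
      have h1 := hxk k hk
      have h2 : 6 * h ≤ ‖z - x k‖ := by
        have := norm_sub_le_norm_sub_add_norm_sub z (x k) x₀
        linarith
      have h3 : 2 * (3*h)^N ≤ ‖z - x k‖^N := by
        calc 2 * (3*h)^N ≤ 2^N * (3*h)^N := by
              apply mul_le_mul_of_nonneg_right _ (by positivity)
              exact le_self_pow₀ (by norm_num) (by omega)
          _ = (6*h)^N := by rw [← mul_pow]; congr 1; ring
          _ ≤ _ := pow_le_pow_left₀ (by positivity) h2 N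
      calc (‖z - x k‖^N)⁻¹ ≤ (2 * (3*h)^N)⁻¹ := inv_anti₀ (by positivity) h3
        _ = _ := by rw [mul_inv]; ring
    have h1 : w z ≤ M + κ * (g * (((3*h)^N)⁻¹ / 2)) + 81 * δ * M := by
      have := mul_le_mul_of_nonneg_left hvz hκp.le
      have := hle z hzin
      simp only [hw]; linarith
    have h2 : κ * (g * ((3*h)^N)⁻¹) < 164 * δ * M := by
      have : κ * (g * (((3*h)^N)⁻¹ / 2)) = κ * (g * ((3*h)^N)⁻¹) / 2 := by ring
      linarith
    have h3 : κ * ((J:ℝ)/2 * ((3*h)^N)⁻¹) < 164 * δ * M := by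
      refine lt_of_le_of_lt ?_ h2
      gcongr
    have h4 : κ * ((J:ℝ)/2 * ((3*h)^N)⁻¹) = (M / (4 * C₇ * 3^N)) * (J * (P * J^N)⁻¹) := by
      rw [hκ, mul_pow, div_pow]; field_simp; norm_num
    rw [h4] at h3
    have h5 : (J:ℝ) ^ (-(((n:ℝ) - 1) * ((n:ℝ) - 2) / n)) = J * (P * J^N)⁻¹ := by
      rw [hP, ← Real.rpow_natCast, ← Real.rpow_add hJ0, ← Real.rpow_neg hJ0.le]
      nth_rewrite 2 [← Real.rpow_one (J:ℝ)]
      rw [← Real.rpow_add hJ0]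
      congr 1
      rw [hN, Nat.cast_sub (by omega)]
      have : (n:ℝ) ≠ 0 := by positivity
      push_cast
      field_simp
      ring
    rw [h5]
    have h6 : (M / (4 * C₇ * 3^N)) * (J * (P * J^N)⁻¹) < (M / (4 * C₇ * 3^N)) * (8 * 82 * C₇ * 3 ^ N * δ) := by
      refine h3.trans_le (le_of_eq ?_)
      field_simp; norm_num
    exact lt_of_mul_lt_mul_left h6 (by positivity)

end KeyEstimate

section MainPart

lemma translate_mem {n : ℕ} {ψ : EuclideanSpace ℝ (Fin n) → ℝ} (hp : ZnPeriodic n ψ)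
    (y c : EuclideanSpace ℝ (Fin n)) : ∃ y', ‖y' - c‖ ≤ n ∧ ψ y' = ψ y := by
  refine ⟨_, ?_, hp y (fun i => ⌊c i - y i⌋)⟩
  set u : EuclideanSpace ℝ (Fin n) := (WithLp.toLp 2 (fun i => y i + ((⌊c i - y i⌋ : ℤ) : ℝ)) : EuclideanSpace ℝ (Fin n)) - c with hu
  have hc : ∀ i, |u i| ≤ 1 := by
    intro i
    have h1 := Int.floor_le (c i - y i)
    have h2 := Int.lt_floor_add_one (c i - y i)
    have : u i = y i + ((⌊c i - y i⌋ : ℤ) : ℝ) - c i := by rw [hu]; simp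
    rw [this, abs_le]; constructor <;> linarith
  have h3 : ‖u‖^2 ≤ n := by
    rw [EuclideanSpace.norm_sq_eq]
    calc _ ≤ ∑ i : Fin n, (1:ℝ) := by
          apply Finset.sum_le_sum
          intro i _
          rw [Real.norm_eq_abs]
          exact pow_le_one₀ (abs_nonneg _) (hc i)
      _ = n := by simp
  have h4 : (n:ℝ) ≤ (n:ℝ)^2 := by
    rcases Nat.eq_zero_or_pos n with h | h
    · subst h; simp
    · have : (1:ℝ) ≤ n := by exact_mod_cast h
      nlinarith
  exact le_of_sq_le_sq (h3.trans h4) (by positivity)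

lemma bdd_of_periodic {n : ℕ} {ψ : EuclideanSpace ℝ (Fin n) → ℝ} (hc : Continuous ψ) (hp : ZnPeriodic n ψ)
    (Ω : Set (EuclideanSpace ℝ (Fin n))) : BddAbove (ψ '' Ω) := by
  obtain ⟨B, hB⟩ := ((isCompact_closedBall (0 : EuclideanSpace ℝ (Fin n)) n).image hc).bddAbove
  refine ⟨B, ?_⟩
  rintro _ ⟨y, _, rfl⟩
  obtain ⟨y', h1, h2⟩ := translate_mem hp y 0
  rw [← h2]
  exact hB ⟨y', by rwa [mem_closedBall, dist_eq_norm], rfl⟩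

lemma not_everywhere_pos {n : ℕ} {ψ : EuclideanSpace ℝ (Fin n) → ℝ} {lam : ℝ} (hlam : 0 < lam)
    (hs : ContDiff ℝ (⊤ : ℕ∞) ψ) (hl : ∀ x, lap n ψ x = -lam * ψ x) (hp : ZnPeriodic n ψ)
    (hpos : ∀ x, 0 < ψ x) : False := by
  obtain ⟨z, _, hz⟩ := (isCompact_closedBall (0 : EuclideanSpace ℝ (Fin n)) n).exists_isMinOn
    (f := ψ) ⟨0, mem_closedBall_self (by positivity)⟩ hs.continuous.continuousOn
  have hmin : ∀ y, ψ z ≤ ψ y := by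
    intro y
    obtain ⟨y', h1, h2⟩ := translate_mem hp y 0
    rw [← h2]
    exact hz (by rwa [mem_closedBall, dist_eq_norm])
  have := ((hasLap_smooth hs z).const_mul (-1)).nonpos (Filter.Eventually.of_forall fun y => by
    have := hmin y
    linarith)
  rw [hl] at this
  have := mul_pos hlam (hpos z)
  linarith

lemma pos_on_component {n : ℕ} {ψ : EuclideanSpace ℝ (Fin n) → ℝ} (hc : Continuous ψ)
    {x : EuclideanSpace ℝ (Fin n)} (hx : 0 < ψ x) :
    ∀ y ∈ connectedComponentIn {y | ψ y ≠ 0} x, 0 < ψ y := by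
  intro y hy
  by_contra h
  push Not at h
  have hmem : x ∈ connectedComponentIn {y | ψ y ≠ 0} x := mem_connectedComponentIn hx.ne'
  obtain ⟨u, hu, hu0⟩ := isPreconnected_connectedComponentIn.intermediate_value hy hmem hc.continuousOn ⟨h, hx.le⟩
  exact connectedComponentIn_subset _ _ hu hu0

lemma bdry_component {n : ℕ} {ψ : EuclideanSpace ℝ (Fin n) → ℝ} (hc : Continuous ψ)
    (x : EuclideanSpace ℝ (Fin n)) :
    ∀ z ∈ closure (connectedComponentIn {y | ψ y ≠ 0} x), z ∉ connectedComponentIn {y | ψ y ≠ 0} x → ψ z = 0 := by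
  intro z hz hzn
  by_contra h
  have hU : IsOpen {y | ψ y ≠ 0} := isOpen_ne_fun hc continuous_const
  have h1 : IsOpen (connectedComponentIn {y | ψ y ≠ 0} z) := hU.connectedComponentIn
  have hmem : z ∈ connectedComponentIn {y | ψ y ≠ 0} z := mem_connectedComponentIn h
  obtain ⟨u, hu1, hu2⟩ := mem_closure_iff.1 hz _ h1 hmem
  have e1 := connectedComponentIn_eq hu1
  have e2 := connectedComponentIn_eq hu2
  rw [e2, ← e1] at hzn
  exact hzn hmem

lemma main_pos (n : ℕ) (hn : 3 ≤ n) (ε : ℝ) (K₁ K₂ : ℝ) (hK₁ : 0 < K₁) (hK₂ : 0 < K₂) (hε : 0 < ε) :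
    ∃ a₁ : ℝ, 0 < a₁ ∧
      ∀ (ψ : EuclideanSpace ℝ (Fin n) → ℝ) (lam : ℝ),
        0 < lam → ContDiff ℝ (⊤ : ℕ∞) ψ → ZnPeriodic n ψ →
        (∀ x, lap n ψ x = -lam * ψ x) →
        (∀ x : EuclideanSpace ℝ (Fin n),
          K₁ * (lam ^ (-(1:ℝ)/2 + ε)) ^ n ≤
            (∫ y in Metric.ball x (lam ^ (-(1:ℝ)/2 + ε)), (ψ y)^2) ∧
          (∫ y in Metric.ball x (lam ^ (-(1:ℝ)/2 + ε)), (ψ y)^2) ≤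
            K₂ * (lam ^ (-(1:ℝ)/2 + ε)) ^ n) →
        ∀ x₁, 0 < ψ x₁ →
          a₁ * lam ^ (-(1:ℝ)/2 - ε * ((n:ℝ)-1)*((n:ℝ)-2)/(2*(n:ℝ))) ≤
            innerRadius (connectedComponentIn {y | ψ y ≠ 0} x₁) := by
  obtain ⟨C, hC, H⟩ := key_estimate n hn K₁ K₂ hK₁ hK₂
  set E := ((n:ℝ) - 1) * ((n:ℝ) - 2) / n with hE
  have hn' : (3:ℝ) ≤ n := by exact_mod_cast hn
  have hE0 : 0 ≤ E := by
    apply div_nonneg (mul_nonneg _ _) <;> linarith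
  set A := C * 2^E with hA
  have hAp : 0 < A := by positivity
  set a := 1 / (20 + A) with ha
  have hap : 0 < a := by positivity
  refine ⟨a, hap, ?_⟩
  intro ψ lam hlam hs hp hl hK x₁ hx₁
  have hlam1 : 1 ≤ lam := eig_ge_one hlam hs hp hl x₁ hx₁.ne'
  have hc := hs.continuous
  set τ := lam ^ (-(1:ℝ)/2) with hτ
  set β := lam ^ ε with hβ
  have hτp : 0 < τ := by positivity
  have hβ1 : 1 ≤ β := Real.one_le_rpow hlam1 hε.le
  have hβτ : lam ^ (-(1:ℝ)/2 + ε) = β * τ := by rw [Real.rpow_add hlam, mul_comm]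
  have hlt : lam * τ^2 = 1 := by
    rw [hτ, ← Real.rpow_natCast, ← Real.rpow_mul hlam.le]
    nth_rewrite 1 [← Real.rpow_one lam]
    rw [← Real.rpow_add hlam]; norm_num
  have hexp : lam ^ (-(1:ℝ)/2 - ε * ((n:ℝ)-1)*((n:ℝ)-2)/(2*(n:ℝ))) = τ * β ^ (-(E/2)) := by
    rw [hτ, hβ, ← Real.rpow_mul hlam.le, ← Real.rpow_add hlam]
    congr 1
    rw [hE]; field_simp; ring
  rw [hexp]
  set Ω := connectedComponentIn {y | ψ y ≠ 0} x₁ with hΩ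
  set h := a * (τ * β ^ (-(E/2))) with hh
  have hhp : 0 < h := by positivity
  have hposΩ := pos_on_component hc hx₁
  have hbddR : BddAbove {ρ : ℝ | 0 < ρ ∧ ∃ c, Metric.ball c ρ ⊆ Ω} := by
    refine ⟨n, ?_⟩
    rintro ρ ⟨_, c, hcΩ⟩
    by_contra hlt
    push Not at hlt
    apply not_everywhere_pos hlam hs hl hp
    intro y
    obtain ⟨y', h1, h2⟩ := translate_mem hp y c
    rw [← h2]
    exact hposΩ _ (hcΩ (by rw [mem_ball, dist_eq_norm]; linarith))
  by_contra hcon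
  push Not at hcon
  have hzero : ∀ x ∈ Ω, ∃ p ∈ ball x h, ψ p = 0 := by
    intro x hx
    by_contra hno
    push Not at hno
    have hsub : ball x h ⊆ Ω := by
      have h1 : ball x h ⊆ connectedComponentIn {y | ψ y ≠ 0} x :=
        (convex_ball x h).isPreconnected.subset_connectedComponentIn (mem_ball_self hhp) hno
      rwa [← connectedComponentIn_eq hx] at h1
    have : h ≤ innerRadius Ω := le_csSup hbddR ⟨hhp, x, hsub⟩
    linarith
  have hβE : β ^ (-(E/2)) ≤ 1 := Real.rpow_le_one_of_one_le_of_nonpos hβ1 (by linarith)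
  have ha20 : 20 * a ≤ 1 := by
    rw [ha, mul_one_div, div_le_one (by positivity)]; linarith
  have haA : A * a ≤ 1 := by
    rw [ha, mul_one_div, div_le_one (by positivity)]; linarith
  have h20 : 20 * h ≤ τ := by
    calc 20 * h = (20 * a) * (τ * β ^ (-(E/2))) := by rw [hh]; ring
      _ ≤ 1 * (τ * 1) := by gcongr
      _ = τ := by ring
  simp only [hβτ] at hK
  set J := ⌈β⌉₊ with hJ
  have hβJ : β ≤ J := Nat.le_ceil β
  have hJβ : (J:ℝ) ≤ 2 * β := by
    have := Nat.ceil_lt_add_one (by linarith : 0 ≤ β)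
    linarith
  have hopen : IsOpen Ω := (isOpen_ne_fun hc continuous_const).connectedComponentIn
  have hkey := H ψ lam τ β hlam hτp hlt hβ1 hs hl (expSum_of_eig hs hp hl) hK Ω h J hhp h20 hβJ
    hopen ⟨x₁, mem_connectedComponentIn hx₁.ne'⟩ hposΩ (bdry_component hc x₁) hzero (bdd_of_periodic hc hp Ω)
  have hJ0 : (0:ℝ) < J := by linarith
  have h1 : (2*β)^(-E) ≤ (J:ℝ)^(-E) := Real.rpow_le_rpow_of_nonpos hJ0 hJβ (by linarith)
  have hβ0 : 0 < β := by linarith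
  rw [Real.mul_rpow (by norm_num) hβ0.le, Real.rpow_neg (by norm_num : (0:ℝ) ≤ 2)] at h1
  have h2 : lam * h^2 = a^2 * β^(-E) := by
    have e : β^(-E) = (β ^ (-(E/2)))^2 := by
      rw [← Real.rpow_natCast, ← Real.rpow_mul hβ0.le]; congr 1; push_cast; ring
    rw [e, hh]
    linear_combination (a^2 * (β ^ (-(E/2)))^2) * hlt
  rw [h2] at hkey
  have h3 := h1.trans_lt hkey
  have hBp : 0 < β^(-E) := by positivity
  have h4 : (2^E)⁻¹ < C * a^2 := by
    have : (2^E)⁻¹ * β^(-E) < (C * a^2) * β^(-E) := by linarith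
    exact lt_of_mul_lt_mul_right this hBp.le
  have h2E : (0:ℝ) < 2^E := by positivity
  rw [inv_lt_iff_one_lt_mul₀' h2E] at h4
  have h5 : 2^E * (C * a^2) = (A * a) * a := by rw [hA]; ring
  rw [h5] at h4
  nlinarith

lemma lap_neg' {n : ℕ} (ψ : EuclideanSpace ℝ (Fin n) → ℝ) (x : EuclideanSpace ℝ (Fin n)) :
    lap n (fun y => - ψ y) x = - lap n ψ x := by
  simp only [lap, fderiv_fun_neg, ContinuousLinearMap.neg_apply, Finset.sum_neg_distrib]

end MainPart

theorem inner_radius_lower_bound_epsilon_scale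
    (n : ℕ) (hn : 3 ≤ n) (ε : ℝ) (hε : 0 < ε)
    (K₁ K₂ : ℝ) (hK₁ : 0 < K₁) (hK₂ : 0 < K₂) :
    ∃ r₀ a₁ : ℝ, 0 < r₀ ∧ 0 < a₁ ∧
      ∀ (ψ : EuclideanSpace ℝ (Fin n) → ℝ) (lam : ℝ),
        0 < lam → ContDiff ℝ (⊤ : ℕ∞) ψ → ZnPeriodic n ψ →
        (∀ x, lap n ψ x = -lam * ψ x) →
        lam ^ (-(1:ℝ)/2 + ε) < r₀ →
        (∀ x : EuclideanSpace ℝ (Fin n),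
          K₁ * (lam ^ (-(1:ℝ)/2 + ε)) ^ n ≤
            (∫ y in Metric.ball x (lam ^ (-(1:ℝ)/2 + ε)), (ψ y)^2) ∧
          (∫ y in Metric.ball x (lam ^ (-(1:ℝ)/2 + ε)), (ψ y)^2) ≤
            K₂ * (lam ^ (-(1:ℝ)/2 + ε)) ^ n) →
        ∀ Ω, IsNodalDomain ψ Ω →
          a₁ * lam ^ (-(1:ℝ)/2 - ε * ((n:ℝ)-1)*((n:ℝ)-2)/(2*(n:ℝ))) ≤ innerRadius Ω := by
  obtain ⟨a₁, ha, H⟩ := main_pos n hn ε K₁ K₂ hK₁ hK₂ hε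
  refine ⟨1, a₁, one_pos, ha, ?_⟩
  intro ψ lam hlam hs hp hl _ hK Ω hΩ
  obtain ⟨x, hx, rfl⟩ := hΩ
  rcases lt_or_gt_of_ne hx with h | h
  · have := H (fun y => - ψ y) lam hlam hs.neg (fun y v => congrArg Neg.neg (hp y v))
      (fun y => by rw [lap_neg', hl]; ring) (fun y => by simpa only [neg_sq] using hK y) x (by linarith)
    simpa only [ne_eq, neg_eq_zero] using this
  · exact H ψ lam hlam hs hp hl hK x h
end
end

section
/- Let (X,d,μ) be a compact metric measure space with 0 < μ(X) < ∞ which is Ahlfors n-regular at small scales: there exist c₁, c₂, R₁ > 0 with c₁ rⁿ ≤ μ(B_r(x)) ≤ c₂ rⁿ for all x ∈ X and r ∈ (0, R₁). Let (g_j)_{j∈ℕ} be a sequence of nonnegative integrable functions on X such that for some R₀ > 0, for every r ∈ (0, R₀) and every x ∈ X, ∫_{B_r(x)} g_j dμ → μ(B_r(x))/μ(X) as j → ∞. Then there exist K₁, K₂ > 0 and r₀ > 0, with K₁, K₂ independent of r, j and x, such that for each r ∈ (0, r₀) there exists J_r ∈ ℕ with: for all j ≥ J_r and all x ∈ X, K₁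 rⁿ ≤ ∫_{B_r(x)} g_j dμ ≤ K₂ rⁿ. -/
open MeasureTheory Metric Filter Real

noncomputable section

theorem equidistribution_gives_uniform_mass_bounds_metric_measure
    (n : ℕ) (X : Type*) [MetricSpace X] [CompactSpace X]
    [MeasurableSpace X] [BorelSpace X] (μ : Measure X)
    (hμpos : 0 < μ Set.univ) (hμfin : μ Set.univ < ⊤)
    (c₁ c₂ R₁ : ℝ) (hc₁ : 0 < c₁) (hc₂ : 0 < c₂) (hR₁ : 0 < R₁)
    (hAhlfors : ∀ (x : X) (r : ℝ), 0 < r → r < R₁ →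
      c₁ * r ^ n ≤ (μ (Metric.ball x r)).toReal ∧
      (μ (Metric.ball x r)).toReal ≤ c₂ * r ^ n)
    (g : ℕ → X → ℝ) (hg0 : ∀ j x, 0 ≤ g j x) (hgint : ∀ j, Integrable (g j) μ)
    (R₀ : ℝ) (hR₀ : 0 < R₀)
    (hequi : ∀ r : ℝ, 0 < r → r < R₀ → ∀ x : X,
      Tendsto (fun j => ∫ y in Metric.ball x r, g j y ∂μ) atTop
        (nhds ((μ (Metric.ball x r)).toReal / (μ Set.univ).toReal))) :
    ∃ K₁ K₂ r₀ : ℝ, 0 < K₁ ∧ 0 < K₂ ∧ 0 < r₀ ∧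
      ∀ r : ℝ, 0 < r → r < r₀ → ∃ J : ℕ, ∀ j, J ≤ j → ∀ x : X,
        K₁ * r ^ n ≤ (∫ y in Metric.ball x r, g j y ∂μ) ∧
        (∫ y in Metric.ball x r, g j y ∂μ) ≤ K₂ * r ^ n := by
  have hM : 0 < (μ Set.univ).toReal := ENNReal.toReal_pos hμpos.ne' hμfin.ne
  set M := (μ Set.univ).toReal with hMdef
  refine ⟨c₁ / 2 ^ n / M / 2, 2 * (c₂ * 2 ^ n / M), min R₀ R₁ / 2, by positivity, by positivity,
    by positivity, ?_⟩
  intro r hr hr0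
  have h0 : 2 * r < R₀ := by linarith [min_le_left R₀ R₁]
  have h1 : 2 * r < R₁ := by linarith [min_le_right R₀ R₁]
  obtain ⟨t, -, htfin, ht⟩ :=
    (isCompact_univ (X := X)).finite_cover_balls (e := r / 2) (by positivity)
  have hev : ∀ᶠ j in atTop, ∀ p ∈ t,
      c₁ / 2 ^ n / M / 2 * r ^ n < (∫ y in Metric.ball p (r / 2), g j y ∂μ) ∧
      (∫ y in Metric.ball p (2 * r), g j y ∂μ) < 2 * (c₂ * 2 ^ n / M) * r ^ n := by
    rw [htfin.eventually_all]
    intro p _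
    refine ((hequi (r / 2) (by positivity) (by linarith) p).eventually_const_lt ?_).and
      ((hequi (2 * r) (by positivity) (by linarith) p).eventually_lt_const ?_)
    · have h := (hAhlfors p (r / 2) (by positivity) (by linarith)).1
      have h2 : c₁ * (r / 2) ^ n / M ≤ (μ (Metric.ball p (r / 2))).toReal / M := by gcongr
      refine lt_of_lt_of_le ?_ h2
      have h3 : c₁ / 2 ^ n / M / 2 * r ^ n = (c₁ * (r / 2) ^ n / M) / 2 := by
        rw [div_pow]; ring
      rw [h3]
      exact half_lt_self (by positivity)
    · have h := (hAhlfors p (2 * r) (by positivity) (by linarith)).2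
      have h2 : (μ (Metric.ball p (2 * r))).toReal / M ≤ c₂ * (2 * r) ^ n / M := by gcongr
      refine lt_of_le_of_lt h2 ?_
      have h3 : 2 * (c₂ * 2 ^ n / M) * r ^ n = 2 * (c₂ * (2 * r) ^ n / M) := by
        rw [mul_pow]; ring
      rw [h3]
      have : 0 < c₂ * (2 * r) ^ n / M := by positivity
      linarith
  obtain ⟨J, hJ⟩ := eventually_atTop.1 hev
  refine ⟨J, fun j hj x => ?_⟩
  obtain ⟨p, hp, hxp⟩ := Set.mem_iUnion₂.1 (ht (Set.mem_univ x))
  rw [Metric.mem_ball] at hxp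
  have hmono : ∀ A B : Set X, A ⊆ B → (∫ y in A, g j y ∂μ) ≤ ∫ y in B, g j y ∂μ :=
    fun A B hAB => setIntegral_mono_set (hgint j).integrableOn
      (Eventually.of_forall (hg0 j)) hAB.eventuallyLE
  obtain ⟨hl, hu⟩ := hJ j hj p hp
  refine ⟨hl.le.trans (hmono _ _ (Metric.ball_subset_ball' ?_)),
    (hmono _ _ (Metric.ball_subset_ball' ?_)).trans hu.le⟩
  · rw [dist_comm]; linarith
  · linarith
end
end

section
/- Let n ≥ 1. There exist constants c > 0 and s₀ > 0 depending only on n such that for every smooth ℤⁿ-periodic real-valued eigenfunction ψ : ℝⁿ → ℝ of the Euclidean Laplacian with eigenvalue λ ≥ 1, ψ not identically zero, every x ∈ ℝⁿ and every 0 < s < s₀, one has log( sup_{B_{2s}(x)} ψ² / sup_{B_s(x)} ψ² ) ≤ c √λ. -/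
open MeasureTheory Metric Filter Real

noncomputable section

open scoped ComplexConjugate

local instance circMS : MeasureSpace UnitAddCircle := ⟨AddCircle.haarAddCircle⟩

local instance circHaar : Measure.IsAddHaarMeasure (volume : Measure UnitAddCircle) :=
  inferInstanceAs (Measure.IsAddHaarMeasure AddCircle.haarAddCircle)

local instance circProb : IsProbabilityMeasure (volume : Measure UnitAddCircle) :=
  inferInstanceAs (IsProbabilityMeasure AddCircle.haarAddCircle)

/-- representative of a torus point -/
def torRep (n : ℕ) (t : UnitAddTorus (Fin n)) : EuclideanSpace ℝ (Fin n) :=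
  WithLp.toLp 2 (fun i => Quotient.out (t i))

/-- projection to the torus -/
def torPr (n : ℕ) (x : EuclideanSpace ℝ (Fin n)) : UnitAddTorus (Fin n) :=
  fun i => (x i : UnitAddCircle)

lemma torPr_rep (n : ℕ) (t : UnitAddTorus (Fin n)) : torPr n (torRep n t) = t := by
  funext i
  simp only [torPr, torRep]
  exact Quotient.out_eq (t i)

lemma rep_torPr (n : ℕ) (g : EuclideanSpace ℝ (Fin n) → ℝ) (hg : ZnPeriodic n g)
    (x : EuclideanSpace ℝ (Fin n)) : g (torRep n (torPr n x)) = g x := by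
  have h : ∀ i, ∃ m : ℤ, (torRep n (torPr n x)) i = x i + m := by
    intro i
    have h1 : ((torRep n (torPr n x) i : ℝ) : UnitAddCircle) = ((x i : ℝ) : UnitAddCircle) :=
      congrFun (torPr_rep n (torPr n x)) i
    have h2 := (QuotientAddGroup.eq.1 h1.symm)
    obtain ⟨m, hm⟩ := AddSubgroup.mem_zmultiples_iff.1 h2
    refine ⟨m, ?_⟩
    simp at hm
    linarith
  choose m hm using h
  rw [← hg x m]
  congr 1
  ext i
  simp [hm]

/-- descended function -/
def tor (n : ℕ) (g : EuclideanSpace ℝ (Fin n) → ℝ) (t : UnitAddTorus (Fin n)) : ℂ :=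
  (g (torRep n t) : ℂ)

lemma tor_pr (n : ℕ) (g : EuclideanSpace ℝ (Fin n) → ℝ) (hg : ZnPeriodic n g)
    (x : EuclideanSpace ℝ (Fin n)) : tor n g (torPr n x) = g x := by
  simp [tor, rep_torPr n g hg]

lemma tor_cont (n : ℕ) (g : EuclideanSpace ℝ (Fin n) → ℝ) (hg : ZnPeriodic n g)
    (hc : Continuous g) : Continuous (tor n g) := by
  have hq : IsOpenQuotientMap (fun (x : Fin n → ℝ) (i : Fin n) => (x i : UnitAddCircle)) :=
    IsOpenQuotientMap.piMap (fun i => QuotientAddGroup.isOpenQuotientMap_mk)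
  rw [hq.isQuotientMap.continuous_iff]
  have : tor n g ∘ (fun (x : Fin n → ℝ) (i : Fin n) => (x i : UnitAddCircle))
      = fun x => ((g (WithLp.toLp 2 x) : ℝ) : ℂ) := by
    funext x
    exact tor_pr n g hg (WithLp.toLp 2 x)
  rw [this]
  fun_prop

/-- partial derivative -/
def pd (n : ℕ) (i : Fin n) (g : EuclideanSpace ℝ (Fin n) → ℝ) (y : EuclideanSpace ℝ (Fin n)) : ℝ :=
  fderiv ℝ g y (EuclideanSpace.single i (1:ℝ))

lemma pd_per (n : ℕ) (i : Fin n) (g : EuclideanSpace ℝ (Fin n) → ℝ) (hg : ZnPeriodic n g) :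
    ZnPeriodic n (pd n i g) := by
  intro x v
  set w : EuclideanSpace ℝ (Fin n) := WithLp.toLp 2 (fun i => (v i : ℝ)) with hw
  have h1 : ∀ y, g (y + w) = g y := fun y => hg y v
  have h2 : (fun y => g (y + w)) = g := funext h1
  change pd n i g (x + w) = pd n i g x
  unfold pd
  rw [← fderiv_comp_add_right, h2]

lemma pd_smooth (n : ℕ) (i : Fin n) (g : EuclideanSpace ℝ (Fin n) → ℝ)
    (hg : ContDiff ℝ (⊤ : ℕ∞) g) : ContDiff ℝ (⊤ : ℕ∞) (pd n i g) := by
  have : ContDiff ℝ (⊤ : ℕ∞) (fderiv ℝ g) := hg.fderiv_right (by simp)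
  exact this.clm_apply contDiff_const

lemma mF_add_arg {n : ℕ} (k : Fin n → ℤ) (s t : UnitAddTorus (Fin n)) :
    UnitAddTorus.mFourier k (s + t) = UnitAddTorus.mFourier k s * UnitAddTorus.mFourier k t := by
  simp only [UnitAddTorus.mFourier, ContinuousMap.coe_mk, Pi.add_apply, fourier_apply, smul_add,
    AddCircle.toCircle_add, Circle.coe_mul, Finset.prod_mul_distrib]

lemma mF_pr {n : ℕ} (k : Fin n → ℤ) (x : EuclideanSpace ℝ (Fin n)) :
    UnitAddTorus.mFourier k (torPr n x) =
      Complex.exp (Complex.I * ((∑ i, (2 * π * k i) * x i : ℝ) : ℂ)) := by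
  simp only [UnitAddTorus.mFourier, ContinuousMap.coe_mk, torPr, fourier_coe_apply]
  rw [← Complex.exp_sum]
  congr 1
  push_cast
  rw [Finset.mul_sum]
  refine Finset.sum_congr rfl fun i _ => ?_
  simp
  ring

lemma torPr_add (n : ℕ) (x y : EuclideanSpace ℝ (Fin n)) :
    torPr n (x + y) = torPr n x + torPr n y := by
  funext i; simp [torPr]

lemma coeff_pd (n : ℕ) (i : Fin n) (g : EuclideanSpace ℝ (Fin n) → ℝ) (hg : ZnPeriodic n g)
    (hs : ContDiff ℝ (⊤ : ℕ∞) g) (k : Fin n → ℤ) :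
    UnitAddTorus.mFourierCoeff (tor n (pd n i g)) k =
      (Complex.I * (2 * π * k i)) * UnitAddTorus.mFourierCoeff (tor n g) k := by
  set e : EuclideanSpace ℝ (Fin n) := EuclideanSpace.single i (1:ℝ) with he
  have hc := tor_cont n g hg hs.continuous
  have hc' := tor_cont n (pd n i g) (pd_per n i g hg) (pd_smooth n i g hs).continuous
  obtain ⟨C, hC⟩ := (isCompact_range hc').isBounded.exists_norm_le
  have key := hasDerivAt_integral_of_dominated_loc_of_deriv_le (𝕜 := ℝ)
    (μ := (volume : Measure (UnitAddTorus (Fin n)))) (x₀ := (0:ℝ)) (s := Set.univ)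
    (F := fun h t => UnitAddTorus.mFourier (-k) t * tor n g (t + torPr n (h • e)))
    (F' := fun h t => UnitAddTorus.mFourier (-k) t * tor n (pd n i g) (t + torPr n (h • e)))
    (bound := fun _ => C) Filter.univ_mem ?_ ?_ ?_ ?_ (integrable_const _) ?_
  · have h1 : ∀ h : ℝ, (∫ t, UnitAddTorus.mFourier (-k) t * tor n g (t + torPr n (h • e)))
        = Complex.exp (h * (Complex.I * (2 * π * k i))) * UnitAddTorus.mFourierCoeff (tor n g) k := by
      intro h
      rw [← integral_add_right_eq_self _ (torPr n ((-h) • e))]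
      have h3 : torPr n ((-h) • e) + torPr n (h • e) = 0 := by
        rw [← torPr_add, ← add_smul]; funext j; simp [torPr]
      simp only [add_assoc, h3, add_zero, mF_add_arg]
      unfold UnitAddTorus.mFourierCoeff
      rw [← MeasureTheory.integral_const_mul]
      congr 1
      funext t
      rw [mF_pr]
      have : Complex.I * ((∑ j, (2 * π * ((-k) j : ℤ)) * ((-h) • e) j : ℝ) : ℂ)
          = h * (Complex.I * (2 * π * k i)) := by
        simp [he]
        ring
      rw [this]
      simp only [smul_eq_mul]
      ring
    have h2 := key.2
    simp only [h1] at h2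
    have h4 : HasDerivAt (fun h : ℝ => Complex.exp (h * (Complex.I * (2 * π * k i))) *
        UnitAddTorus.mFourierCoeff (tor n g) k)
        ((Complex.I * (2 * π * k i)) * UnitAddTorus.mFourierCoeff (tor n g) k) 0 := by
      have h5 : HasDerivAt (fun h : ℝ => (h : ℂ) * (Complex.I * (2 * π * k i)))
          (1 * (Complex.I * (2 * π * k i))) 0 :=
        (Complex.ofRealCLM.hasDerivAt (x := (0:ℝ))).mul_const _
      have := (h5.cexp).mul_const (UnitAddTorus.mFourierCoeff (tor n g) k)
      simpa using this
    rw [← h2.unique h4]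
    have h0 : torPr n ((0:ℝ) • e) = 0 := by funext j; simp [torPr]
    simp only [h0, add_zero]
    rfl
  · refine Filter.Eventually.of_forall fun h => ?_
    exact (Continuous.mul (map_continuous _) (hc.comp (by fun_prop))).aestronglyMeasurable
  · exact (Continuous.mul (map_continuous _) (hc.comp (by fun_prop))).integrable_of_hasCompactSupport
      (HasCompactSupport.of_compactSpace _)
  · exact (Continuous.mul (map_continuous _) (hc'.comp (by fun_prop))).aestronglyMeasurable
  · refine Filter.Eventually.of_forall fun t h _ => ?_
    rw [norm_mul]
    have h1 : ‖UnitAddTorus.mFourier (-k) t‖ ≤ 1 := by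
      have := (UnitAddTorus.mFourier (-k)).norm_coe_le_norm t
      rwa [UnitAddTorus.mFourier_norm] at this
    have h2 := hC _ (Set.mem_range_self (t + torPr n (h • e)))
    calc _ ≤ 1 * C := mul_le_mul h1 h2 (norm_nonneg _) zero_le_one
      _ = C := one_mul C
  · refine Filter.Eventually.of_forall fun t h _ => ?_
    refine HasDerivAt.const_mul _ ?_
    have ht := torPr_rep n t
    set x := torRep n t
    rw [← ht]
    simp only [← torPr_add]
    rw [tor_pr n _ (pd_per n i g hg)]
    simp only [tor_pr n _ hg]
    refine HasDerivAt.ofReal_comp ?_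
    have hd : HasFDerivAt g (fderiv ℝ g (x + h • e)) (x + h • e) :=
      (hs.differentiable (by simp) _).hasFDerivAt
    have hl : HasDerivAt (fun h : ℝ => x + h • e) e h := by
      simpa using ((hasDerivAt_id h).smul_const e).const_add x
    exact hd.comp_hasDerivAt h hl

lemma trig_poly (n : ℕ) (ψ : EuclideanSpace ℝ (Fin n) → ℝ) (lam : ℝ)
    (hs : ContDiff ℝ (⊤ : ℕ∞) ψ) (hp : ZnPeriodic n ψ)
    (hl : ∀ x, lap n ψ x = -lam * ψ x) :
    ∃ (S : Finset (Fin n → ℤ)) (a : (Fin n → ℤ) → ℂ)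
      (v : (Fin n → ℤ) → EuclideanSpace ℝ (Fin n)),
      (∀ k ∈ S, ‖v k‖ ^ 2 = lam) ∧
      ∀ z, (ψ z : ℂ) = ∑ k ∈ S, a k * Complex.exp (Complex.I * ((inner ℝ (v k) z : ℝ) : ℂ)) := by
  set v : (Fin n → ℤ) → EuclideanSpace ℝ (Fin n) := fun k => WithLp.toLp 2 (fun i => 2 * π * k i)
    with hv
  have hc := tor_cont n ψ hp hs.continuous
  have hvn : ∀ k, ‖v k‖ ^ 2 = ∑ i, (2 * π * (k i : ℝ)) ^ 2 := by
    intro k; simp [EuclideanSpace.norm_sq_eq, hv, mul_pow]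
  have hco : ∀ k, UnitAddTorus.mFourierCoeff (tor n ψ) k ≠ 0 → ‖v k‖ ^ 2 = lam := by
    intro k hk
    have h1 : ∀ i, UnitAddTorus.mFourierCoeff (tor n (pd n i (pd n i ψ))) k
        = (Complex.I * (2 * π * k i)) ^ 2 * UnitAddTorus.mFourierCoeff (tor n ψ) k := by
      intro i
      rw [coeff_pd n i _ (pd_per n i ψ hp) (pd_smooth n i ψ hs), coeff_pd n i _ hp hs]
      ring
    have h2 : ∑ i, UnitAddTorus.mFourierCoeff (tor n (pd n i (pd n i ψ))) k
        = -lam * UnitAddTorus.mFourierCoeff (tor n ψ) k := by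
      unfold UnitAddTorus.mFourierCoeff
      rw [← integral_finsetSum, ← MeasureTheory.integral_const_mul]
      · congr 1
        funext t
        have := hl (torRep n t)
        rw [← Finset.smul_sum]
        simp only [smul_eq_mul, tor]
        rw [← Complex.ofReal_sum]
        have h3 : ∑ i, pd n i (pd n i ψ) (torRep n t) = -lam * ψ (torRep n t) := this
        rw [h3]
        push_cast
        ring
      · intro i _
        have := tor_cont n _ (pd_per n i _ (pd_per n i ψ hp))
          (pd_smooth n i _ (pd_smooth n i ψ hs)).continuous
        exact (Continuous.smul (map_continuous (UnitAddTorus.mFourier (-k))) this).integrable_of_hasCompactSupport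
          (HasCompactSupport.of_compactSpace _)
    simp only [h1, ← Finset.sum_mul] at h2
    have h3 := mul_right_cancel₀ hk h2
    rw [hvn]
    have h4 : ((∑ i, (2 * π * (k i : ℝ)) ^ 2 : ℝ) : ℂ) = lam := by
      push_cast
      simp only [mul_pow, Complex.I_sq] at h3 ⊢
      rw [← neg_inj, ← h3, ← Finset.sum_neg_distrib]
      simp
    exact_mod_cast h4
  have hfin : {k | ‖v k‖ ^ 2 = lam}.Finite := by
    refine (Set.finite_Icc (fun _ : Fin n => -⌈lam⌉) (fun _ => ⌈lam⌉)).subset ?_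
    intro k hk
    simp only [Set.mem_ofPred_eq, hvn] at hk
    have h1 : ∀ i, |k i| ≤ ⌈lam⌉ := by
      intro i
      have h2 : (2 * π * (k i : ℝ)) ^ 2 ≤ lam := by
        rw [← hk]
        exact Finset.single_le_sum (f := fun i => (2 * π * (k i : ℝ)) ^ 2)
          (fun _ _ => sq_nonneg _) (Finset.mem_univ i)
      have h3 : (k i : ℝ) ^ 2 ≤ lam := by
        refine le_trans ?_ h2
        rw [mul_pow]
        have : 1 ≤ (2 * π) ^ 2 := by nlinarith [Real.pi_gt_three]
        nlinarith [sq_nonneg (k i : ℝ)]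
      have h4 : k i ^ 2 ≤ ⌈lam⌉ := by
        have := h3.trans (Int.le_ceil lam)
        exact_mod_cast this
      refine le_trans ?_ h4
      rw [← sq_abs]
      nlinarith [abs_nonneg (k i), Int.le_self_sq |k i|]
    exact ⟨fun i => (abs_le.1 (h1 i)).1, fun i => (abs_le.1 (h1 i)).2⟩
  refine ⟨hfin.toFinset, UnitAddTorus.mFourierCoeff (tor n ψ), v, ?_, ?_⟩
  · intro k hk; simpa using hk
  · intro z
    have hz : ∀ k ∉ hfin.toFinset, UnitAddTorus.mFourierCoeff (tor n ψ) k = 0 := by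
      intro k hk
      by_contra h
      exact hk (by simpa using hco k h)
    have hsum : Summable (UnitAddTorus.mFourierCoeff (tor n ψ)) :=
      summable_of_ne_finset_zero hz
    have h1 := UnitAddTorus.hasSum_mFourier_series_apply_of_summable
      (f := ⟨tor n ψ, hc⟩) hsum (torPr n z)
    have h2 := hasSum_sum_of_ne_finset_zero (L := SummationFilter.unconditional _)
      (f := fun k => UnitAddTorus.mFourierCoeff (tor n ψ) k • UnitAddTorus.mFourier k (torPr n z))
      (s := hfin.toFinset) (fun k hk => by simp [hz k hk])
    have h3 := h1.unique h2
    simp only [ContinuousMap.coe_mk, tor_pr n ψ hp] at h3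
    rw [h3]
    refine Finset.sum_congr rfl fun k _ => ?_
    rw [mF_pr, smul_eq_mul]
    congr 4
    simp [hv, PiLp.inner_apply, mul_comm]

lemma psd_pow {ι : Type*} {n : ℕ} (S : Finset ι) (v : ι → EuclideanSpace ℝ (Fin n)) (x : ι → ℝ)
    (m : ℕ) : 0 ≤ ∑ k ∈ S, ∑ l ∈ S, x k * x l * (inner ℝ (v k) (v l) : ℝ) ^ m := by
  have h : ∑ k ∈ S, ∑ l ∈ S, x k * x l * (inner ℝ (v k) (v l) : ℝ) ^ m
      = ∑ p : Fin m → Fin n, (∑ k ∈ S, x k * ∏ j, v k (p j)) ^ 2 := by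
    have h1 : ∀ k l, (inner ℝ (v k) (v l) : ℝ) ^ m
        = ∑ p : Fin m → Fin n, (∏ j, v k (p j)) * ∏ j, v l (p j) := by
      intro k l
      rw [PiLp.inner_apply, Fintype.sum_pow]
      refine Finset.sum_congr rfl fun p _ => ?_
      rw [← Finset.prod_mul_distrib]
      refine Finset.prod_congr rfl fun j _ => ?_
      simp [mul_comm]
    simp only [h1, sq, Finset.sum_mul_sum]
    rw [Finset.sum_comm (s := Finset.univ)]
    refine Finset.sum_congr rfl fun k _ => ?_
    rw [Finset.sum_comm (s := Finset.univ)]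
    refine Finset.sum_congr rfl fun l _ => ?_
    rw [Finset.mul_sum]
    refine Finset.sum_congr rfl fun p _ => ?_
    ring
  rw [h]
  exact Finset.sum_nonneg fun _ _ => sq_nonneg _

lemma power_series {ι : Type*} {n : ℕ} (S : Finset ι) (v : ι → EuclideanSpace ℝ (Fin n))
    (b : ι → ℂ) : ∃ c : ℕ → ℝ, (∀ m, 0 ≤ c m) ∧ ∀ τ : ℝ, HasSum (fun m => c m * τ ^ m)
      (∑ k ∈ S, ∑ l ∈ S, (b k * conj (b l)).re * Real.exp (τ * (inner ℝ (v k) (v l) : ℝ))) := by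
  refine ⟨fun m => (∑ k ∈ S, ∑ l ∈ S, (b k * conj (b l)).re * (inner ℝ (v k) (v l) : ℝ) ^ m)
    / (m.factorial : ℝ), ?_, ?_⟩
  · intro m
    refine div_nonneg ?_ (by positivity)
    have h1 := psd_pow S v (fun k => (b k).re) m
    have h2 := psd_pow S v (fun k => (b k).im) m
    have := add_nonneg h1 h2
    simp only [← Finset.sum_add_distrib] at this
    convert this using 4
    simp
    ring
  · intro τ
    have h1 : ∀ k ∈ S, ∀ l ∈ S, HasSum (fun m : ℕ => (b k * conj (b l)).re *
        ((τ * (inner ℝ (v k) (v l) : ℝ)) ^ m / (m.factorial : ℝ)))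
        ((b k * conj (b l)).re * Real.exp (τ * (inner ℝ (v k) (v l) : ℝ))) := by
      intro k _ l _
      refine HasSum.mul_left _ ?_
      rw [Real.exp_eq_exp_ℝ]
      exact NormedSpace.expSeries_div_hasSum_exp _
    have h2 := hasSum_sum (fun k hk => hasSum_sum (fun l hl => h1 k hk l hl))
    convert h2 using 2 with m
    simp only [Finset.sum_div, Finset.sum_mul]
    refine Finset.sum_congr rfl fun k _ => Finset.sum_congr rfl fun l _ => ?_
    rw [mul_pow]
    ring

lemma ratio_mono (c : ℕ → ℝ) (hc : ∀ m, 0 ≤ c m) (K : ℝ → ℝ)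
    (hK : ∀ τ : ℝ, HasSum (fun m => c m * τ ^ m) (K τ)) (t T : ℝ) (ht : 0 ≤ t) (htT : t ≤ T) :
    K (2 * t) * K T ≤ K (2 * T) * K t := by
  have hlim : ∀ τ, Tendsto (fun N => ∑ m ∈ Finset.range N, c m * τ ^ m) atTop (nhds (K τ)) :=
    fun τ => (hK τ).tendsto_sum_nat
  refine le_of_tendsto_of_tendsto' ((hlim (2 * t)).mul (hlim T)) ((hlim (2 * T)).mul (hlim t)) ?_
  intro N
  rw [Finset.sum_mul_sum, Finset.sum_mul_sum]
  have hswap : ∀ f : ℕ → ℕ → ℝ, ∑ i ∈ Finset.range N, ∑ j ∈ Finset.range N, f i j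
      = (∑ i ∈ Finset.range N, ∑ j ∈ Finset.range N, (f i j + f j i)) / 2 := by
    intro f
    simp only [Finset.sum_add_distrib]
    rw [Finset.sum_comm (f := fun i j => f j i)]
    ring
  rw [hswap, hswap (fun i j => c i * (2 * T) ^ i * (c j * t ^ j))]
  refine div_le_div_of_nonneg_right ?_ (by norm_num)
  refine Finset.sum_le_sum fun i _ => Finset.sum_le_sum fun j _ => ?_
  have key : ∀ i j : ℕ, i ≤ j → 0 ≤ ((2:ℝ) ^ j - 2 ^ i) * (T ^ j * t ^ i - t ^ j * T ^ i) := by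
    intro i j hij
    refine mul_nonneg (sub_nonneg.2 (pow_le_pow_right₀ (by norm_num) hij)) ?_
    obtain ⟨d, rfl⟩ := Nat.exists_eq_add_of_le hij
    have h1 : t ^ d ≤ T ^ d := pow_le_pow_left₀ ht htT d
    have h2 : 0 ≤ t ^ i * T ^ i := mul_nonneg (pow_nonneg ht _) (pow_nonneg (ht.trans htT) _)
    rw [pow_add, pow_add]
    nlinarith [mul_le_mul_of_nonneg_left h1 h2]
  have hcc := mul_nonneg (hc i) (hc j)
  have hk : 0 ≤ ((2:ℝ) ^ j - 2 ^ i) * (T ^ j * t ^ i - t ^ j * T ^ i) := by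
    rcases le_total i j with h | h
    · exact key i j h
    · have := key j i h
      linarith
  have := mul_nonneg hcc hk
  simp only [mul_pow]
  linarith

/-- normalisation -/
def gZ (n : ℕ) (τ : ℝ) : ℝ := (2 * π * τ) ^ ((n : ℝ) / 2)

/-- Gaussian average of the square -/
def gF (n : ℕ) (ψ : EuclideanSpace ℝ (Fin n) → ℝ) (x : EuclideanSpace ℝ (Fin n)) (τ : ℝ) : ℝ :=
  (gZ n τ)⁻¹ * ∫ w, ψ w ^ 2 * Real.exp (-‖w - x‖ ^ 2 / (2 * τ))

lemma gZ_pos (n : ℕ) {τ : ℝ} (h : 0 < τ) : 0 < gZ n τ := by unfold gZ; positivity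

lemma gZ_two (n : ℕ) {τ : ℝ} (h : 0 < τ) : gZ n (2 * τ) = 2 ^ ((n : ℝ) / 2) * gZ n τ := by
  unfold gZ
  rw [← Real.mul_rpow (by norm_num) (by positivity)]
  congr 1; ring

lemma gauss_c (n : ℕ) {τ : ℝ} (h : 0 < τ) (u : EuclideanSpace ℝ (Fin n)) :
    ∫ z : EuclideanSpace ℝ (Fin n), Complex.exp (-((1 / (2 * τ) : ℝ) : ℂ) * ‖z‖ ^ 2
      + Complex.I * (inner ℝ u z : ℝ)) = gZ n τ * (Real.exp (-τ * ‖u‖ ^ 2 / 2) : ℝ) := by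
  rw [GaussianFourier.integral_cexp_neg_mul_sq_norm_add (by rw [Complex.ofReal_re]; positivity)]
  congr 1
  · unfold gZ
    rw [Complex.ofReal_cpow (by positivity)]
    congr 1
    · push_cast
      have : (τ : ℂ) ≠ 0 := by exact_mod_cast h.ne'
      field_simp
    · simp
  · rw [Complex.ofReal_exp]
    congr 1
    have : (τ : ℂ) ≠ 0 := by exact_mod_cast h.ne'
    push_cast
    rw [Complex.I_sq]
    field_simp
    ring

lemma gauss_c_int (n : ℕ) {τ : ℝ} (h : 0 < τ) (u : EuclideanSpace ℝ (Fin n)) :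
    Integrable (fun z : EuclideanSpace ℝ (Fin n) => Complex.exp (-((1 / (2 * τ) : ℝ) : ℂ) * ‖z‖ ^ 2
      + Complex.I * (inner ℝ u z : ℝ))) :=
  GaussianFourier.integrable_cexp_neg_mul_sq_norm_add (by rw [Complex.ofReal_re]; positivity) _ _

lemma gauss_rc (n : ℕ) {τ : ℝ} (z : EuclideanSpace ℝ (Fin n)) :
    Complex.exp (-((1 / (2 * τ) : ℝ) : ℂ) * ‖z‖ ^ 2
      + Complex.I * (inner ℝ (0 : EuclideanSpace ℝ (Fin n)) z : ℝ))
     = ((Real.exp (-‖z‖ ^ 2 / (2 * τ)) : ℝ) : ℂ) := by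
  rw [Complex.ofReal_exp]
  congr 1
  simp
  ring

lemma gauss_int (n : ℕ) {τ : ℝ} (h : 0 < τ) (x : EuclideanSpace ℝ (Fin n)) :
    Integrable (fun w : EuclideanSpace ℝ (Fin n) => Real.exp (-‖w - x‖ ^ 2 / (2 * τ))) := by
  have h1 := gauss_c_int n h 0
  simp only [gauss_rc] at h1
  have h2 : Integrable (fun z : EuclideanSpace ℝ (Fin n) => Real.exp (-‖z‖ ^ 2 / (2 * τ))) := by
    exact (integrable_congr (Filter.Eventually.of_forall fun z => by
      simp only [RCLike.re_to_complex, Complex.ofReal_re])).1 h1.re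
  exact h2.comp_sub_right x

lemma gauss_val (n : ℕ) {τ : ℝ} (h : 0 < τ) (x : EuclideanSpace ℝ (Fin n)) :
    ∫ w : EuclideanSpace ℝ (Fin n), Real.exp (-‖w - x‖ ^ 2 / (2 * τ)) = gZ n τ := by
  have h1 := gauss_c n h 0
  simp only [gauss_rc] at h1
  rw [integral_complex_ofReal] at h1
  rw [integral_sub_right_eq_self (fun z => Real.exp (-‖z‖ ^ 2 / (2 * τ)))]
  simp at h1
  exact_mod_cast h1

lemma gF_int (n : ℕ) (ψ : EuclideanSpace ℝ (Fin n) → ℝ) (hc : Continuous ψ) (B : ℝ)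
    (hB : ∀ w, ψ w ^ 2 ≤ B) (x : EuclideanSpace ℝ (Fin n)) {τ : ℝ} (h : 0 < τ) :
    Integrable (fun w => ψ w ^ 2 * Real.exp (-‖w - x‖ ^ 2 / (2 * τ))) := by
  refine (gauss_int n h x).bdd_mul (c := B) (by fun_prop) ?_
  refine Filter.Eventually.of_forall fun w => ?_
  rw [Real.norm_eq_abs, abs_of_nonneg (sq_nonneg _)]
  exact hB w

lemma gF_le (n : ℕ) (ψ : EuclideanSpace ℝ (Fin n) → ℝ) (hc : Continuous ψ) (B : ℝ)
    (hB : ∀ w, ψ w ^ 2 ≤ B) (x : EuclideanSpace ℝ (Fin n)) {τ : ℝ} (h : 0 < τ) :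
    gF n ψ x τ ≤ B := by
  unfold gF
  rw [inv_mul_le_iff₀ (gZ_pos n h), ← gauss_val n h x, mul_comm _ B, ← MeasureTheory.integral_const_mul]
  exact integral_mono (gF_int n ψ hc B hB x h) ((gauss_int n h x).const_mul B)
    fun w => mul_le_mul_of_nonneg_right (hB w) (Real.exp_nonneg _)

lemma gF_shift (n : ℕ) (ψ : EuclideanSpace ℝ (Fin n) → ℝ) (hc : Continuous ψ) (B : ℝ)
    (hB : ∀ w, ψ w ^ 2 ≤ B) (x y : EuclideanSpace ℝ (Fin n)) {τ : ℝ} (h : 0 < τ) :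
    gF n ψ y τ ≤ 2 ^ ((n : ℝ) / 2) * Real.exp (‖y - x‖ ^ 2 / (2 * τ)) * gF n ψ x (2 * τ) := by
  unfold gF
  have hZ := gZ_pos n h
  rw [gZ_two n h, mul_inv]
  have h2 : (0:ℝ) < 2 ^ ((n : ℝ) / 2) := by positivity
  have h1 : ∫ w, ψ w ^ 2 * Real.exp (-‖w - y‖ ^ 2 / (2 * τ))
      ≤ Real.exp (‖y - x‖ ^ 2 / (2 * τ)) *
        ∫ w, ψ w ^ 2 * Real.exp (-‖w - x‖ ^ 2 / (2 * (2 * τ))) := by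
    rw [← MeasureTheory.integral_const_mul]
    refine integral_mono (gF_int n ψ hc B hB y h)
      ((gF_int n ψ hc B hB x (by positivity)).const_mul _) fun w => ?_
    simp only
    rw [mul_left_comm, ← Real.exp_add]
    refine mul_le_mul_of_nonneg_left (Real.exp_le_exp.2 ?_) (sq_nonneg _)
    have h3 : ‖w - x‖ ≤ ‖w - y‖ + ‖y - x‖ := by
      simpa using norm_add_le (w - y) (y - x)
    have h4 : ‖w - x‖ ^ 2 ≤ 2 * ‖w - y‖ ^ 2 + 2 * ‖y - x‖ ^ 2 := by
      nlinarith [norm_nonneg (w - x), sq_nonneg (‖w - y‖ - ‖y - x‖), norm_nonneg (w - y),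
        norm_nonneg (y - x)]
    rw [← sub_nonneg]
    have : ‖y - x‖ ^ 2 / (2 * τ) + -‖w - x‖ ^ 2 / (2 * (2 * τ)) - -‖w - y‖ ^ 2 / (2 * τ)
        = (2 * ‖w - y‖ ^ 2 + 2 * ‖y - x‖ ^ 2 - ‖w - x‖ ^ 2) / (4 * τ) := by
      field_simp
      ring
    rw [this]
    exact div_nonneg (by linarith) (by positivity)
  calc _ ≤ (gZ n τ)⁻¹ * (Real.exp (‖y - x‖ ^ 2 / (2 * τ)) *
        ∫ w, ψ w ^ 2 * Real.exp (-‖w - x‖ ^ 2 / (2 * (2 * τ)))) :=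
        mul_le_mul_of_nonneg_left h1 (by positivity)
    _ = _ := by field_simp

lemma gF_tail (n : ℕ) (ψ : EuclideanSpace ℝ (Fin n) → ℝ) (hc : Continuous ψ) (B : ℝ)
    (hB : ∀ w, ψ w ^ 2 ≤ B) (x : EuclideanSpace ℝ (Fin n)) {τ : ℝ} (h : 0 < τ) (s M : ℝ)
    (hs : 0 < s) (hM0 : 0 ≤ M) (hM : ∀ w ∈ Metric.ball x s, ψ w ^ 2 ≤ M) :
    gF n ψ x τ ≤ M + 2 ^ ((n : ℝ) / 2) * Real.exp (-s ^ 2 / (4 * τ)) * gF n ψ x (2 * τ) := by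
  unfold gF
  have hZ := gZ_pos n h
  rw [gZ_two n h, mul_inv]
  have h2 : (0:ℝ) < 2 ^ ((n : ℝ) / 2) := by positivity
  have h1 : ∫ w, ψ w ^ 2 * Real.exp (-‖w - x‖ ^ 2 / (2 * τ))
      ≤ M * gZ n τ + Real.exp (-s ^ 2 / (4 * τ)) *
        ∫ w, ψ w ^ 2 * Real.exp (-‖w - x‖ ^ 2 / (2 * (2 * τ))) := by
    rw [← gauss_val n h x, ← MeasureTheory.integral_const_mul, ← MeasureTheory.integral_const_mul,
      ← integral_add ((gauss_int n h x).const_mul M)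
      ((gF_int n ψ hc B hB x (by positivity)).const_mul _)]
    refine integral_mono (gF_int n ψ hc B hB x h) (((gauss_int n h x).const_mul M).add
      ((gF_int n ψ hc B hB x (by positivity)).const_mul _)) fun w => ?_
    simp only
    by_cases hw : w ∈ Metric.ball x s
    · have := mul_le_mul_of_nonneg_right (hM w hw) (Real.exp_nonneg (-‖w - x‖ ^ 2 / (2 * τ)))
      have h3 : 0 ≤ Real.exp (-s ^ 2 / (4 * τ)) *
        (ψ w ^ 2 * Real.exp (-‖w - x‖ ^ 2 / (2 * (2 * τ)))) := by positivity
      linarith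
    · have hw' : s ≤ ‖w - x‖ := by
        simpa [Metric.mem_ball, dist_eq_norm] using hw
      have h3 : 0 ≤ M * Real.exp (-‖w - x‖ ^ 2 / (2 * τ)) := by positivity
      have h4 : ψ w ^ 2 * Real.exp (-‖w - x‖ ^ 2 / (2 * τ)) ≤ Real.exp (-s ^ 2 / (4 * τ)) *
        (ψ w ^ 2 * Real.exp (-‖w - x‖ ^ 2 / (2 * (2 * τ)))) := by
        rw [mul_left_comm, ← Real.exp_add]
        refine mul_le_mul_of_nonneg_left (Real.exp_le_exp.2 ?_) (sq_nonneg _)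
        rw [← sub_nonneg]
        have : -s ^ 2 / (4 * τ) + -‖w - x‖ ^ 2 / (2 * (2 * τ)) - -‖w - x‖ ^ 2 / (2 * τ)
          = (‖w - x‖ ^ 2 - s ^ 2) / (4 * τ) := by
          field_simp
          ring
        rw [this]
        exact div_nonneg (by nlinarith) (by positivity)
      linarith
  calc _ ≤ (gZ n τ)⁻¹ * (M * gZ n τ + Real.exp (-s ^ 2 / (4 * τ)) *
        ∫ w, ψ w ^ 2 * Real.exp (-‖w - x‖ ^ 2 / (2 * (2 * τ)))) :=
        mul_le_mul_of_nonneg_left h1 (by positivity)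
    _ = _ := by field_simp

lemma gF_formula {ι : Type*} (n : ℕ) (ψ : EuclideanSpace ℝ (Fin n) → ℝ) (lam : ℝ) (S : Finset ι)
    (v : ι → EuclideanSpace ℝ (Fin n)) (a : ι → ℂ) (hv : ∀ k ∈ S, ‖v k‖ ^ 2 = lam)
    (hψ : ∀ z, (ψ z : ℂ) = ∑ k ∈ S, a k * Complex.exp (Complex.I * ((inner ℝ (v k) z : ℝ) : ℂ)))
    (x : EuclideanSpace ℝ (Fin n)) :
    ∃ b : ι → ℂ, (ψ x ^ 2 = ∑ k ∈ S, ∑ l ∈ S, (b k * conj (b l)).re) ∧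
      ∀ τ : ℝ, 0 < τ → Real.exp (lam * τ) * gF n ψ x τ =
        ∑ k ∈ S, ∑ l ∈ S, (b k * conj (b l)).re * Real.exp (τ * (inner ℝ (v k) (v l) : ℝ)) := by
  set b : ι → ℂ := fun k => a k * Complex.exp (Complex.I * ((inner ℝ (v k) x : ℝ) : ℂ)) with hb
  have hsq : ∀ z, ((ψ (z + x) ^ 2 : ℝ) : ℂ) = ∑ k ∈ S, ∑ l ∈ S, (b k * conj (b l)) *
      Complex.exp (Complex.I * ((inner ℝ (v k - v l) z : ℝ) : ℂ)) := by
    intro z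
    have h1 : ((ψ (z + x) ^ 2 : ℝ) : ℂ) = (ψ (z + x) : ℂ) * conj (ψ (z + x) : ℂ) := by
      rw [Complex.conj_ofReal]; push_cast; ring
    rw [h1, hψ, map_sum, Finset.sum_mul_sum]
    refine Finset.sum_congr rfl fun k _ => Finset.sum_congr rfl fun l _ => ?_
    simp only [hb, map_mul, ← Complex.exp_conj, Complex.conj_I, Complex.conj_ofReal,
      inner_add_right, inner_sub_left]
    have : ∀ p q r s t u w : ℂ, t * u = q * s * w → (p * t) * (r * u) = p * q * (r * s) * w := by
      intro p q r s t u w h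
      linear_combination p * r * h
    apply this
    simp only [← Complex.exp_add]
    congr 1
    push_cast
    ring
  refine ⟨b, ?_, ?_⟩
  · have h := hsq 0
    simp only [zero_add, inner_zero_right, Complex.ofReal_zero, mul_zero, Complex.exp_zero,
      mul_one] at h
    have := congrArg Complex.re h
    simpa only [Complex.ofReal_re, Complex.re_sum] using this
  · intro τ hτ
    have hZ := gZ_pos n hτ
    have h1 : ((∫ w, ψ w ^ 2 * Real.exp (-‖w - x‖ ^ 2 / (2 * τ)) : ℝ) : ℂ)
        = ∑ k ∈ S, ∑ l ∈ S, (b k * conj (b l)) *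
          (gZ n τ * (Real.exp (-τ * ‖v k - v l‖ ^ 2 / 2) : ℝ)) := by
      rw [← integral_add_right_eq_self _ x, ← integral_complex_ofReal]
      have h2 : ∀ z, ((ψ (z + x) ^ 2 * Real.exp (-‖z + x - x‖ ^ 2 / (2 * τ)) : ℝ) : ℂ)
          = ∑ k ∈ S, ∑ l ∈ S, (b k * conj (b l)) *
            Complex.exp (-((1 / (2 * τ) : ℝ) : ℂ) * ‖z‖ ^ 2
              + Complex.I * (inner ℝ (v k - v l) z : ℝ)) := by
        intro z
        rw [Complex.ofReal_mul, hsq, add_sub_cancel_right, ← gauss_rc, Finset.sum_mul]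
        refine Finset.sum_congr rfl fun k _ => ?_
        rw [Finset.sum_mul]
        refine Finset.sum_congr rfl fun l _ => ?_
        rw [mul_assoc, ← Complex.exp_add]
        congr 2
        simp
        ring
      simp only [h2]
      rw [integral_finsetSum]
      · refine Finset.sum_congr rfl fun k _ => ?_
        rw [integral_finsetSum]
        · refine Finset.sum_congr rfl fun l _ => ?_
          rw [MeasureTheory.integral_const_mul, gauss_c n hτ]
        · exact fun l _ => (gauss_c_int n hτ _).const_mul _
      · exact fun k _ => integrable_finsetSum _ fun l _ => (gauss_c_int n hτ _).const_mul _
    have h3 := congrArg Complex.re h1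
    simp only [Complex.ofReal_re, Complex.re_sum, ← Complex.ofReal_mul, Complex.re_mul_ofReal] at h3
    unfold gF
    rw [h3]
    simp only [Finset.mul_sum]
    refine Finset.sum_congr rfl fun k hk => Finset.sum_congr rfl fun l hl => ?_
    have h4 : τ * (inner ℝ (v k) (v l) : ℝ) = lam * τ + -τ * ‖v k - v l‖ ^ 2 / 2 := by
      rw [norm_sub_sq_real, hv k hk, hv l hl]; ring
    rw [h4, Real.exp_add]
    field_simp

lemma near_rep (n : ℕ) (ψ : EuclideanSpace ℝ (Fin n) → ℝ) (hp : ZnPeriodic n ψ)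
    (x z : EuclideanSpace ℝ (Fin n)) : ∃ y, ψ y = ψ z ∧ ‖y - x‖ ^ 2 ≤ n := by
  refine ⟨WithLp.toLp 2 (fun i => z i + ((-⌊z i - x i⌋ : ℤ) : ℝ)), hp z _, ?_⟩
  rw [EuclideanSpace.norm_sq_eq]
  calc _ ≤ ∑ _i : Fin n, (1:ℝ) := by
        refine Finset.sum_le_sum fun i _ => ?_
        have h1 := Int.fract_nonneg (z i - x i)
        have h2 := (Int.fract_lt_one (z i - x i)).le
        have h3 : (WithLp.toLp 2 (fun i => z i + ((-⌊z i - x i⌋ : ℤ) : ℝ)) - x :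
            EuclideanSpace ℝ (Fin n)) i = Int.fract (z i - x i) := by
          have h4 := Int.self_sub_floor (z i - x i)
          rw [← h4]
          simp only [PiLp.sub_apply, Int.cast_neg]
          ring
        rw [h3, Real.norm_eq_abs, sq_abs]
        nlinarith
    _ = n := by simp

lemma main_bound (n : ℕ) (ψ : EuclideanSpace ℝ (Fin n) → ℝ) (lam : ℝ) (hl1 : 1 ≤ lam)
    (hs : ContDiff ℝ (⊤ : ℕ∞) ψ) (hp : ZnPeriodic n ψ)
    (hl : ∀ x, lap n ψ x = -lam * ψ x) (hne : ∃ x, ψ x ≠ 0)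
    (x : EuclideanSpace ℝ (Fin n)) (s : ℝ) (hs0 : 0 < s) (hs1 : s < 1) (M : ℝ) (hM0 : 0 ≤ M)
    (hM : ∀ w ∈ Metric.ball x s, ψ w ^ 2 ≤ M) (y : EuclideanSpace ℝ (Fin n))
    (hy : y ∈ Metric.ball x (2 * s)) :
    ψ y ^ 2 ≤ Real.exp ((49 * n + 98) * Real.sqrt lam) * M := by
  obtain ⟨S, a, v, hv, hψ⟩ := trig_poly n ψ lam hs hp hl
  have hc := hs.continuous
  obtain ⟨B, hB⟩ : ∃ B, ∀ w, ψ w ^ 2 ≤ B := by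
    refine ⟨(∑ k ∈ S, ‖a k‖) ^ 2, fun w => ?_⟩
    have h1 : |ψ w| ≤ ∑ k ∈ S, ‖a k‖ := by
      have h2 : ‖(ψ w : ℂ)‖ ≤ ∑ k ∈ S, ‖a k‖ := by
        rw [hψ]
        refine (norm_sum_le _ _).trans (Finset.sum_le_sum fun k _ => ?_)
        rw [norm_mul, mul_comm Complex.I, Complex.norm_exp_ofReal_mul_I, mul_one]
      simpa using h2
    rw [← sq_abs]
    exact pow_le_pow_left₀ (abs_nonneg _) h1 2
  set r := Real.sqrt lam with hr
  have hr1 : 1 ≤ r := Real.one_le_sqrt.2 hl1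
  have hr2 : lam = r * r := (Real.mul_self_sqrt (by linarith)).symm
  have hr0 : 0 < r := by linarith
  set P : ℝ := 2 ^ ((n : ℝ) / 2) with hP
  have hP0 : 0 < P := by positivity
  have hn0 : (0:ℝ) ≤ n := Nat.cast_nonneg n
  have hPe : P ≤ Real.exp (n * r) := by
    calc P ≤ (Real.exp 1) ^ ((n : ℝ) / 2) :=
          Real.rpow_le_rpow (by norm_num) (by linarith [Real.add_one_le_exp (1:ℝ)]) (by positivity)
      _ = Real.exp ((n : ℝ) / 2) := by rw [← Real.exp_mul, one_mul]
      _ ≤ _ := Real.exp_le_exp.2 (by nlinarith)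
  have hF0 : ∀ x τ, 0 < τ → 0 ≤ gF n ψ x τ := fun x τ h =>
    mul_nonneg (inv_nonneg.2 (gZ_pos n h).le) (integral_nonneg fun w => by positivity)
  -- pointwise bound
  have hpt : ∀ x y τ, 0 < τ → ψ y ^ 2 ≤ Real.exp (lam * τ) *
      (P * Real.exp (‖y - x‖ ^ 2 / (2 * τ)) * gF n ψ x (2 * τ)) := by
    intro x y τ hτ
    obtain ⟨b, hb0, hb⟩ := gF_formula n ψ lam S v a hv hψ y
    obtain ⟨c, hc0, hcs⟩ := power_series S v b
    have h0 := hcs 0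
    have h1 := hcs τ
    simp only [zero_mul, Real.exp_zero, mul_one] at h0
    rw [← hb0] at h0
    rw [← hb τ hτ] at h1
    have h2 : ψ y ^ 2 ≤ Real.exp (lam * τ) * gF n ψ y τ := by
      refine hasSum_le (fun m => ?_) h0 h1
      exact mul_le_mul_of_nonneg_left (pow_le_pow_left₀ le_rfl hτ.le m) (hc0 m)
    exact h2.trans (mul_le_mul_of_nonneg_left (gF_shift n ψ hc B hB x y hτ) (Real.exp_nonneg _))
  -- large scale
  set T := 1 / r with hT
  have hT0 : 0 < T := by positivity
  have hlT : lam * T = r := by rw [hT, hr2]; field_simp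
  have hsup : ∀ z, ψ z ^ 2 ≤ Real.exp ((1 + 2 * n) * r) * gF n ψ x (2 * T) := by
    intro z
    obtain ⟨y, hy1, hy2⟩ := near_rep n ψ hp x z
    rw [← hy1]
    refine (hpt x y T hT0).trans ?_
    rw [← mul_assoc]
    refine mul_le_mul_of_nonneg_right ?_ (hF0 _ _ (by positivity))
    have h1 : Real.exp (‖y - x‖ ^ 2 / (2 * T)) ≤ Real.exp (n * r) := by
      refine Real.exp_le_exp.2 ?_
      have : ‖y - x‖ ^ 2 / (2 * T) = ‖y - x‖ ^ 2 * r / 2 := by rw [hT]; field_simp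
      rw [this]
      have := mul_le_mul_of_nonneg_right hy2 hr0.le
      nlinarith
    calc _ ≤ Real.exp r * (Real.exp (n * r) * Real.exp (n * r)) := by
          rw [hlT]
          gcongr
      _ = _ := by rw [← Real.exp_add, ← Real.exp_add]; congr 1; ring
  have hFpos : 0 < gF n ψ x (2 * T) := by
    obtain ⟨z, hz⟩ := hne
    have h1 : 0 < ψ z ^ 2 := by positivity
    have h2 := h1.trans_le (hsup z)
    exact pos_of_mul_pos_right h2 (Real.exp_nonneg _)
  have hF4 : gF n ψ x (2 * (2 * T)) ≤ Real.exp ((1 + 2 * n) * r) * gF n ψ x (2 * T) :=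
    gF_le n ψ hc _ hsup x (by positivity)
  -- doubling
  have hdoub : ∀ τ, 0 < τ → τ ≤ 2 * T →
      gF n ψ x (2 * τ) ≤ Real.exp ((5 + 2 * n) * r) * gF n ψ x τ := by
    intro τ hτ hτT
    obtain ⟨b, hb0, hb⟩ := gF_formula n ψ lam S v a hv hψ x
    obtain ⟨c, hc0, hcs⟩ := power_series S v b
    have h1 := ratio_mono c hc0 _ hcs τ (2 * T) hτ.le hτT
    rw [← hb _ hτ, ← hb (2 * τ) (by positivity), ← hb (2 * T) (by positivity),
      ← hb (2 * (2 * T)) (by positivity)] at h1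
    have e1 : lam * (2 * T) = 2 * r := by rw [← hlT]; ring
    have e2 : lam * (2 * (2 * T)) = 4 * r := by rw [← hlT]; ring
    rw [e1, e2] at h1
    have hA : (1:ℝ) ≤ Real.exp (2 * r) := Real.one_le_exp (by positivity)
    have hE : (1:ℝ) ≤ Real.exp (lam * τ) := Real.one_le_exp (by positivity)
    have e3 : Real.exp (lam * (2 * τ)) = Real.exp (lam * τ) * Real.exp (lam * τ) := by
      rw [← Real.exp_add]; congr 1; ring
    have e4 : Real.exp ((5 + 2 * n) * r) = Real.exp (4 * r) * Real.exp ((1 + 2 * n) * r) := by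
      rw [← Real.exp_add]; congr 1; ring
    rw [e3] at h1
    rw [e4]
    set E := Real.exp (lam * τ)
    set f1 := gF n ψ x τ
    set f2 := gF n ψ x (2 * τ)
    set g1 := gF n ψ x (2 * T)
    set g2 := gF n ψ x (2 * (2 * T))
    have hf1 : 0 ≤ f1 := hF0 _ _ hτ
    have hf2 : 0 ≤ f2 := hF0 _ _ (by positivity)
    have hpos : 0 < E * g1 := by positivity
    refine le_of_mul_le_mul_left ?_ hpos
    calc E * g1 * f2 = 1 * 1 * (E * g1 * f2) := by ring
      _ ≤ E * Real.exp (2 * r) * (E * g1 * f2) := by gcongr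
      _ = E * E * f2 * (Real.exp (2 * r) * g1) := by ring
      _ ≤ Real.exp (4 * r) * g2 * (E * f1) := h1
      _ ≤ Real.exp (4 * r) * (Real.exp ((1 + 2 * n) * r) * g1) * (E * f1) := by gcongr
      _ = _ := by ring
  -- small scale
  set A := (3 * n + 6) * r with hA
  have hA0 : 0 < A := by positivity
  have hAr : r ≤ A := by nlinarith
  set τ := s ^ 2 / (4 * A) with hτd
  have hτ : 0 < τ := by positivity
  have hs2 : s ^ 2 ≤ 1 := by nlinarith
  have hτr : τ ≤ 1 / (4 * r) := by
    rw [hτd]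
    gcongr
  have hτT : τ ≤ 2 * T := by
    refine hτr.trans ?_
    rw [hT, mul_one_div]
    gcongr
    · norm_num
    · linarith
  have hsA : s ^ 2 / (4 * τ) = A := by rw [hτd]; field_simp
  have hFM : gF n ψ x τ ≤ 2 * M := by
    have h1 := gF_tail n ψ hc B hB x hτ s M hs0 hM0 hM
    rw [neg_div, hsA] at h1
    have h2 := hdoub τ hτ hτT
    have h3 : P * Real.exp (-A) * gF n ψ x (2 * τ) ≤ 1 / 2 * gF n ψ x τ := by
      calc P * Real.exp (-A) * gF n ψ x (2 * τ)
          ≤ Real.exp (n * r) * Real.exp (-A) * (Real.exp ((5 + 2 * n) * r) * gF n ψ x τ) := by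
            gcongr
            exact hF0 _ _ (by positivity)
        _ = Real.exp (-r) * gF n ψ x τ := by
            rw [← mul_assoc, ← Real.exp_add, ← Real.exp_add]
            congr 2
            rw [hA]; ring
        _ ≤ 1 / 2 * gF n ψ x τ := by
            refine mul_le_mul_of_nonneg_right ?_ (hF0 _ _ hτ)
            rw [Real.exp_neg, ← one_div]
            exact one_div_le_one_div_of_le (by norm_num) (by linarith [Real.add_one_le_exp r])
    linarith
  have h1 := hpt x y (τ / 2) (by positivity)
  have e1 : 2 * (τ / 2) = τ := by ring
  rw [e1] at h1
  have hyx : ‖y - x‖ ^ 2 / τ ≤ 16 * A := by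
    have h2 : ‖y - x‖ < 2 * s := by simpa [dist_eq_norm] using hy
    have h3 : ‖y - x‖ ^ 2 ≤ (2 * s) ^ 2 := pow_le_pow_left₀ (norm_nonneg _) h2.le 2
    calc _ ≤ (2 * s) ^ 2 / τ := by gcongr
      _ = 16 * (s ^ 2 / (4 * τ)) := by field_simp; ring
      _ = _ := by rw [hsA]
  have hlt : lam * (τ / 2) ≤ r / 2 := by
    have : lam * (τ / 2) ≤ lam * ((1 / (4 * r)) / 2) := by gcongr
    refine this.trans ?_
    rw [hr2]
    have : r * r * (1 / (4 * r) / 2) = r / 8 := by field_simp; norm_num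
    rw [this]; linarith
  have h2e : (2:ℝ) ≤ Real.exp r := by linarith [Real.add_one_le_exp r]
  calc ψ y ^ 2 ≤ _ := h1
    _ ≤ Real.exp (r / 2) * (Real.exp (n * r) * Real.exp (16 * A) * (Real.exp r * M)) := by
        have hf := hF0 x τ hτ
        have hfm : gF n ψ x τ ≤ Real.exp r * M :=
          hFM.trans (mul_le_mul_of_nonneg_right h2e hM0)
        gcongr
    _ = Real.exp (r / 2 + n * r + 16 * A + r) * M := by
        simp only [Real.exp_add]; ring
    _ ≤ _ := by
        gcongr
        rw [hA]; nlinarith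

theorem donnelly_fefferman_doubling
    (n : ℕ) (hn : 1 ≤ n) :
    ∃ c s₀ : ℝ, 0 < c ∧ 0 < s₀ ∧
      ∀ (ψ : EuclideanSpace ℝ (Fin n) → ℝ) (lam : ℝ),
        1 ≤ lam → ContDiff ℝ (⊤ : ℕ∞) ψ → ZnPeriodic n ψ →
        (∀ x, lap n ψ x = -lam * ψ x) → (∃ x, ψ x ≠ 0) →
        ∀ (x : EuclideanSpace ℝ (Fin n)) (s : ℝ), 0 < s → s < s₀ →
          Real.log (sSup ((fun y => (ψ y)^2) '' Metric.ball x (2*s)) /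
              sSup ((fun y => (ψ y)^2) '' Metric.ball x s)) ≤ c * Real.sqrt lam := by
  refine ⟨49 * n + 98, 1, by positivity, one_pos, ?_⟩
  intro ψ lam hl1 hs hp hl hne x s hs0 hs1
  have hbdd : BddAbove ((fun y => (ψ y)^2) '' Metric.ball x s) := by
    have h1 : IsCompact ((fun y => (ψ y)^2) '' Metric.closedBall x s) :=
      (isCompact_closedBall x s).image (hs.continuous.pow 2)
    exact h1.bddAbove.mono (Set.image_mono Metric.ball_subset_closedBall)
  set M := sSup ((fun y => (ψ y)^2) '' Metric.ball x s) with hMd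
  have hM : ∀ w ∈ Metric.ball x s, ψ w ^ 2 ≤ M := fun w hw =>
    le_csSup hbdd (Set.mem_image_of_mem _ hw)
  have hM0 : 0 ≤ M := (sq_nonneg _).trans (hM x (Metric.mem_ball_self hs0))
  have hle : sSup ((fun y => (ψ y)^2) '' Metric.ball x (2*s)) ≤
      Real.exp ((49 * n + 98) * Real.sqrt lam) * M := by
    refine csSup_le ((Metric.nonempty_ball.2 (by positivity)).image _) ?_
    rintro _ ⟨y, hy, rfl⟩
    exact main_bound n ψ lam hl1 hs hp hl hne x s hs0 hs1 M hM0 hM y hy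
  have hN0 : 0 ≤ sSup ((fun y => (ψ y)^2) '' Metric.ball x (2*s)) := by
    refine Real.sSup_nonneg ?_
    rintro _ ⟨y, _, rfl⟩
    exact sq_nonneg _
  set N := sSup ((fun y => (ψ y)^2) '' Metric.ball x (2*s))
  have hpos : 0 ≤ (49 * (n:ℝ) + 98) * Real.sqrt lam := by positivity
  rcases (div_nonneg hN0 hM0).eq_or_lt with h | h
  · rw [← h, Real.log_zero]; exact hpos
  · rw [Real.log_le_iff_le_exp h]
    exact div_le_of_le_mul₀ hM0 (Real.exp_nonneg _) hle
end
end
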